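/- arXiv:1003.0602 — 3 statements merged into one kernel-verified Lean document; each statement's English description precedes it below -/
import Mathlib

section
/- Let F be an algebraically closed field of characteristic 0, g a finite-dimensional semisimple Lie algebra over F, and (e, h, f) an sl2-triple in g. Then g(1)_e = [g(0)_e, g(1)_e], where the right-hand side is the linear span of all brackets [a, b] with a ∈ g(0)_e and b ∈ g(1)_e. -/
/-!
The proof uses the Killing form `κ` and elementary arguments on ad-nilpotent subalgebras. Write
`c = g(0)_e`, the centraliser of the triple, and `V = g(1)_e`.

* `sl2_decomp`: if the operators `E`, `H`, `G` satisfy the relations of the triple and `E`, `G` are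
  nilpotent, a stable subspace `p` is spanned by its highest weight vectors of weight `n` together
  with `(H - n) p` and `G p`. No complete reducibility is needed. For `n = 0, 1` this shows that `κ`
  is nondegenerate on `c`, and that `u ↦ κ([f, u], ·)` is an isomorphism from `V` to its dual. Hence
  a functional on `V` that vanishes on `[c, V]` is `κ([f, v], ·)` for some `v ∈ V` that commutes
  with `c` (`Triple.hw_one_le`), and it remains to show that such a `v` is zero
  (`Triple.eq_zero_of_hw_one`).

* Suppose `v ≠ 0`. The span of `v` and `[f, v]` is an abelian subalgebra consisting of ad-nilpotent
  elements and normalised by the triple and by `c` (`Triple.good_span`); let `n` be a maximal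
  ad-nilpotent subalgebra containing `v` and so normalised, and let `q` be its normaliser. Then
  `q ∩ q^⊥` is a subalgebra of the same kind (`Good.enlarge`): ad-nilpotency follows from Cartan's
  criterion and `q ∩ q^⊥ = [q, q ∩ q^⊥]`. By maximality `q ∩ q^⊥ = n`, which forces `n^⊥ ⊆ q`
  (`Good.perp_le`).

* Let `G_j = [n, [n, … [n, g]]]` (`j` factors `n`), let `n^k` be the lower central series of `n`,
  and choose `k ≥ 1` with `v ∈ n^k`, `v ∉ n^(k+1)`. Choose `y ∈ (n^(k+1))^⊥` with `κ(v, y) ≠ 0`. Then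
  `ad v` maps `G_j` to `G_(j+k)` and `ad y` maps `G_(j+k)` to `G_j`, so the trace of `ad [v, y]` on
  `G_j`, summed over `j`, telescopes to `k κ(v, y)` (`sum_trace_restrict`). On the other hand
  `[v, y] ∈ n^⊥ ⊆ q` is orthogonal to `c`, hence lies in `[h, q] + [f, q]`, and `q` preserves each
  `G_j`, so all these traces vanish (`Good.false_of_max`). This is a contradiction.
-/

open Module

namespace Sl2Aux

open Polynomial

/-! ### Nilpotent operators and `sl2`-relations -/

section Linear

variable {F M : Type*} [Field F] [AddCommGroup M] [Module F M]

/-- Let `X ^ a` be the exact power of `X` dividing the minimal polynomial. The projection `T` onto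
the Fitting component where `X` is invertible is a multiple of `X ^ (a + 1)` in `F[X]`, so its trace,
which is its rank, vanishes. -/
theorem isNilpotent_of_trace_pow [CharZero F] [FiniteDimensional F M] (X : Module.End F M)
    (hX : ∀ m : ℕ, LinearMap.trace F M (X ^ (m + 1)) = 0) : IsNilpotent X := by
  have hne : minpoly F X ≠ 0 := minpoly.ne_zero (Algebra.IsIntegral.isIntegral X)
  obtain ⟨Q, hQ, hQ0⟩ := Polynomial.exists_eq_pow_rootMultiplicity_mul_and_not_dvd _ hne 0
  set a := (minpoly F X).rootMultiplicity 0
  rw [C_0, sub_zero] at hQ hQ0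
  obtain ⟨u, w, huw⟩ : IsCoprime ((Polynomial.X : F[X]) ^ (a + 1)) Q :=
    ((Polynomial.irreducible_X.coprime_iff_not_dvd).2 hQ0).pow_left
  have hmin : aeval X (Polynomial.X ^ a * Q) = 0 := by rw [← hQ]; exact minpoly.aeval F X
  set T := aeval X (u * Polynomial.X ^ (a + 1))
  have hT : T = 1 - aeval X (w * Q) := by
    rw [eq_sub_iff_add_eq, ← map_add, huw, map_one]
  have hmul : T * aeval X (w * Q) = 0 := by
    rw [← map_mul, show u * Polynomial.X ^ (a + 1) * (w * Q)
      = u * w * Polynomial.X * (Polynomial.X ^ a * Q) by ring, map_mul, hmin, mul_zero]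
  have hid : IsIdempotentElem T := by
    have : T * T = T * (1 - aeval X (w * Q)) := by rw [← hT]
    rw [IsIdempotentElem, this, mul_sub, hmul, mul_one, sub_zero]
  have htr : LinearMap.trace F M T = 0 := by
    have : ∀ p : F[X], LinearMap.trace F M (aeval X (p * Polynomial.X ^ (a + 1))) = 0 := by
      intro p
      induction p using Polynomial.induction_on' with
      | add p q hp hq => rw [add_mul, map_add, map_add, hp, hq, add_zero]
      | monomial n c =>
        rw [← C_mul_X_pow_eq_monomial, mul_assoc, ← pow_add, map_mul, aeval_C, map_pow, aeval_X,
          ← Algebra.smul_def, map_smul, ← add_assoc, hX, smul_zero]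
    exact this u
  have hT0 : T = 0 := by
    have h1 := (LinearMap.IsIdempotentElem.isProj_range T hid).trace
    rw [htr] at h1
    have h2 : Module.finrank F (LinearMap.range T) = 0 := by exact_mod_cast h1.symm
    exact LinearMap.range_eq_bot.1 (Submodule.finrank_eq_zero.1 h2)
  refine ⟨a, ?_⟩
  have h1 : aeval X (w * Q) = 1 := by rw [hT0] at hT; exact (sub_eq_zero.1 hT.symm).symm
  calc X ^ a = X ^ a * aeval X (w * Q) := by rw [h1, mul_one]
    _ = aeval X (w * (Polynomial.X ^ a * Q)) := by
      rw [show w * (Polynomial.X ^ a * Q) = Polynomial.X ^ a * (w * Q) by ring,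
        map_mul (aeval X) (Polynomial.X ^ a), map_pow, aeval_X]
    _ = 0 := by rw [map_mul, hmin, mul_zero]

theorem isNilpotent_of_commutator_eq_smul [CharZero F] [FiniteDimensional F M]
    (H X : Module.End F M) (μ : F) (hμ : μ ≠ 0) (h : H * X - X * H = μ • X) : IsNilpotent X := by
  refine isNilpotent_of_trace_pow X fun m => ?_
  have key : ∀ m : ℕ, H * X ^ m - X ^ m * H = (m * μ) • X ^ m := by
    intro m
    induction m with
    | zero => simp
    | succ m ih =>
      calc H * X ^ (m + 1) - X ^ (m + 1) * H
          = (H * X ^ m - X ^ m * H) * X + X ^ m * (H * X - X * H) := by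
            rw [pow_succ]; noncomm_ring
        _ = _ := by
          rw [ih, h, pow_succ, smul_mul_assoc, mul_smul_comm, ← add_smul]
          push_cast; ring_nf
  have h1 := congrArg (LinearMap.trace F M) (key (m + 1))
  rw [map_sub, LinearMap.trace_mul_comm, sub_self, map_smul, smul_eq_mul] at h1
  have h2 : ((m + 1 : ℕ) : F) * μ ≠ 0 := mul_ne_zero (by exact_mod_cast m.succ_ne_zero) hμ
  exact (mul_eq_zero.1 h1.symm).resolve_left h2

theorem aeval_mem (H : Module.End F M) (p : Submodule F M) (hp : ∀ x ∈ p, H x ∈ p) (P : F[X])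
    {x : M} (hx : x ∈ p) : aeval H P x ∈ p := by
  induction P using Polynomial.induction_on' with
  | add P Q hP hQ => rw [map_add]; exact p.add_mem hP hQ
  | monomial n c =>
    rw [aeval_monomial, Module.End.mul_apply, Module.algebraMap_end_apply]
    refine p.smul_mem _ ?_
    induction n with
    | zero => simpa using hx
    | succ n ih => rw [pow_succ', Module.End.mul_apply]; exact hp _ ih

/-- `P(H) x ≡ P(t) x` modulo `(H - t) p`. -/
theorem aeval_sub_mem (H : Module.End F M) (p : Submodule F M) (hp : ∀ x ∈ p, H x ∈ p) (P : F[X])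
    (t : F) {x : M} (hx : x ∈ p) :
    aeval H P x - P.eval t • x ∈ p.map (H - algebraMap F _ t) := by
  obtain ⟨Q, hQ⟩ := Polynomial.X_sub_C_dvd_sub_C_eval (a := t) (p := P)
  refine ⟨aeval H Q x, aeval_mem H p hp Q hx, ?_⟩
  have := congrArg (fun R => aeval H R x) hQ
  simpa [Module.algebraMap_end_apply] using this.symm

theorem aeval_semiconj {A B T : Module.End F M} (h : T * A = B * T) (P : F[X]) :
    T * aeval A P = aeval B P * T := by
  induction P using Polynomial.induction_on' with
  | add P Q hP hQ => rw [map_add, map_add, mul_add, add_mul, hP, hQ]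
  | monomial n c =>
    rw [aeval_monomial, aeval_monomial, ← mul_assoc, ← Algebra.commutes, mul_assoc, mul_assoc]
    congr 1
    exact (SemiconjBy.pow_right (show SemiconjBy T A B from h) n)

/-- `sl2Poly k = k! · X (X - 1) ⋯ (X - k + 1)`. -/
noncomputable def sl2Poly (F : Type*) [Field F] (k : ℕ) : F[X] :=
  ∏ i ∈ Finset.range k, (C ((i : F) + 1) * (X - C (i : F)))

/-- On vectors killed by `E`, the operator `E ^ k G ^ k` is the polynomial `sl2Poly F k` in `H`. -/
theorem pow_pow_apply {E H G : Module.End F M} (hE : H * E - E * H = (2 : F) • E)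
    (hG : H * G - G * H = (-2 : F) • G) (hEG : E * G - G * E = H) (k : ℕ) :
    ∀ z : M, E z = 0 → (E ^ k) ((G ^ k) z) = aeval H (sl2Poly F k) z := by
  have hHG : H * G = G * H - (2 : F) • G := by
    rw [sub_eq_iff_eq_add] at hG; rw [hG, neg_smul]; abel
  have hHE : E * H = H * E - (2 : F) • E := by
    rw [← hE]; abel
  have hEG' : E * G = G * E + H := by rw [← hEG]; abel
  have hcomm : ∀ k : ℕ, E * G ^ (k + 1)
      = G ^ (k + 1) * E + ((k : F) + 1) • (G ^ k * (H - algebraMap F _ (k : F))) := by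
    intro k
    induction k with
    | zero => simp [hEG']
    | succ k ih =>
      rw [pow_succ G (k + 1), ← mul_assoc, ih, add_mul, mul_assoc, hEG', smul_mul_assoc,
        mul_assoc, sub_mul, hHG, Algebra.algebraMap_eq_smul_one, Algebra.algebraMap_eq_smul_one,
        smul_mul_assoc, one_mul, pow_succ G k]
      simp only [mul_add, mul_sub, smul_sub, mul_smul_comm, mul_one, mul_assoc]
      push_cast
      module
  induction k with
  | zero => intro z _; simp [sl2Poly]
  | succ k ih =>
    intro z hz
    have hz' : E (((k : F) + 1) • (H z - (k : F) • z)) = 0 := by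
      have := LinearMap.congr_fun hHE z
      simp only [Module.End.mul_apply, LinearMap.sub_apply, LinearMap.smul_apply, hz] at this
      simp [hz, this]
    have h1 := LinearMap.congr_fun (hcomm k) z
    simp only [Module.End.mul_apply, LinearMap.add_apply, LinearMap.smul_apply, hz, map_zero,
      zero_add, LinearMap.sub_apply, Module.algebraMap_end_apply] at h1
    rw [pow_succ E, Module.End.mul_apply, h1, ← map_smul, ih _ hz', sl2Poly, sl2Poly,
      Finset.prod_range_succ, map_mul (aeval H), Module.End.mul_apply]
    congr 1
    rw [map_mul, Module.End.mul_apply, map_sub, aeval_C, aeval_C, aeval_X,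
      Module.algebraMap_end_apply, LinearMap.sub_apply, Module.algebraMap_end_apply]

/-- A stable subspace `p` is the sum of its highest weight vectors of weight `n`, of `(H - n) p` and
of `G p`. For `x` with `E ^ k x = 0` this goes by induction on `k`. -/
theorem sl2_decomp [CharZero F] {E H G : Module.End F M}
    (hE : H * E - E * H = (2 : F) • E)
    (hG : H * G - G * H = (-2 : F) • G) (hEG : E * G - G * E = H)
    (hEn : IsNilpotent E) (hGn : IsNilpotent G) (p : Submodule F M)
    (pE : ∀ x ∈ p, E x ∈ p) (pH : ∀ x ∈ p, H x ∈ p) (pG : ∀ x ∈ p, G x ∈ p) (n : ℕ)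
    (x : M) (hx : x ∈ p) :
    ∃ x₀ ∈ p, ∃ a ∈ p, ∃ b ∈ p, x = x₀ + (H a - (n : F) • a) + G b ∧
      H x₀ = (n : F) • x₀ ∧ E x₀ = 0 := by
  have hHE : E * H = H * E - (2 : F) • E := by
    rw [← hE]; abel
  set D := H - algebraMap F (Module.End F M) (n : F) with hD
  set S : Submodule F M := ((p ⊓ LinearMap.ker E) ⊓ LinearMap.ker D) ⊔ p.map D ⊔ p.map G with hS
  suffices hmain : ∀ k : ℕ, ∀ x ∈ p, (E ^ k) x = 0 → x ∈ S by
    obtain ⟨k, hk⟩ := hEn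
    have := hmain k x hx (by rw [hk]; rfl)
    rw [hS, Submodule.mem_sup] at this
    obtain ⟨y, hy, _, ⟨b, hb, rfl⟩, rfl⟩ := this
    rw [Submodule.mem_sup] at hy
    obtain ⟨x₀, hx₀, _, ⟨a, ha, rfl⟩, rfl⟩ := hy
    refine ⟨x₀, hx₀.1.1, a, ha, b, hb, by
      rw [hD, LinearMap.sub_apply, Module.algebraMap_end_apply], ?_, hx₀.1.2⟩
    have this : D x₀ = 0 := hx₀.2
    rw [hD, LinearMap.sub_apply, Module.algebraMap_end_apply, sub_eq_zero] at this
    exact this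
  intro k
  induction k with
  | zero => intro x _ h; rw [pow_zero, Module.End.one_apply] at h; rw [h]; exact S.zero_mem
  | succ k ih =>
    intro x hx h
    rw [pow_succ', Module.End.mul_apply] at h
    rcases Nat.eq_zero_or_pos k with rfl | hk
    -- If `E x = 0`, then `x` is killed by a polynomial in `H` with the simple root `n`. Dividing
    -- that root out gives `Q` with `Q(H) x` a highest weight vector of weight `n` and `Q(n) ≠ 0`.
    · rw [pow_zero, Module.End.one_apply] at h
      obtain ⟨m, hm⟩ := hGn
      have h0 : aeval H (sl2Poly F (m + (n + 1))) x = 0 := by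
        rw [← pow_pow_apply hE hG hEG _ x h, pow_add G, hm, zero_mul]; simp
      obtain ⟨Q, hQ, hQn⟩ : ∃ Q : F[X], sl2Poly F (m + (n + 1)) = (X - C (n : F)) * Q ∧
          Q.eval (n : F) ≠ 0 := by
        have hmem : n ∈ Finset.range (m + (n + 1)) := by simp; omega
        refine ⟨C ((n : F) + 1) * ∏ i ∈ (Finset.range (m + (n + 1))).erase n,
          (C ((i : F) + 1) * (X - C (i : F))), ?_, ?_⟩
        · rw [sl2Poly, ← Finset.mul_prod_erase _ _ hmem]; ring
        · rw [eval_mul, eval_C, eval_prod]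
          refine mul_ne_zero (by exact_mod_cast n.succ_ne_zero) (Finset.prod_ne_zero_iff.2 ?_)
          intro i hi
          rw [eval_mul, eval_C, eval_sub, eval_X, eval_C]
          refine mul_ne_zero (by exact_mod_cast i.succ_ne_zero) (sub_ne_zero.2 ?_)
          exact_mod_cast (Finset.ne_of_mem_erase hi).symm
      have hker : ∀ y ∈ p ⊓ LinearMap.ker E, H y ∈ p ⊓ LinearMap.ker E := by
        rintro y ⟨hy1, hy2⟩
        refine ⟨pH _ hy1, ?_⟩
        have hy2 : E y = 0 := hy2
        have := LinearMap.congr_fun hHE y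
        change E (H y) = 0
        rw [Module.End.mul_apply, LinearMap.sub_apply, Module.End.mul_apply, LinearMap.smul_apply,
          hy2, map_zero, smul_zero, sub_zero] at this
        exact this
      have hQx : aeval H Q x ∈ S := by
        refine Submodule.mem_sup_left (Submodule.mem_sup_left
          ⟨aeval_mem H _ hker Q ⟨hx, h⟩, ?_⟩)
        rw [hQ, map_mul, Module.End.mul_apply] at h0
        simpa [hD, LinearMap.mem_ker] using h0
      have h3 : Q.eval (n : F) • x ∈ S := by
        have := aeval_sub_mem H p pH Q (n : F) hx
        have h4 := S.sub_mem hQx (Submodule.mem_sup_left (Submodule.mem_sup_right this))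
        simpa using h4
      exact (S.smul_mem_iff hQn).1 h3
    -- With `k` the length from the induction, `E ^ k x` is killed by `E`, so
    -- `E ^ k G ^ k (E ^ k x) = R(H) E ^ k x = E ^ k P(H) x` with `P(t) = R(t + 2k)`. Hence
    -- `P(H) x - G ^ k E ^ k x` is killed by `E ^ k`, and `P(n) ≠ 0` since `n + 2k` is not a root
    -- of `R`, the roots of `R` being `0, …, k - 1`.
    · set R := sl2Poly F k with hR
      set P := R.comp (X + C ((2 * k : ℕ) : F)) with hP
      have hEk : ∀ j : ℕ, E ^ j * (H + algebraMap F _ ((2 * j : ℕ) : F)) = H * E ^ j := by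
        intro j
        induction j with
        | zero => simp
        | succ j ihj =>
          calc E ^ (j + 1) * (H + algebraMap F _ ((2 * (j + 1) : ℕ) : F))
              = E ^ j * (H + algebraMap F _ ((2 * j : ℕ) : F)) * E := by
                rw [pow_succ, mul_assoc, mul_assoc]
                congr 1
                rw [mul_add, hHE, add_mul, Algebra.algebraMap_eq_smul_one,
                  Algebra.algebraMap_eq_smul_one, mul_smul_comm, smul_mul_assoc, mul_one, one_mul]
                push_cast
                module
            _ = H * E ^ (j + 1) := by rw [ihj, pow_succ, mul_assoc]
      have hEP : (E ^ k) (aeval H P x) = aeval H R ((E ^ k) x) := by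
        have h1 := aeval_semiconj (hEk k) R
        have h2 : aeval H P = aeval (H + algebraMap F _ ((2 * k : ℕ) : F)) R := by
          rw [hP, aeval_comp]; simp
        rw [h2]
        exact LinearMap.congr_fun h1 x
      have hpow : ∀ (T : Module.End F M), (∀ x ∈ p, T x ∈ p) → ∀ j : ℕ, ∀ x ∈ p,
          (T ^ j) x ∈ p := by
        intro T hT j x hx
        have := aeval_mem T p hT (X ^ j) hx
        simpa using this
      have hz : (E ^ k) x ∈ p := hpow E pE k x hx
      obtain ⟨j, rfl⟩ := Nat.exists_eq_succ_of_ne_zero hk.ne'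
      have hGz : (G ^ (j + 1)) ((E ^ (j + 1)) x) ∈ p.map G := by
        rw [pow_succ' G, Module.End.mul_apply]
        exact ⟨_, hpow G pG _ _ hz, rfl⟩
      have hd : aeval H P x - (G ^ (j + 1)) ((E ^ (j + 1)) x) ∈ S := by
        refine ih _ (p.sub_mem (aeval_mem H p pH P hx) (hpow G pG _ _ hz)) ?_
        rw [map_sub, hEP, pow_pow_apply hE hG hEG _ _ h, sub_self]
      have hPx : aeval H P x ∈ S := by
        have := S.add_mem hd (Submodule.mem_sup_right hGz)
        simpa using this
      have hPn : P.eval (n : F) ≠ 0 := by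
        rw [hP, eval_comp, hR, sl2Poly, eval_prod]
        refine Finset.prod_ne_zero_iff.2 fun i hi => ?_
        rw [Finset.mem_range] at hi
        simp only [eval_mul, eval_C, eval_sub, eval_X, eval_add]
        refine mul_ne_zero (by exact_mod_cast i.succ_ne_zero) (sub_ne_zero.2 ?_)
        have : n + 2 * (j + 1) ≠ i := by omega
        exact_mod_cast this
      have h3 : P.eval (n : F) • x ∈ S := by
        have := aeval_sub_mem H p pH P (n : F) hx
        have h4 := S.sub_mem hPx (Submodule.mem_sup_left (Submodule.mem_sup_right this))
        simpa using h4
      exact (S.smul_mem_iff hPn).1 h3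

end Linear

/-! ### Traces on filtrations -/

section Flags

variable {F M : Type*} [Field F] [AddCommGroup M] [Module F M]

theorem trace_eq_zero_of_shift (G : ℕ → Submodule F M) (h0 : G 0 = ⊤) {N : ℕ} (hN : G N = ⊥)
    (T : Module.End F M) (hT : ∀ j, ∀ x ∈ G j, T x ∈ G (j + 1)) : LinearMap.trace F M T = 0 := by
  refine (LinearMap.isNilpotent_trace_of_isNilpotent (R := F) (f := T) ⟨N, ?_⟩).eq_zero
  have : ∀ j x, (T ^ j) x ∈ G j := by
    intro j
    induction j with
    | zero => intro x; rw [h0]; trivial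
    | succ j ih => intro x; rw [pow_succ', Module.End.mul_apply]; exact hT _ _ (ih x)
  ext x
  simpa [hN] using this N x

theorem trace_restrict_commutator (S : Submodule F M) (X Y Z Y' Z' : Module.End F M)
    (hX : ∀ x ∈ S, X x ∈ S) (hY : ∀ x ∈ S, Y x ∈ S) (hZ : ∀ x ∈ S, Z x ∈ S)
    (hY' : ∀ x ∈ S, Y' x ∈ S) (hZ' : ∀ x ∈ S, Z' x ∈ S)
    (h : X = (Y * Z - Z * Y) + (Y' * Z' - Z' * Y')) :
    LinearMap.trace F S (X.restrict hX) = 0 := by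
  have : X.restrict hX = (Y.restrict hY * Z.restrict hZ - Z.restrict hZ * Y.restrict hY) +
      (Y'.restrict hY' * Z'.restrict hZ' - Z'.restrict hZ' * Y'.restrict hY') := by
    ext x
    simp [h]
  rw [this, map_add, map_sub, map_sub, LinearMap.trace_mul_comm F (Y.restrict hY),
    LinearMap.trace_mul_comm F (Y'.restrict hY')]
  simp

/-- If `A` raises a decreasing filtration by `k` and `B` lowers it by `k`, the traces of `[A, B]` on
the steps telescope. With `τ i` the trace of `A B` on `G i`, the trace of `B A` on `G i` is `τ (i + k)`,
so the sum is `τ 0 + … + τ (k - 1)`, and each of these equals the trace of `A B` on the whole space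
because the range of `A B` lies in `G k`. -/
theorem sum_trace_restrict [FiniteDimensional F M] (G : ℕ → Submodule F M) (h0 : G 0 = ⊤)
    (hG : Antitone G) {N : ℕ}
    (hN : G N = ⊥) (k : ℕ) (A B X : Module.End F M) (hA : ∀ j, ∀ x ∈ G j, A x ∈ G (j + k))
    (hB : ∀ j, ∀ x ∈ G (j + k), B x ∈ G j) (hX : ∀ j, ∀ x ∈ G j, X x ∈ G j)
    (hXAB : X = A * B - B * A) :
    ∑ i ∈ Finset.range N, LinearMap.trace F (G i) (X.restrict (hX i)) =
      k * LinearMap.trace F M (A * B) := by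
  -- For `i < k` truncated subtraction gives `G (i - k) = G 0 = ⊤`, where nothing is claimed.
  have hB' : ∀ i, ∀ x ∈ G i, B x ∈ G (i - k) := by
    intro i x hx
    rcases le_total k i with h | h
    · exact hB _ _ (by rwa [Nat.sub_add_cancel h])
    · rw [Nat.sub_eq_zero_of_le h, h0]; trivial
  have hAB : ∀ i, ∀ x ∈ G i, (A * B) x ∈ G i := fun i x hx =>
    hG (by omega) (hA _ _ (hB' i x hx))
  have hBA : ∀ i, ∀ x ∈ G i, (B * A) x ∈ G i := fun i x hx => hB _ _ (hA _ _ hx)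
  set τ : ℕ → F := fun i => LinearMap.trace F (G i) ((A * B).restrict (hAB i)) with hτ
  have h1 : ∀ i, LinearMap.trace F (G i) ((B * A).restrict (hBA i)) = τ (i + k) := fun i =>
    LinearMap.trace_comp_comm' (A.restrict (hA i)) (B.restrict (hB i))
  have h2 : ∀ i, LinearMap.trace F (G i) (X.restrict (hX i)) = τ i - τ (i + k) := by
    intro i
    rw [← h1, hτ, ← map_sub]
    congr 1
    ext x
    simp [hXAB]
  have h3 : ∀ i < k, τ i = LinearMap.trace F M (A * B) := fun i hi =>
    LinearMap.trace_restrict_eq_of_forall_mem (G i) (A * B)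
      (fun x => hG hi.le (by simpa using hA 0 (B x) (by rw [h0]; trivial)))
  have h4 : ∀ i, τ (N + i) = 0 := by
    intro i
    have hb : G (N + i) = ⊥ := by rw [eq_bot_iff, ← hN]; exact hG (by omega)
    have : Subsingleton (G (N + i)) := by rw [hb]; infer_instance
    have h5 : (A * B).restrict (hAB (N + i)) = 0 := by
      ext x; exact congrArg _ (Subsingleton.elim _ _)
    simp only [hτ]
    rw [h5, map_zero]
  rw [Finset.sum_congr rfl fun i _ => h2 i, Finset.sum_sub_distrib]
  have h5 := Finset.sum_range_add τ N k
  rw [add_comm N k, Finset.sum_range_add, Finset.sum_congr rfl fun i _ => h4 i,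
    Finset.sum_const_zero, add_zero,
    Finset.sum_congr rfl fun i hi => h3 i (Finset.mem_range.1 hi)] at h5
  simp only [Finset.sum_const, Finset.card_range, nsmul_eq_mul] at h5
  rw [← h5]
  simp [add_comm k]

end Flags

/-! ### Iterated brackets -/

section Lie

variable {F L : Type*} [Field F] [LieRing L] [LieAlgebra F L]

/-- The span of the brackets `⁅a, b⁆` with `a ∈ A`, `b ∈ B`. -/
def br (A B : Submodule F L) : Submodule F L :=
  Submodule.map₂ (LieAlgebra.ad F L : L →ₗ[F] Module.End F L) A B

theorem lie_mem_br {A B : Submodule F L} {a b : L} (ha : a ∈ A) (hb : b ∈ B) : ⁅a, b⁆ ∈ br A B :=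
  Submodule.apply_mem_map₂ (LieAlgebra.ad F L : L →ₗ[F] Module.End F L) ha hb

theorem br_le {A B C : Submodule F L} : br A B ≤ C ↔ ∀ a ∈ A, ∀ b ∈ B, ⁅a, b⁆ ∈ C :=
  Submodule.map₂_le

/-- `it n S j = [n, [n, … [n, S]]]`, with `j` brackets. -/
def it (n S : Submodule F L) : ℕ → Submodule F L
  | 0 => S
  | j + 1 => br n (it n S j)

theorem lie_mem_it {n S : Submodule F L} {j : ℕ} {x y : L} (hx : x ∈ n) (hy : y ∈ it n S j) :
    ⁅x, y⁆ ∈ it n S (j + 1) := lie_mem_br hx hy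

theorem it_stable {x : L} {p S : Submodule F L} (hp : ∀ y ∈ p, ⁅x, y⁆ ∈ p)
    (hS : ∀ y ∈ S, ⁅x, y⁆ ∈ S) (j : ℕ) : ∀ y ∈ it p S j, ⁅x, y⁆ ∈ it p S j := by
  induction j with
  | zero => exact hS
  | succ j ih =>
    have : it p S (j + 1) ≤ (it p S (j + 1)).comap (LieAlgebra.ad F L x) := by
      refine br_le.2 fun a ha b hb => ?_
      change ⁅x, ⁅a, b⁆⁆ ∈ it p S (j + 1)
      rw [leibniz_lie]
      exact (it p S (j + 1)).add_mem (lie_mem_it (hp a ha) hb) (lie_mem_it ha (ih b hb))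
    exact this

theorem it_antitone {p S : Submodule F L} (h : br p S ≤ S) : Antitone (it p S) := by
  refine antitone_nat_of_succ_le fun j => ?_
  induction j with
  | zero => exact h
  | succ j ih => exact Submodule.map₂_le_map₂_right ih

/-- If `p` acts through a Lie algebra `A` for which `L` is nilpotent, its iterated brackets
vanish. -/
theorem exists_it_eq_bot (A : Type*) [LieRing A] [LieAlgebra F A] [LieRingModule A L]
    [LieModule F A L] [LieModule.IsNilpotent A L] (p : Submodule F L)
    (hp : ∀ x ∈ p, ∃ a : A, ∀ y : L, ⁅a, y⁆ = ⁅x, y⁆) : ∃ N, it p ⊤ N = ⊥ := by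
  obtain ⟨N, hN⟩ := (LieModule.isNilpotent_iff F A L).1 inferInstance
  refine ⟨N, ?_⟩
  have : ∀ j, it p ⊤ j ≤ (LieModule.lowerCentralSeries F A L j).toSubmodule := by
    intro j
    induction j with
    | zero => simp [it]
    | succ j ih =>
      refine br_le.2 fun x hx y hy => ?_
      obtain ⟨a, ha⟩ := hp x hx
      rw [← ha, LieModule.lowerCentralSeries_succ]
      exact LieSubmodule.lie_mem_lie (LieSubmodule.mem_top a) (ih hy)
  have h := this N
  rw [hN] at h
  simpa using h

/-- Engel's theorem. -/
theorem exists_it_eq_bot_of_isNilpotent [FiniteDimensional F L] (p : Submodule F L)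
    (hp : br p p ≤ p) (hn : ∀ x ∈ p, IsNilpotent (LieAlgebra.ad F L x)) : ∃ N, it p ⊤ N = ⊥ := by
  let K : LieSubalgebra F L := { p with lie_mem' := fun {x y} hx hy => hp (lie_mem_br hx hy) }
  have : LieModule.IsNilpotent K L := by
    rw [LieModule.isNilpotent_iff_forall' (R := F)]
    rintro ⟨x, hx⟩
    exact hn x hx
  exact exists_it_eq_bot K p fun x hx => ⟨⟨x, hx⟩, fun y => rfl⟩

/-- Cartan's criterion. -/
theorem exists_it_br_eq_bot [CharZero F] [FiniteDimensional F L] (p : Submodule F L)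
    (hp : br p p ≤ p) (hk : ∀ x ∈ p, ∀ y ∈ p, killingForm F L x y = 0) :
    ∃ N, it (br p p) ⊤ N = ⊥ := by
  let K : LieSubalgebra F L := { p with lie_mem' := fun {x y} hx hy => hp (lie_mem_br hx hy) }
  have h0 : LieModule.traceForm F K L = 0 := by
    ext x y
    exact hk x x.2 y y.2
  have := LieModule.isNilpotent_derivedSeries_of_traceForm_eq_zero h0
  refine exists_it_eq_bot (LieAlgebra.derivedSeries F K 1) _ ?_
  have hle : br p p ≤ (LieAlgebra.derivedSeries F K 1).toSubmodule.map K.toSubmodule.subtype := by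
    refine br_le.2 fun x hx y hy => ?_
    refine ⟨⁅(⟨x, hx⟩ : K), (⟨y, hy⟩ : K)⁆, ?_, rfl⟩
    exact LieSubmodule.lie_mem_lie (LieSubmodule.mem_top _) (LieSubmodule.mem_top _)
  intro x hx
  obtain ⟨a, ha, rfl⟩ := hle hx
  exact ⟨⟨a, ha⟩, fun y => rfl⟩

theorem ad_lie (x y : L) : LieAlgebra.ad F L ⁅x, y⁆ =
    LieAlgebra.ad F L x * LieAlgebra.ad F L y - LieAlgebra.ad F L y * LieAlgebra.ad F L x := by
  ext z
  simp

end Lie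

/-! ### Highest weight vectors and the Killing form -/

section Triple

variable {F L : Type*} [Field F] [LieRing L] [LieAlgebra F L]

/-- The relations of an `sl2`-triple; unlike `IsSl2Triple`, the zero triple is allowed. -/
structure Triple (F : Type*) {L : Type*} [Field F] [LieRing L] [LieAlgebra F L] (e h f : L) :
    Prop where
  he : ⁅h, e⁆ = (2 : F) • e
  hf : ⁅h, f⁆ = (-2 : F) • f
  ef : ⁅e, f⁆ = h

/-- The highest weight vectors of weight `t`, that is the space `g(t)_e`. -/
def hw (e h : L) (t : F) : Submodule F L where
  carrier := {x | ⁅h, x⁆ = t • x ∧ ⁅e, x⁆ = 0}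
  add_mem' := by
    rintro x y ⟨hx, hx'⟩ ⟨hy, hy'⟩
    exact ⟨by rw [lie_add, hx, hy, smul_add], by rw [lie_add, hx', hy', add_zero]⟩
  zero_mem' := by simp
  smul_mem' := by
    rintro c x ⟨hx, hx'⟩
    exact ⟨by rw [lie_smul, hx, smul_comm], by rw [lie_smul, hx', smul_zero]⟩

theorem killing_lie (x y z : L) : killingForm F L ⁅x, y⁆ z = killingForm F L x ⁅y, z⁆ :=
  LieModule.traceForm_apply_lie_apply F L L x y z

theorem killing_comm (x y : L) : killingForm F L x y = killingForm F L y x :=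
  LieModule.traceForm_comm F L L x y

theorem eq_zero_of_killing [LieAlgebra.IsKilling F L] {x : L}
    (hx : ∀ y, killingForm F L x y = 0) : x = 0 :=
  (LieAlgebra.IsKilling.killingForm_nondegenerate F L).1 x hx

variable {e h f : L}

theorem Triple.lie_e_lie_f (T : Triple F e h f) {v : L} (hv : v ∈ hw e h (1 : F)) :
    ⁅e, ⁅f, v⁆⁆ = v := by
  obtain ⟨h1, h2⟩ := hv
  rw [leibniz_lie, T.ef, h1, h2, lie_zero, add_zero, one_smul]

theorem Triple.lie_h_lie_f (T : Triple F e h f) {v : L} (hv : v ∈ hw e h (1 : F)) :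
    ⁅h, ⁅f, v⁆⁆ = -⁅f, v⁆ := by
  rw [leibniz_lie, T.hf, hv.1, smul_lie, lie_smul]
  module

variable [CharZero F] [FiniteDimensional F L]

theorem isNilpotent_of_weight {x : L} {t : F} (ht : t ≠ 0) (hx : ⁅h, x⁆ = t • x) :
    IsNilpotent (LieAlgebra.ad F L x) := by
  refine isNilpotent_of_commutator_eq_smul (LieAlgebra.ad F L h) _ t ht ?_
  rw [← ad_lie, hx, map_smul]

theorem Triple.decomp (T : Triple F e h f) (p : Submodule F L) (pe : ∀ x ∈ p, ⁅e, x⁆ ∈ p)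
    (ph : ∀ x ∈ p, ⁅h, x⁆ ∈ p) (pf : ∀ x ∈ p, ⁅f, x⁆ ∈ p) (n : ℕ) {x : L} (hx : x ∈ p) :
    ∃ x₀ ∈ p, ∃ a ∈ p, ∃ b ∈ p, x = x₀ + (⁅h, a⁆ - (n : F) • a) + ⁅f, b⁆ ∧
      x₀ ∈ hw e h (n : F) :=
  sl2_decomp (E := LieAlgebra.ad F L e) (H := LieAlgebra.ad F L h) (G := LieAlgebra.ad F L f)
    (by rw [← ad_lie, T.he, map_smul]) (by rw [← ad_lie, T.hf, map_smul])
    (by rw [← ad_lie, T.ef]) (isNilpotent_of_weight two_ne_zero T.he)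
    (isNilpotent_of_weight (neg_ne_zero.2 two_ne_zero) T.hf) p pe ph pf n x hx

/-- A highest weight vector of negative integral weight is zero, because `ad f` is nilpotent and
`sl2Poly` has no negative roots. -/
theorem Triple.eq_zero_of_neg_weight (T : Triple F e h f) (d : ℕ) {y : L}
    (hy : ⁅h, y⁆ = (-((d : F) + 1)) • y) (hy' : ⁅e, y⁆ = 0) : y = 0 := by
  by_contra hne
  obtain ⟨m, hm⟩ := isNilpotent_of_weight (neg_ne_zero.2 two_ne_zero) T.hf
  have h1 := pow_pow_apply (E := LieAlgebra.ad F L e) (H := LieAlgebra.ad F L h)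
    (G := LieAlgebra.ad F L f) (by rw [← ad_lie, T.he, map_smul])
    (by rw [← ad_lie, T.hf, map_smul]) (by rw [← ad_lie, T.ef]) m y hy'
  have h2 : Module.End.HasEigenvector (LieAlgebra.ad F L h) (-((d : F) + 1)) y :=
    ⟨Module.End.mem_eigenspace_iff.2 hy, hne⟩
  rw [hm, LinearMap.zero_apply, map_zero, Module.End.aeval_apply_of_hasEigenvector h2] at h1
  refine (smul_ne_zero ?_ hne) h1.symm
  rw [sl2Poly, Polynomial.eval_prod]
  refine Finset.prod_ne_zero_iff.2 fun i _ => ?_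
  rw [Polynomial.eval_mul, Polynomial.eval_C, Polynomial.eval_sub, Polynomial.eval_X,
    Polynomial.eval_C]
  refine mul_ne_zero (by exact_mod_cast i.succ_ne_zero) ?_
  have : ((d + 1 + i : ℕ) : F) ≠ 0 := by exact_mod_cast (by omega : d + 1 + i ≠ 0)
  intro h0
  apply this
  push_cast
  linear_combination -h0

theorem Triple.lie_f_hw_zero (T : Triple F e h f) {x : L} (hx : x ∈ hw e h (0 : F)) :
    ⁅f, x⁆ = 0 := by
  obtain ⟨h1, h2⟩ := hx
  rw [zero_smul] at h1
  refine T.eq_zero_of_neg_weight 1 ?_ ?_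
  · rw [leibniz_lie, T.hf, h1, smul_lie, lie_zero, add_zero]; norm_num
  · rw [leibniz_lie, T.ef, h1, h2, lie_zero, add_zero]

theorem Triple.lie_f_lie_f (T : Triple F e h f) {v : L} (hv : v ∈ hw e h (1 : F)) :
    ⁅f, ⁅f, v⁆⁆ = 0 := by
  refine T.eq_zero_of_neg_weight 2 ?_ ?_
  · rw [leibniz_lie, T.hf, T.lie_h_lie_f hv, smul_lie, lie_neg]; push_cast; module
  · rw [leibniz_lie, T.ef, T.lie_e_lie_f hv, T.lie_h_lie_f hv, neg_add_cancel]

theorem Triple.killing_hw_zero_lie (T : Triple F e h f) {r : L} (hr : r ∈ hw e h (0 : F))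
    (a b : L) :
    killingForm F L r ⁅h, a⁆ = 0 ∧ killingForm F L r ⁅f, b⁆ = 0 := by
  have hf := T.lie_f_hw_zero hr
  have hh := hr.1
  rw [zero_smul] at hh
  rw [← killing_lie, ← killing_lie, ← lie_skew, hh, ← lie_skew r, hf]
  simp

variable [LieAlgebra.IsKilling F L]

/-- The Killing form is nondegenerate on the centraliser of the triple. -/
theorem Triple.hw_zero_nondegenerate (T : Triple F e h f) {r : L} (hr : r ∈ hw e h (0 : F))
    (h0 : ∀ a ∈ hw e h (0 : F), killingForm F L a r = 0) : r = 0 := by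
  refine eq_zero_of_killing (F := F) fun y => ?_
  obtain ⟨x₀, -, a, -, b, -, rfl, hx₀⟩ := T.decomp ⊤ (fun _ _ => trivial) (fun _ _ => trivial)
    (fun _ _ => trivial) 0 (x := y) trivial
  rw [Nat.cast_zero] at hx₀
  rw [map_add, map_add, killing_comm, h0 _ hx₀, Nat.cast_zero, zero_smul, sub_zero,
    (T.killing_hw_zero_lie hr a b).1, (T.killing_hw_zero_lie hr a b).2]
  simp

/-- In a stable subspace `p`, the elements orthogonal to the centraliser of the triple lie in
`[h, p] + [f, p]`. -/
theorem Triple.exists_eq_lie_add_lie (T : Triple F e h f) (p : Submodule F L)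
    (pe : ∀ x ∈ p, ⁅e, x⁆ ∈ p) (ph : ∀ x ∈ p, ⁅h, x⁆ ∈ p) (pf : ∀ x ∈ p, ⁅f, x⁆ ∈ p) {x : L}
    (hx : x ∈ p) (h0 : ∀ a ∈ hw e h (0 : F), killingForm F L a x = 0) :
    ∃ a ∈ p, ∃ b ∈ p, x = ⁅h, a⁆ + ⁅f, b⁆ := by
  obtain ⟨x₀, -, a, ha, b, hb, rfl, hx₀⟩ := T.decomp p pe ph pf 0 hx
  refine ⟨a, ha, b, hb, ?_⟩
  rw [Nat.cast_zero] at hx₀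
  rw [Nat.cast_zero, zero_smul, sub_zero] at h0 ⊢
  rw [add_assoc, add_eq_right]
  refine T.hw_zero_nondegenerate hx₀ fun r hr => ?_
  have := h0 r hr
  rwa [map_add, map_add, (T.killing_hw_zero_lie hr a b).1, (T.killing_hw_zero_lie hr a b).2,
    add_zero, add_zero] at this

/-- The pairing `(u, w) ↦ κ([f, u], w)` on `g(1)_e` is nondegenerate. -/
theorem Triple.hw_one_nondegenerate (T : Triple F e h f) {u : L} (hu : u ∈ hw e h (1 : F))
    (h0 : ∀ w ∈ hw e h (1 : F), killingForm F L ⁅f, u⁆ w = 0) : u = 0 := by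
  suffices h1 : ⁅f, u⁆ = 0 by rw [← T.lie_e_lie_f hu, h1, lie_zero]
  refine eq_zero_of_killing (F := F) fun y => ?_
  obtain ⟨x₀, -, a, -, b, -, rfl, hx₀⟩ := T.decomp ⊤ (fun _ _ => trivial) (fun _ _ => trivial)
    (fun _ _ => trivial) 1 (x := y) trivial
  rw [Nat.cast_one] at hx₀
  rw [map_add, map_add, h0 _ hx₀, map_sub, ← killing_lie, ← killing_lie, ← lie_skew _ h,
    T.lie_h_lie_f hu, ← lie_skew _ f, T.lie_f_lie_f hu]
  simp

/-- To prove that `[g(0)_e, g(1)_e]` is all of `g(1)_e` it suffices that no nonzero `v ∈ g(1)_e`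
commutes with `g(0)_e`: such a `v` represents, through `κ([f, v], ·)`, a functional that vanishes on
all brackets. -/
theorem Triple.hw_one_le (T : Triple F e h f)
    (hcore : ∀ v ∈ hw e h (1 : F), (∀ a ∈ hw e h (0 : F), ⁅a, v⁆ = 0) → v = 0)
    (P : Submodule F L) (hP : ∀ a ∈ hw e h (0 : F), ∀ w ∈ hw e h (1 : F), ⁅a, w⁆ ∈ P) :
    hw e h (1 : F) ≤ P := by
  set V := hw e h (1 : F) with hV
  by_contra hlt
  have h1 : P.comap V.subtype < ⊤ := by
    rw [lt_top_iff_ne_top]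
    intro h2
    exact hlt fun x hx => (h2.ge trivial : (⟨x, hx⟩ : V) ∈ P.comap V.subtype)
  obtain ⟨φ, hφ, hφP⟩ := Submodule.exists_le_ker_of_lt_top _ h1
  let Φ : V →ₗ[F] Module.Dual F V :=
    (killingForm F L).compl₁₂ ((LieAlgebra.ad F L f).comp V.subtype) V.subtype
  have hΦ : Function.Injective Φ := by
    rw [injective_iff_map_eq_zero]
    intro u hu
    exact Subtype.ext (T.hw_one_nondegenerate u.2 fun w hw => LinearMap.congr_fun hu ⟨w, hw⟩)
  obtain ⟨v, hv⟩ := (LinearMap.injective_iff_surjective_of_finrank_eq_finrank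
    (Subspace.dual_finrank_eq (K := F) (V := V)).symm).1 hΦ φ
  apply hφ
  rw [← hv]
  suffices v = 0 by rw [this, map_zero]
  have hstab : ∀ a ∈ hw e h (0 : F), ∀ w ∈ V, ⁅a, w⁆ ∈ V := by
    rintro a ⟨ha, ha'⟩ w ⟨hw, hw'⟩
    rw [zero_smul] at ha
    exact ⟨by rw [leibniz_lie, ha, hw, zero_lie, zero_add, lie_smul],
      by rw [leibniz_lie, ha', hw', zero_lie, lie_zero, add_zero]⟩
  refine Subtype.ext (hcore v v.2 fun a ha => T.hw_one_nondegenerate (hstab a ha v v.2) ?_)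
  intro w hw
  have h2 : killingForm F L ⁅f, (v : L)⁆ ⁅a, w⁆ = 0 := by
    have h3 : φ ⟨⁅a, w⁆, hstab a ha w hw⟩ = 0 := hφP (hP a ha w hw)
    rw [← hv] at h3
    exact h3
  have h4 : ⁅f, ⁅a, (v : L)⁆⁆ = ⁅a, ⁅f, (v : L)⁆⁆ := by
    rw [leibniz_lie, T.lie_f_hw_zero ha, zero_lie, zero_add]
  rw [h4, ← lie_skew, map_neg, LinearMap.neg_apply, killing_lie, h2, neg_zero]

end Triple

/-! ### Subalgebras normalised by the triple -/

section Core

variable {F L : Type*} [Field F] [LieRing L] [LieAlgebra F L]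

/-- The elements `x` with `⁅x, A⁆ ⊆ B`. -/
def trans (A B : Submodule F L) : Submodule F L where
  carrier := {x | ∀ y ∈ A, ⁅x, y⁆ ∈ B}
  add_mem' := fun hx hy z hz => by rw [add_lie]; exact B.add_mem (hx z hz) (hy z hz)
  zero_mem' := fun z _ => by rw [zero_lie]; exact B.zero_mem
  smul_mem' := fun c x hx z hz => by rw [smul_lie]; exact B.smul_mem c (hx z hz)

theorem lie_mem_trans_self {n : Submodule F L} {x y : L} (hx : x ∈ trans n n)
    (hy : y ∈ trans n n) : ⁅x, y⁆ ∈ trans n n := by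
  intro z hz
  rw [lie_lie]
  exact n.sub_mem (hx _ (hy z hz)) (hy _ (hx z hz))

/-- The orthogonal complement for the Killing form. -/
noncomputable abbrev perp (A : Submodule F L) : Submodule F L := (killingForm F L).orthogonal A

theorem lie_mem_perp {A B : Submodule F L} {x y : L} (hx : ∀ z ∈ A, ⁅z, x⁆ ∈ B)
    (hy : y ∈ perp B) : ⁅x, y⁆ ∈ perp A := by
  intro z hz
  change killingForm F L z ⁅x, y⁆ = 0
  rw [← killing_lie]
  exact hy _ (hx z hz)

/-- The `ad`-nilpotent subalgebras that contain `v` and are normalised by the triple and by its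
centraliser. -/
structure Good (e h f v : L) (n : Submodule F L) : Prop where
  mem : v ∈ n
  lie : ∀ x ∈ n, ∀ y ∈ n, ⁅x, y⁆ ∈ n
  he : e ∈ trans n n
  hh : h ∈ trans n n
  hf : f ∈ trans n n
  hc : hw e h (0 : F) ≤ trans n n
  nil : ∀ x ∈ n, IsNilpotent (LieAlgebra.ad F L x)

variable {e h f v : L} {n : Submodule F L}

theorem Good.le (H : Good e h f v n) : n ≤ trans n n := H.lie

theorem Good.exists_it_eq_bot [FiniteDimensional F L] (H : Good e h f v n) :
    ∃ N, it n ⊤ N = ⊥ :=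
  exists_it_eq_bot_of_isNilpotent n (br_le.2 H.lie) H.nil

/-- The normaliser of `n` preserves the filtration `it n ⊤`. -/
theorem it_stable_top {x : L} (hx : x ∈ trans n n) (j : ℕ) : ∀ y ∈ it n ⊤ j, ⁅x, y⁆ ∈ it n ⊤ j :=
  it_stable (S := ⊤) hx (fun _ _ => trivial) j

/-- For `x ∈ n` and `y` in the normaliser of `n`, `ad x ∘ ad y` raises the filtration `it n ⊤` by
one step. -/
theorem Good.le_perp [FiniteDimensional F L] (H : Good e h f v n) : n ≤ perp (trans n n) := by
  obtain ⟨N, hN⟩ := H.exists_it_eq_bot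
  intro x hx y hy
  change killingForm F L y x = 0
  rw [killing_comm]
  exact trace_eq_zero_of_shift (it n ⊤) rfl hN
    ((LieAlgebra.ad F L x).comp (LieAlgebra.ad F L y))
    fun j z hz => lie_mem_it hx (it_stable_top hy j z hz)

/-- The `(m + 1)`-st term of the lower central series of `n` raises `it n ⊤` by `m + 1` steps. -/
theorem it_lie_it (m : ℕ) : ∀ j, it n n m ≤ trans (it n ⊤ j) (it n ⊤ (j + (m + 1))) := by
  induction m with
  | zero => exact fun j x hx y hy => lie_mem_it hx hy
  | succ m ih =>
    intro j
    refine br_le.2 fun a ha b hb x hx => ?_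
    rw [lie_lie]
    refine Submodule.sub_mem _ (lie_mem_it ha (ih j hb x hx)) ?_
    have h1 := ih (j + 1) hb _ (lie_mem_it ha hx)
    rwa [show j + 1 + (m + 1) = j + (m + 1 + 1) by omega] at h1

/-- The orthogonal of `it n n k` lowers `it n ⊤` by at most `k` steps: bracketing with `n` sends it
to the orthogonal of `it n n (k - 1)`, which gives a double induction on `k` and `j`. -/
theorem perp_lie_it (hperp : perp n ≤ trans n n) (k : ℕ) :
    ∀ y ∈ perp (it n n k), ∀ j, ∀ x ∈ it n ⊤ (j + k), ⁅y, x⁆ ∈ it n ⊤ j := by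
  induction k with
  | zero => exact fun y hy j => it_stable_top (hperp hy) j
  | succ k ih =>
    intro y hy j
    induction j with
    | zero => exact fun _ _ => trivial
    | succ j ihj =>
      have h1 : it n ⊤ (j + 1 + (k + 1)) ≤ (it n ⊤ (j + 1)).comap (LieAlgebra.ad F L y) := by
        rw [show j + 1 + (k + 1) = (j + (k + 1)) + 1 by omega]
        refine br_le.2 fun a ha g hg => ?_
        change ⁅y, ⁅a, g⁆⁆ ∈ it n ⊤ (j + 1)
        rw [leibniz_lie]
        refine Submodule.add_mem _ ?_ (lie_mem_it ha (ihj g hg))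
        refine ih _ ?_ (j + 1) g (by rwa [show j + 1 + k = j + (k + 1) by omega])
        rw [← lie_skew]
        refine Submodule.neg_mem _ (lie_mem_perp (fun z hz => ?_) hy)
        rw [← lie_skew]
        exact Submodule.neg_mem _ (lie_mem_it ha hz)
      exact h1

variable [FiniteDimensional F L] [LieAlgebra.IsKilling F L]

theorem perp_perp (A : Submodule F L) : perp (perp A) = A :=
  LinearMap.BilinForm.orthogonal_orthogonal (LieAlgebra.IsKilling.killingForm_nondegenerate F L)
    (LieModule.traceForm_isSymm F L L).isRefl A

/-- If `q ∩ q^⊥ ⊆ n`, then descending along the filtration `it n ⊤` gives `q^⊥ ⊆ n`: an element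
`x ∈ q^⊥` with `[n, x] ⊆ n` lies in `q ∩ q^⊥`. Taking orthogonals, `n^⊥ ⊆ q`. -/
theorem Good.perp_le (H : Good e h f v n) (hmax : trans n n ⊓ perp (trans n n) ≤ n) :
    perp n ≤ trans n n := by
  suffices hle : perp (trans n n) ≤ n by
    rw [← perp_perp (trans n n)]
    exact LinearMap.BilinForm.orthogonal_le hle
  obtain ⟨N, hN⟩ := H.exists_it_eq_bot
  have : ∀ i, perp (trans n n) ⊓ it n ⊤ (N - i) ≤ n := by
    intro i
    induction i with
    | zero => rw [Nat.sub_zero, hN, inf_bot_eq]; exact bot_le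
    | succ i ih =>
      rintro x ⟨hx, hx'⟩
      refine hmax ⟨fun y hy => ?_, hx⟩
      rw [← lie_skew]
      refine n.neg_mem (ih ⟨lie_mem_perp (fun z hz => lie_mem_trans_self hz (H.le hy)) hx, ?_⟩)
      exact it_antitone le_top (by omega : N - i ≤ N - (i + 1) + 1) (lie_mem_it hy hx')
  have h0 := this N
  rwa [Nat.sub_self, it, inf_top_eq] at h0

variable [CharZero F]

/-- With `q` the normaliser of `n`, the ideal `n₁ = q ∩ q^⊥` of `q` consists of ad-nilpotent
elements. It equals `[q, n₁]`, and by Cartan's criterion `[n₁, n₁]` acts nilpotently. For `y ∈ q` and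
`x, z ∈ n₁` one has `tr (ad [y, z] (ad x)^m) = tr (ad y [ad z, (ad x)^m])`, and the operator on the
right strictly raises the filtration defined by `[n₁, n₁]`. Hence all powers of `ad x` have trace
zero. -/
theorem Good.nil_aux (H : Good e h f v n) (T : Triple F e h f) {x : L}
    (hx : x ∈ trans n n ⊓ perp (trans n n)) : IsNilpotent (LieAlgebra.ad F L x) := by
  set q := trans n n with hq
  set n₁ := q ⊓ perp q with hn₁
  have hideal : ∀ x ∈ q, ∀ y ∈ n₁, ⁅x, y⁆ ∈ n₁ := fun x hx y hy =>
    ⟨lie_mem_trans_self hx hy.1, lie_mem_perp (fun z hz => lie_mem_trans_self hz hx) hy.2⟩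
  have hle : n₁ ≤ br q n₁ := by
    intro y hy
    obtain ⟨a, ha, b, hb, rfl⟩ := T.exists_eq_lie_add_lie n₁ (hideal e H.he) (hideal h H.hh)
      (hideal f H.hf) hy fun a ha => hy.2 a (H.hc ha)
    exact (br q n₁).add_mem (lie_mem_br H.hh ha) (lie_mem_br H.hf hb)
  obtain ⟨N, hN⟩ := exists_it_br_eq_bot n₁ (br_le.2 fun x hx y hy => hideal x hx.1 y hy)
    fun x hx y hy => hy.2 x hx.1
  set Nd := br n₁ n₁ with hNd
  have hNdq : ∀ y ∈ q, ∀ z ∈ Nd, ⁅y, z⁆ ∈ Nd := fun y hy =>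
    it_stable (p := n₁) (S := n₁) (hideal y hy) (hideal y hy) 1
  have hG : ∀ y ∈ q, ∀ j, ∀ z ∈ it Nd ⊤ j, ⁅y, z⁆ ∈ it Nd ⊤ j := fun y hy j =>
    it_stable (S := ⊤) (hNdq y hy) (fun _ _ => trivial) j
  set X := LieAlgebra.ad F L x with hX
  have hXpow : ∀ m j, ∀ z ∈ it Nd ⊤ j, (X ^ m) z ∈ it Nd ⊤ j := by
    intro m j z hz
    induction m with
    | zero => exact hz
    | succ m ih => rw [pow_succ', Module.End.mul_apply]; exact hG x hx.1 j _ ih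
  -- Modulo the next step of the filtration by `Nd = [n₁, n₁]`, the action of `n₁` is commutative.
  have hcomm : ∀ z ∈ n₁, ∀ m j, ∀ g ∈ it Nd ⊤ j,
      (LieAlgebra.ad F L z * X ^ m - X ^ m * LieAlgebra.ad F L z) g ∈ it Nd ⊤ (j + 1) := by
    intro z hz m
    induction m with
    | zero => intro j g _; simp
    | succ m ih =>
      intro j g hg
      have h1 : LieAlgebra.ad F L z * X ^ (m + 1) - X ^ (m + 1) * LieAlgebra.ad F L z =
          (LieAlgebra.ad F L z * X ^ m - X ^ m * LieAlgebra.ad F L z) * X +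
            X ^ m * LieAlgebra.ad F L ⁅z, x⁆ := by
        rw [ad_lie, pow_succ]; noncomm_ring
      rw [h1]
      exact (it Nd ⊤ (j + 1)).add_mem (ih j _ (hG x hx.1 j g hg))
        (hXpow m (j + 1) _ (lie_mem_it (lie_mem_br hz hx) hg))
  have key : ∀ m, br q n₁ ≤ LinearMap.ker ((LinearMap.trace F L) ∘ₗ
      (LinearMap.mulRight F (X ^ m)) ∘ₗ (LieAlgebra.ad F L : L →ₗ[F] Module.End F L)) := by
    intro m
    refine br_le.2 fun y hy z hz => ?_
    change LinearMap.trace F L (LieAlgebra.ad F L ⁅y, z⁆ * X ^ m) = 0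
    have h1 : LinearMap.trace F L (LieAlgebra.ad F L z * (LieAlgebra.ad F L y * X ^ m)) =
        LinearMap.trace F L (LieAlgebra.ad F L y * (X ^ m * LieAlgebra.ad F L z)) := by
      rw [LinearMap.trace_mul_comm, mul_assoc]
    rw [ad_lie, sub_mul, mul_assoc, mul_assoc, map_sub, h1, ← map_sub, ← mul_sub]
    exact trace_eq_zero_of_shift (it Nd ⊤) rfl hN _
      fun j g hg => hG y hy (j + 1) _ (hcomm z hz m j g hg)
  refine isNilpotent_of_trace_pow X fun m => ?_
  rw [pow_succ']
  exact key m (hle hx)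

theorem Good.enlarge (H : Good e h f v n) (T : Triple F e h f) :
    Good e h f v (trans n n ⊓ perp (trans n n)) := by
  have hideal : ∀ x ∈ trans n n, x ∈ trans (trans n n ⊓ perp (trans n n))
      (trans n n ⊓ perp (trans n n)) := fun x hx y hy =>
    ⟨lie_mem_trans_self hx hy.1, lie_mem_perp (fun z hz => lie_mem_trans_self hz hx) hy.2⟩
  exact ⟨⟨H.le H.mem, H.le_perp H.mem⟩, fun x hx => hideal x hx.1, hideal _ H.he, hideal _ H.hh,
    hideal _ H.hf, fun a ha => hideal a (H.hc ha), fun x hx => H.nil_aux T hx⟩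

/-- The traces of `ad [v, y]` on the steps of `it n ⊤`, computed in two ways, for `v` in the term
`it n n m` but not in the next one, and `y` orthogonal to that next term with `κ(y, v) ≠ 0`. -/
theorem Good.false_of_max (H : Good e h f v n) (T : Triple F e h f) (hv0 : v ≠ 0)
    (hvc : ∀ a ∈ hw e h (0 : F), ⁅a, v⁆ = 0) (hmax : trans n n ⊓ perp (trans n n) ≤ n) :
    False := by
  have hperp := H.perp_le hmax
  obtain ⟨N, hN⟩ := H.exists_it_eq_bot
  have hle : ∀ j, it n n j ≤ it n ⊤ j := by
    intro j
    induction j with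
    | zero => exact le_top
    | succ j ih => exact Submodule.map₂_le_map₂_right ih
  have hex : ∃ j, v ∉ it n n j := ⟨N, fun hv => hv0 (by simpa [hN] using hle N hv)⟩
  obtain ⟨m, hvm, hvm'⟩ : ∃ m, v ∈ it n n m ∧ v ∉ it n n (m + 1) := by
    by_contra hcon
    push Not at hcon
    obtain ⟨j, hj⟩ := hex
    apply hj
    clear hj
    induction j with
    | zero => exact H.mem
    | succ j ih => exact hcon j ih
  obtain ⟨y, hy, hvy⟩ : ∃ y ∈ perp (it n n (m + 1)), killingForm F L y v ≠ 0 := by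
    by_contra hcon
    push Not at hcon
    apply hvm'
    rw [← perp_perp (it n n (m + 1))]
    exact hcon
  have hxq : ⁅v, y⁆ ∈ trans n n := hperp (lie_mem_perp (fun z hz => lie_mem_it hz hvm) hy)
  obtain ⟨a, ha, b, hb, hab⟩ := T.exists_eq_lie_add_lie (trans n n)
    (fun z hz => lie_mem_trans_self H.he hz) (fun z hz => lie_mem_trans_self H.hh hz)
    (fun z hz => lie_mem_trans_self H.hf hz) hxq fun a ha => by
      rw [← killing_lie, hvc a ha, map_zero, LinearMap.zero_apply]
  have hsum := sum_trace_restrict (it n ⊤) rfl (it_antitone le_top) hN (m + 1)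
    (LieAlgebra.ad F L v) (LieAlgebra.ad F L y) (LieAlgebra.ad F L ⁅v, y⁆)
    (fun j => it_lie_it m j hvm) (perp_lie_it hperp (m + 1) y hy)
    (fun j => it_stable_top hxq j) (ad_lie v y)
  have hzero := Finset.sum_eq_zero (s := Finset.range N) fun i _ =>
    trace_restrict_commutator (it n ⊤ i) (LieAlgebra.ad F L ⁅v, y⁆) (LieAlgebra.ad F L h)
      (LieAlgebra.ad F L a) (LieAlgebra.ad F L f) (LieAlgebra.ad F L b) (it_stable_top hxq i)
      (it_stable_top H.hh i) (it_stable_top ha i) (it_stable_top H.hf i) (it_stable_top hb i)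
      (by rw [hab, map_add, ad_lie, ad_lie])
  rw [killing_comm] at hvy
  exact mul_ne_zero (by exact_mod_cast m.succ_ne_zero) hvy (hsum.symm.trans hzero)

/-- The span of `v` and `[f, v]` is abelian: `[[f, v], v]` lies in `g(0)_e` and is orthogonal to it,
because `v` commutes with `g(0)_e`. -/
theorem Triple.good_span (T : Triple F e h f) (hv : v ∈ hw e h (1 : F))
    (hvc : ∀ a ∈ hw e h (0 : F), ⁅a, v⁆ = 0) :
    Good e h f v (Submodule.span F {v, ⁅f, v⁆}) := by
  set s := Submodule.span F {v, ⁅f, v⁆} with hs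
  have h1 : v ∈ s := Submodule.subset_span (by simp)
  have h2 : ⁅f, v⁆ ∈ s := Submodule.subset_span (by simp)
  have hr0 : ⁅⁅f, v⁆, v⁆ = 0 := by
    have hr : ⁅⁅f, v⁆, v⁆ ∈ hw e h (0 : F) := by
      refine ⟨?_, ?_⟩
      · rw [leibniz_lie, T.lie_h_lie_f hv, hv.1, neg_lie, lie_smul]; module
      · rw [leibniz_lie, T.lie_e_lie_f hv, hv.2]; simp
    refine T.hw_zero_nondegenerate hr fun a ha => ?_
    rw [killing_comm, killing_lie, ← lie_skew v a, hvc a ha]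
    simp
  have htrans : ∀ x, ⁅x, v⁆ ∈ s → ⁅x, ⁅f, v⁆⁆ ∈ s → x ∈ trans s s := by
    intro x hx hx' y hy
    obtain ⟨α, β, rfl⟩ := Submodule.mem_span_pair.1 hy
    rw [lie_add, lie_smul, lie_smul]
    exact s.add_mem (s.smul_mem _ hx) (s.smul_mem _ hx')
  have hab : ∀ x ∈ s, ∀ y ∈ s, ⁅x, y⁆ ∈ s := by
    intro x hx
    obtain ⟨α, β, rfl⟩ := Submodule.mem_span_pair.1 hx
    refine htrans _ ?_ ?_
    · simp [hr0]
    · rw [← lie_skew]; simp [hr0]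
  refine ⟨h1, hab, htrans _ ?_ ?_, htrans _ ?_ ?_, htrans _ h2 ?_, fun a ha => htrans _ ?_ ?_, ?_⟩
  · rw [hv.2]; exact s.zero_mem
  · rw [T.lie_e_lie_f hv]; exact h1
  · rw [hv.1]; exact s.smul_mem _ h1
  · rw [T.lie_h_lie_f hv]; exact s.neg_mem h2
  · rw [T.lie_f_lie_f hv]; exact s.zero_mem
  · rw [hvc a ha]; exact s.zero_mem
  · rw [leibniz_lie, hvc a ha, ← lie_skew a f, T.lie_f_hw_zero ha]; simp
  · intro x hx
    obtain ⟨α, β, rfl⟩ := Submodule.mem_span_pair.1 hx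
    have hn1 := isNilpotent_of_weight one_ne_zero hv.1
    have hn2 : IsNilpotent (LieAlgebra.ad F L ⁅f, v⁆) :=
      isNilpotent_of_weight (F := F) (neg_ne_zero.2 one_ne_zero)
        (by rw [T.lie_h_lie_f hv, neg_smul, one_smul])
    have hc : Commute (LieAlgebra.ad F L v) (LieAlgebra.ad F L ⁅f, v⁆) := by
      have := ad_lie (F := F) ⁅f, v⁆ v
      rw [hr0, map_zero] at this
      exact (sub_eq_zero.1 this.symm).symm
    rw [map_add, map_smul, map_smul]
    exact ((hc.smul_left α).smul_right β).isNilpotent_add (hn1.smul α) (hn2.smul β)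

theorem Triple.eq_zero_of_hw_one (T : Triple F e h f) (hv : v ∈ hw e h (1 : F))
    (hvc : ∀ a ∈ hw e h (0 : F), ⁅a, v⁆ = 0) : v = 0 := by
  by_contra hv0
  obtain ⟨n, hn, hmax⟩ := (wellFounded_gt (α := Submodule F L)).has_min
    {n | Good e h f v n} ⟨_, T.good_span hv hvc⟩
  refine hn.false_of_max T hv0 hvc ?_
  have hle : n ≤ trans n n ⊓ perp (trans n n) := le_inf hn.le hn.le_perp
  by_contra hcon
  exact hmax _ (hn.enlarge T) (lt_of_le_not_ge hle hcon)

end Core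
end Sl2Aux

/-- For any sl2-triple in a finite-dimensional semisimple Lie algebra,
`g(1)_e = [g(0)_e, g(1)_e]`. -/
theorem g1e_eq_bracket_g0e_g1e
    (F : Type*) [Field F] [IsAlgClosed F] [CharZero F]
    (L : Type*) [LieRing L] [LieAlgebra F L] [FiniteDimensional F L]
    [LieAlgebra.IsSemisimple F L]
    (e h f : L)
    (t1 : ⁅h, e⁆ = (2 : F) • e) (t2 : ⁅h, f⁆ = (-2 : F) • f) (t3 : ⁅e, f⁆ = h)
    (g0e : Set L) (hg0e : g0e = {x : L | ⁅h, x⁆ = 0 ∧ ⁅e, x⁆ = 0})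
    (g1e : Set L) (hg1e : g1e = {x : L | ⁅h, x⁆ = (1 : F) • x ∧ ⁅e, x⁆ = 0}) :
    (Submodule.span F {z : L | ∃ a ∈ g0e, ∃ b ∈ g1e, z = ⁅a, b⁆} : Set L) = g1e := by
  have T : Sl2Aux.Triple F e h f := ⟨t1, t2, t3⟩
  subst hg0e hg1e
  have h0 : ∀ a : L, a ∈ Sl2Aux.hw e h (0 : F) ↔ ⁅h, a⁆ = 0 ∧ ⁅e, a⁆ = 0 := by
    intro a
    change (⁅h, a⁆ = (0 : F) • a ∧ _) ↔ _
    rw [zero_smul]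
  refine Set.Subset.antisymm ?_ ?_
  · suffices Submodule.span F _ ≤ Sl2Aux.hw e h (1 : F) from this
    refine Submodule.span_le.2 ?_
    rintro _ ⟨a, ⟨ha, ha'⟩, b, ⟨hb, hb'⟩, rfl⟩
    exact ⟨by rw [leibniz_lie, ha, hb, zero_lie, zero_add, lie_smul],
      by rw [leibniz_lie, ha', hb', zero_lie, lie_zero, add_zero]⟩
  · exact T.hw_one_le (fun v hv hvc => T.eq_zero_of_hw_one hv hvc) _
      fun a ha w hw => Submodule.subset_span ⟨a, (h0 a).1 ha, w, hw, rfl⟩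
end

section
/- Let F be an algebraically closed field of characteristic 0, g a finite-dimensional semisimple Lie algebra over F, and (e, h, f) an sl2-triple in g. Then e ∈ [g_e, g_e] if and only if e ∈ [g(1)_e, g(1)_e], where [g(1)_e, g(1)_e] is the linear span of all brackets of pairs of elements of g(1)_e. -/
open Module

/-!
Write `k = g(0)_e` for the centraliser of the triple and `κ` for the Killing form. Since `ad h` is
semisimple and has natural eigenvalues on `g_e`, comparing eigenvalues in `e ∈ [g_e, g_e]` gives
`e ∈ [k, g] + N` with `N = [g(1)_e, g(1)_e]`, a `k`-submodule of `g` (`mem_sup_of_mem_derived`).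
The algebra `k` fixes `e`, so the `k`-invariant part of this equation should put `e` in `N`.
This is made precise in `mem_span_of_mem_derived` by two facts. First, every `k`-submodule `U` of
`g` satisfies `U ⊆ g^k + [k, U]` (`lieSplits_sl2Centralizer`), so `e = w₀ + v` with `w₀ ∈ N` and
`v ∈ g^k ∩ [k, g]`. Second, `g^k` is `κ`-orthogonal to `[k, g]`, while `g = g^k + [k, g]`; hence
`g^k ∩ [k, g]` is contained in the radical of `κ`, and `v = 0`.

The splitting property is a weak form of complete reducibility. It is proved by Casimir operators
and Fitting's lemma, first for semisimple algebras (`lieSplits_of_hasTrivialRadical`), and then for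
an algebra with nondegenerate trace form whose centre acts semisimply (`lieSplits_of_reductive`).
That `k` is of this kind follows from the first case applied to the copy of `sl₂` spanned by the
triple: `k` is its space of invariants, so `κ` is nondegenerate on `k`
(`traceForm_sl2Centralizer_nondegenerate`). An element commuting with `k` and having `e`, `h`, `f`
as eigenvectors has its nilpotent part in the radical of `κ` on `k`, so it is semisimple
(`isSemisimple_ad_of_centralizes`); this covers both `h` and the centre of `k`.
-/

/-! ### Splitting off invariants by endomorphisms -/

section Decomposition

variable {F K V : Type*} [Field F] [LieRing K] [LieAlgebra F K]
  [AddCommGroup V] [Module F V] [LieRingModule K V] [LieModule F K V]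

/-- `V` splits if every Lie submodule `U` satisfies `U ⊆ V^K + [K, U]`. This is the part of complete
reducibility that the argument needs; quantifying over all `U` makes it hereditary, so that it can
be proved by induction on dimension. -/
def LieSplits (F K V : Type*) [Field F] [LieRing K] [LieAlgebra F K]
    [AddCommGroup V] [Module F V] [LieRingModule K V] [LieModule F K V] : Prop :=
  ∀ U : LieSubmodule F K V,
    U ≤ LieModule.maxTrivSubmodule F K V ⊔ ⁅(⊤ : LieIdeal F K), U⁆

/-- If every nontrivial submodule `U` carries a non-nilpotent `K`-endomorphism with image in `[K, U]`,
then `V` splits: by Fitting's lemma `U = ker Tⁿ ⊕ im Tⁿ`, where the image lies in `[K, U]` and the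
kernel is a proper submodule, to which induction applies. -/
theorem lieSplits_of_endomorphism [FiniteDimensional F V]
    (H : ∀ U : LieSubmodule F K V, ¬ LieModule.IsTrivial K U →
      ∃ T : U →ₗ[F] U, (∀ (x : K) (u : U), T ⁅x, u⁆ = ⁅x, T u⁆) ∧
        (∀ u, T u ∈ Submodule.span F {w | ∃ (x : K) (v : U), ⁅x, v⁆ = w}) ∧ ¬ IsNilpotent T) :
    LieSplits F K V := by
  intro U
  induction hn : finrank F U using Nat.strong_induction_on generalizing U with
  | _ d ih =>
  by_cases htriv : LieModule.IsTrivial K U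
  · refine le_trans ?_ le_sup_left
    intro u hu
    rw [LieModule.mem_maxTrivSubmodule]
    intro x
    have := htriv.trivial x ⟨u, hu⟩
    simpa using congrArg Subtype.val this
  obtain ⟨T, hT, hrange', hnil⟩ := H U htriv
  have hrange : ∀ u, (T u : V) ∈ ⁅(⊤ : LieIdeal F K), U⁆ := fun u => by
    have := Submodule.mem_map_of_mem (f := (U.incl : U →ₗ[F] V)) (hrange' u)
    rw [Submodule.map_span] at this
    refine Submodule.span_le (p := (⁅(⊤ : LieIdeal F K), U⁆ : LieSubmodule F K V).toSubmodule).2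
      ?_ this
    rintro _ ⟨_, ⟨x, v, rfl⟩, rfl⟩
    exact LieSubmodule.lie_mem_lie (LieSubmodule.mem_top x) v.2
  obtain ⟨n, hn1, hn2⟩ :=
    ((Filter.eventually_ge_atTop 1).and T.eventually_isCompl_ker_pow_range_pow).exists
  have hTn : ∀ (k : ℕ) (x : K) (u : U), (T ^ k) ⁅x, u⁆ = ⁅x, (T ^ k) u⁆ := by
    intro k x
    induction k with
    | zero => simp
    | succ k ih => intro u; rw [pow_succ, Module.End.mul_apply, Module.End.mul_apply, hT, ih]
  let W : LieSubmodule F K V :=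
    { toSubmodule := (LinearMap.ker (T ^ n)).map (U.incl : U →ₗ[F] V)
      lie_mem := by
        rintro x _ ⟨u, hu, rfl⟩
        refine ⟨(⁅x, u⁆ : U), ?_, rfl⟩
        have : (T ^ n) u = 0 := hu
        change (T ^ n) ⁅x, u⁆ = 0
        rw [hTn, this, lie_zero] }
  have hWU : W ≤ U := by
    rintro _ ⟨u, -, rfl⟩
    exact u.2
  have hlt : W < U := by
    refine lt_of_le_of_ne hWU ?_
    intro h
    apply hnil
    have key : ∀ v : U, (T ^ n) v = 0 := by
      intro v
      have hv : (v : V) ∈ W := h.ge v.2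
      obtain ⟨u', hu', hh⟩ := hv
      obtain rfl : u' = v := Subtype.ext hh
      exact hu'
    exact ⟨n, LinearMap.ext key⟩
  have hfin : finrank F W < d := by
    rw [← hn]
    exact Submodule.finrank_lt_finrank_of_lt (s := W.toSubmodule) (t := U.toSubmodule) hlt
  have hW := ih _ hfin W rfl
  intro u hu
  obtain ⟨a, ha, b, hb, hab⟩ := Submodule.mem_sup.1
    (hn2.sup_eq_top ▸ Submodule.mem_top : (⟨u, hu⟩ : U) ∈ _ ⊔ _)
  have h1 : (a : V) ∈ W := ⟨a, ha, rfl⟩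
  have h2 : (b : V) ∈ ⁅(⊤ : LieIdeal F K), U⁆ := by
    obtain ⟨c, rfl⟩ := hb
    obtain ⟨m, rfl⟩ : ∃ m, n = m + 1 := ⟨n - 1, by omega⟩
    rw [pow_succ', Module.End.mul_apply]
    exact hrange _
  have h3 := (hW.trans (sup_le_sup_left (LieSubmodule.mono_lie_right _ hWU) _)) h1
  have : u = a + b := by rw [← Submodule.coe_add, hab]
  rw [this]
  exact add_mem h3 ((le_sup_right : _ ≤ LieModule.maxTrivSubmodule F K V ⊔ _) h2)

end Decomposition

/-! ### Casimir operators and semisimple Lie algebras -/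

/-- The Casimir operator `∑ bᵢ dᵢ` of a space `A` of endomorphisms on which the trace form is
nondegenerate, for dual bases `b` and `d` of `A`. It has trace `dim A` and commutes with every
endomorphism normalising `A`. -/
theorem exists_casimir {F U : Type*} [Field F] [AddCommGroup U] [Module F U] [FiniteDimensional F U]
    (A : Submodule F (End F U))
    (hA : ∀ a ∈ A, (∀ b ∈ A, LinearMap.trace F U (a * b) = 0) → a = 0) :
    ∃ b d : Fin (finrank F A) → End F U, (∀ i, b i ∈ A) ∧ (∀ i, d i ∈ A) ∧
      LinearMap.trace F U (∑ i, b i * d i) = finrank F A ∧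
      ∀ y : End F U, (∀ a ∈ A, y * a - a * y ∈ A) →
        y * (∑ i, b i * d i) = (∑ i, b i * d i) * y := by
  let B : LinearMap.BilinForm F A :=
    ((LinearMap.mul F (End F U)).compr₂ (LinearMap.trace F U)).compl₁₂ A.subtype A.subtype
  have hB : ∀ a b : A, B a b = LinearMap.trace F U ((a : End F U) * b) := fun a b => rfl
  have hsymm : B.IsSymm := ⟨fun a b => by
    simp only [hB]; exact LinearMap.trace_mul_comm _ _ _⟩
  have hnd : B.Nondegenerate := by
    refine (LinearMap.IsRefl.nondegenerate_iff_separatingLeft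
      (fun a b hab => (hsymm.eq b a).trans hab)).2 ?_
    intro a ha
    exact Subtype.ext (hA a a.2 fun b hb => ha ⟨b, hb⟩)
  let b := finBasis F A
  let d := B.dualBasis hnd b
  have hbd : ∀ i j, B (b i) (d j) = if i = j then 1 else 0 := fun i j => by
    rw [LinearMap.BilinForm.apply_dualBasis_right hnd hsymm]
  have hd : ∀ a : A, a = ∑ j, B a (b j) • d j := fun a => by
    conv_lhs => rw [← d.sum_repr a]
    simp only [d, LinearMap.BilinForm.dualBasis_repr_apply]
  have hb : ∀ a : A, a = ∑ j, B a (d j) • b j := fun a => by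
    conv_lhs => rw [← b.sum_repr a]
    refine Finset.sum_congr rfl fun j _ => ?_
    congr 1
    conv_rhs => rw [← b.sum_repr a]
    simp only [map_sum, map_smul, LinearMap.sum_apply, LinearMap.smul_apply, hbd]
    simp
  refine ⟨fun i => b i, fun i => d i, fun i => (b i).2, fun i => (d i).2, ?_, ?_⟩
  · rw [map_sum]
    have : ∀ i, LinearMap.trace F U ((b i : End F U) * d i) = 1 := fun i => by
      rw [← hB, hbd]; simp
    simp [this]
  · intro y hy
    let D : A → A := fun a => ⟨y * a - a * y, hy a a.2⟩
    have hD : ∀ a : A, y * (a : End F U) = D a + a * y := fun a => by simp [D]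
    -- `ad y` is skew for the trace form, so its matrices in dual bases are negative transposes
    have key : ∀ i j, B (D (b i)) (d j) = - B (D (d j)) (b i) := by
      intro i j
      simp only [hB, D]
      rw [eq_neg_iff_add_eq_zero, LinearMap.trace_mul_comm F (_ - _ : End F U) (b i : End F U), ← map_add]
      have : (y * (b i : End F U) - b i * y) * d j + b i * (y * d j - d j * y)
        = y * (b i * d j) - (b i * d j) * y := by noncomm_ring
      rw [this, map_sub, LinearMap.trace_mul_comm, sub_self]
    have e1 : ∀ i, (D (b i) : End F U) = ∑ j, B (D (b i)) (d j) • (b j : End F U) := fun i => by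
      simpa using congrArg A.subtype (hb (D (b i)))
    have e2 : ∀ i, (D (d i) : End F U) = ∑ j, B (D (d i)) (b j) • (d j : End F U) := fun i => by
      simpa using congrArg A.subtype (hd (D (d i)))
    have : ∀ i, y * ((b i : End F U) * d i) = D (b i) * d i + b i * D (d i) + (b i * d i) * y := by
      intro i
      rw [← mul_assoc, hD, add_mul, mul_assoc, hD]; noncomm_ring
    rw [Finset.mul_sum, Finset.sum_congr rfl fun i _ => this i, Finset.sum_add_distrib,
      Finset.sum_add_distrib, ← Finset.sum_mul]
    rw [add_eq_right]
    simp only [e1, e2, Finset.sum_mul, Finset.mul_sum, key, neg_smul, smul_mul_assoc,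
      mul_smul_comm, neg_mul, Finset.sum_neg_distrib]
    rw [Finset.sum_comm, neg_add_cancel]

-- The Lie ring structure on `End F V` is not a global instance. It is confined to this section so
-- that the brackets in the statement at the end are elaborated without it.
section AssociativeLie

attribute [local instance] LieRing.ofAssociativeRing

/-- A form of Cartan's criterion: over a semisimple Lie algebra, an element in the radical of the
trace form of `U` acts by zero on `U`. The radical `R` of the form is an ideal; its intersection `X`
with the Killing complement of the kernel of the action acts faithfully, and its trace form
vanishes, so `[X, X]` is nilpotent, `X` is solvable, and hence `X = 0`. -/
theorem toEnd_eq_zero_of_mem_ker_traceForm {F K U : Type*} [Field F] [CharZero F]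
    [LieRing K] [LieAlgebra F K] [FiniteDimensional F K] [LieAlgebra.HasTrivialRadical F K]
    [AddCommGroup U] [Module F U] [LieRingModule K U] [LieModule F K U] [FiniteDimensional F U]
    (x : K) (hx : ∀ y, LieModule.traceForm F K U x y = 0) :
    LieModule.toEnd F K U x = 0 := by
  let R : LieIdeal F K :=
    { toSubmodule := LinearMap.ker (LieModule.traceForm F K U)
      lie_mem := by
        intro y x hx
        refine LinearMap.ext fun z => ?_
        have hx : LieModule.traceForm F K U x = 0 := hx
        rw [← lie_skew, map_neg, LinearMap.neg_apply, LieModule.traceForm_apply_lie_apply, hx]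
        simp }
  have hRmem : ∀ x, x ∈ R ↔ LieModule.traceForm F K U x = 0 := fun x => Iff.rfl
  have hxR : x ∈ R := LinearMap.ext hx
  set J : LieIdeal F K := LieModule.ker F K U
  set Jc := J.killingCompl
  have hJ : IsCompl J Jc := LieIdeal.isCompl_killingCompl J
  let X : LieIdeal F K := R ⊓ Jc
  have hXJ : ∀ y ∈ X, LieModule.toEnd F K U y = 0 → y = 0 := by
    intro y hy hy0
    have h1 : y ∈ J ⊓ Jc := ⟨hy0, hy.2⟩
    rwa [hJ.inf_eq_bot, LieSubmodule.mem_bot] at h1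
  have tf : LieModule.traceForm F X U = 0 := by
    ext ⟨a, ha⟩ ⟨b, hb⟩
    exact LinearMap.congr_fun ((hRmem a).1 ha.1) b
  have nilp : LieModule.IsNilpotent (LieAlgebra.derivedSeries F X 1) U :=
    LieModule.isNilpotent_derivedSeries_of_traceForm_eq_zero tf
  have hpow : ∀ (x y : K) (n : ℕ), LieModule.toEnd F K U (((LieAlgebra.ad F K x) ^ n) y) =
      ((LieAlgebra.ad F (End F U) (LieModule.toEnd F K U x)) ^ n) (LieModule.toEnd F K U y) := by
    intro x y n
    induction n with
    | zero => simp
    | succ n ih =>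
      rw [pow_succ', pow_succ', Module.End.mul_apply, Module.End.mul_apply, LieAlgebra.ad_apply,
        LieHom.map_lie, ih, LieAlgebra.ad_apply]
  let D : LieIdeal F K := ⁅X, X⁆
  have hDX : D ≤ X := LieSubmodule.lie_le_left X X
  have ring_nilp : LieRing.IsNilpotent D := by
    rw [LieAlgebra.isNilpotent_iff_forall (R := F)]
    rintro ⟨x, hx⟩
    apply LieSubalgebra.isNilpotent_ad_of_isNilpotent_ad (D : LieSubalgebra F K) (x := ⟨x, hx⟩)
    obtain ⟨n, hn⟩ : IsNilpotent (LieAlgebra.ad F (End F U) (LieModule.toEnd F K U x)) := by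
      apply LieAlgebra.ad_nilpotent_of_nilpotent
      refine (LieModule.isNilpotent_iff_forall' (R := F)).mp nilp ⟨⟨x, hDX hx⟩, ?_⟩
      rwa [LieIdeal.derivedSeries_eq_derivedSeriesOfIdeal_comap, LieIdeal.mem_comap]
    refine ⟨n + 1, LinearMap.ext fun y => hXJ _ ?_ ?_⟩
    · rw [pow_succ', Module.End.mul_apply, LieAlgebra.ad_apply]
      exact lie_mem_left F K X _ _ (hDX hx)
    · change LieModule.toEnd F K U (((LieAlgebra.ad F K x) ^ (n + 1)) y) = 0
      rw [hpow, pow_succ', hn]; simp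
  have hXsol : LieAlgebra.IsSolvable X := by
    obtain ⟨k, hk⟩ := LieAlgebra.IsSolvable.solvable F D
    rw [LieIdeal.derivedSeries_eq_bot_iff] at hk
    refine LieAlgebra.IsSolvable.mk (R := F) (k := k + 1) ((LieIdeal.derivedSeries_eq_bot_iff X (k + 1)).mpr ?_)
    rwa [LieAlgebra.derivedSeriesOfIdeal_add, LieAlgebra.derivedSeriesOfIdeal_succ,
      LieAlgebra.derivedSeriesOfIdeal_zero]
  have hX : X = ⊥ := LieAlgebra.HasTrivialRadical.eq_bot_of_isSolvable X
  have hmem : x ∈ J ⊔ Jc := hJ.sup_eq_top ▸ LieSubmodule.mem_top x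
  obtain ⟨j, hj, c, hc, rfl⟩ := (LieSubmodule.mem_sup _ _ _).1 hmem
  have hj0 : LieModule.toEnd F K U j = 0 := hj
  have hcR : c ∈ X := by
    refine ⟨?_, hc⟩
    have : j ∈ R := by
      rw [hRmem]
      refine LinearMap.ext fun z => ?_
      rw [LieModule.traceForm_apply_apply, hj0]; simp
    simpa using R.sub_mem hxR this
  rw [hX, LieSubmodule.mem_bot] at hcR
  rw [hcR, add_zero]; exact hj0

/-- The Casimir operator of the image of `K` in `End U`. It is not nilpotent, since its trace is the
dimension of that image, which is nonzero when `U` is not trivial. -/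
theorem exists_module_casimir {F K U : Type*} [Field F] [CharZero F]
    [LieRing K] [LieAlgebra F K]
    [AddCommGroup U] [Module F U] [LieRingModule K U] [LieModule F K U] [FiniteDimensional F U]
    (hS : ∀ x : K, (∀ y, LieModule.traceForm F K U x y = 0) → LieModule.toEnd F K U x = 0)
    (hnt : ¬ LieModule.IsTrivial K U) :
    ∃ T : End F U, (∀ y : End F U, (∀ x, ∃ x', y * LieModule.toEnd F K U x -
        LieModule.toEnd F K U x * y = LieModule.toEnd F K U x') → y * T = T * y) ∧
      (∀ u, T u ∈ Submodule.span F {w | ∃ (x : K) (v : U), ⁅x, v⁆ = w}) ∧ ¬ IsNilpotent T := by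
  obtain ⟨b, d, hb, hd, htr, hcomm⟩ := exists_casimir
    (LinearMap.range (LieModule.toEnd F K U : K →ₗ[F] End F U)) (by
      rintro _ ⟨x, rfl⟩ h
      exact hS x fun y => h _ ⟨y, rfl⟩)
  refine ⟨∑ i, b i * d i, ?_, ?_, ?_⟩
  · intro y hy
    refine hcomm y ?_
    rintro _ ⟨x, rfl⟩
    obtain ⟨x', hx'⟩ := hy x
    exact ⟨x', hx'.symm⟩
  · intro u
    rw [LinearMap.sum_apply]
    refine Submodule.sum_mem _ fun i _ => Submodule.subset_span ?_
    obtain ⟨x, hx⟩ := hb i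
    exact ⟨x, d i u, by rw [Module.End.mul_apply, ← hx]; rfl⟩
  · intro hnil
    rw [(LinearMap.isNilpotent_trace_of_isNilpotent hnil).eq_zero] at htr
    have h0 := Nat.cast_eq_zero.1 htr.symm
    rw [Submodule.finrank_eq_zero] at h0
    refine hnt ⟨fun x u => ?_⟩
    have : LieModule.toEnd F K U x ∈ LinearMap.range (LieModule.toEnd F K U : K →ₗ[F] End F U) :=
      ⟨x, rfl⟩
    rw [h0, Submodule.mem_bot] at this
    rw [← LieModule.toEnd_apply_apply F, this]; rfl

/-- A weak form of Weyl's theorem. -/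
theorem lieSplits_of_hasTrivialRadical (F K V : Type*) [Field F] [CharZero F]
    [LieRing K] [LieAlgebra F K] [FiniteDimensional F K] [LieAlgebra.HasTrivialRadical F K]
    [AddCommGroup V] [Module F V] [LieRingModule K V] [LieModule F K V] [FiniteDimensional F V] :
    LieSplits F K V := by
  refine lieSplits_of_endomorphism fun U hU => ?_
  obtain ⟨T, h1, h2, h3⟩ := exists_module_casimir (F := F) (K := K) (U := U)
    (fun x hx => toEnd_eq_zero_of_mem_ker_traceForm x hx) hU
  refine ⟨T, fun x u => ?_, h2, h3⟩
  have := h1 (LieModule.toEnd F K U x) fun y => ⟨⁅x, y⁆, by rw [LieHom.map_lie]; rfl⟩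
  exact (LinearMap.congr_fun this u).symm

/-! ### Reductive Lie algebras -/

/-- By Lie's theorem the radical has a weight space `N ≠ 0` in `V`. It is `K`-stable, so
`[K, rad K]` kills it, and induction applies to `V ⧸ N`. -/
theorem isNilpotent_toEnd_mul_of_mem_lie_radical (F K : Type*) [Field F] [IsAlgClosed F]
    [CharZero F] [LieRing K] [LieAlgebra F K] [FiniteDimensional F K]
    (V : Type*) [AddCommGroup V] [Module F V] [LieRingModule K V] [LieModule F K V]
    [FiniteDimensional F V] (d x : K)
    (hd : d ∈ ⁅(⊤ : LieIdeal F K), LieAlgebra.radical F K⁆) :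
    IsNilpotent (LieModule.toEnd F K V d * LieModule.toEnd F K V x) := by
  induction hn : finrank F V using Nat.strong_induction_on generalizing V with
  | _ m ih =>
  cases subsingleton_or_nontrivial V with
  | inl h => exact ⟨1, LinearMap.ext fun v => Subsingleton.elim _ _⟩
  | inr h =>
  obtain ⟨χ, hχ⟩ := LieModule.exists_nontrivial_weightSpace_of_isSolvable F
    (LieAlgebra.radical F K) V
  let N : LieSubmodule F K V := LieModule.weightSpaceOfIsLieTower F V χ
  have hN : ∀ v ∈ N, ∀ (r : K) (hr : r ∈ LieAlgebra.radical F K),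
      ⁅r, v⁆ = χ ⟨r, hr⟩ • v := by
    intro v hv r hr
    exact (LieModule.mem_weightSpace (χ := χ) v).1 hv ⟨r, hr⟩
  have hdN : ∀ v ∈ N, ⁅d, v⁆ = 0 := by
    intro v hv
    clear ih
    rw [← LieSubmodule.mem_toSubmodule, LieSubmodule.lieIdeal_oper_eq_linear_span'] at hd
    induction hd using Submodule.span_induction with
    | mem z hz =>
      obtain ⟨y, -, r, hr, rfl⟩ := hz
      rw [lie_lie, hN v hv r hr, hN _ (N.lie_mem hv) r hr, lie_smul, sub_self]
    | zero => simp
    | add a b _ _ ha hb => rw [add_lie, ha, hb, add_zero]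
    | smul c a _ ha => rw [smul_lie, ha, smul_zero]
  have hfin : finrank F (V ⧸ N) < m := by
    have h1 : 0 < finrank F N := by
      have : Nontrivial N := hχ
      exact finrank_pos
    have h2 : finrank F (V ⧸ N) + finrank F N = finrank F V :=
      Submodule.finrank_quotient_add_finrank N.toSubmodule
    omega
  obtain ⟨n, hn'⟩ := ih _ hfin (V ⧸ N) rfl
  have hmk : ∀ (k : ℕ) (v : V), LieSubmodule.Quotient.mk (N := N)
      (((LieModule.toEnd F K V d * LieModule.toEnd F K V x) ^ k) v) =
      ((LieModule.toEnd F K (V ⧸ N) d * LieModule.toEnd F K (V ⧸ N) x) ^ k)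
        (LieSubmodule.Quotient.mk v) := by
    intro k v
    induction k with
    | zero => simp
    | succ k ih =>
      rw [pow_succ', pow_succ', Module.End.mul_apply, Module.End.mul_apply,
        Module.End.mul_apply (LieModule.toEnd F K (V ⧸ N) d * _), ← ih]
      rfl
  refine ⟨n + 1, LinearMap.ext fun v => ?_⟩
  have h0 := hmk n v
  rw [hn', LinearMap.zero_apply, LieSubmodule.Quotient.mk_eq_zero'] at h0
  rw [pow_succ', Module.End.mul_apply, Module.End.mul_apply, LieModule.toEnd_apply_apply,
    LieModule.toEnd_apply_apply]
  exact hdN _ (N.lie_mem h0)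

/-- If the trace form of `V` is nondegenerate then `K` is reductive: `[K, rad K]` lies in the radical of
the trace form. -/
theorem radical_le_center_of_traceForm (F K V : Type*) [Field F] [IsAlgClosed F]
    [CharZero F] [LieRing K] [LieAlgebra F K] [FiniteDimensional F K]
    [AddCommGroup V] [Module F V] [LieRingModule K V] [LieModule F K V]
    [FiniteDimensional F V]
    (h : ∀ x : K, (∀ y, LieModule.traceForm F K V x y = 0) → x = 0) :
    LieAlgebra.radical F K ≤ LieAlgebra.center F K := by
  intro r hr
  rw [LieModule.mem_maxTrivSubmodule]
  intro y
  refine h _ fun x => ?_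
  rw [LieModule.traceForm_apply_apply]
  exact (LinearMap.isNilpotent_trace_of_isNilpotent
    (isNilpotent_toEnd_mul_of_mem_lie_radical F K V ⁅y, r⁆ x
      (LieSubmodule.lie_mem_lie (LieSubmodule.mem_top y) hr))).eq_zero

/-- A central element `z` of `[K, K]` acting semisimply acts by zero: each of its eigenspaces is
`K`-stable, and the trace of `z` on it vanishes since `z` is a sum of commutators, so the eigenvalue
is zero by characteristic `0`. -/
theorem toEnd_eq_zero_of_mem_center_of_mem_lie_top (F K V : Type*) [Field F] [IsAlgClosed F]
    [CharZero F] [LieRing K] [LieAlgebra F K]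
    [AddCommGroup V] [Module F V] [LieRingModule K V] [LieModule F K V]
    [FiniteDimensional F V] (z : K) (hz : z ∈ LieAlgebra.center F K)
    (hz' : z ∈ ⁅(⊤ : LieIdeal F K), (⊤ : LieIdeal F K)⁆)
    (hs : (LieModule.toEnd F K V z).IsSemisimple) : LieModule.toEnd F K V z = 0 := by
  have hcen : ∀ x : K, ⁅x, z⁆ = 0 := (LieModule.mem_maxTrivSubmodule F K K z).1 hz
  have key : ∀ μ : F, (LieModule.toEnd F K V z).eigenspace μ ≤
      LinearMap.ker (LieModule.toEnd F K V z) := by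
    intro μ v hv
    have hv' := Module.End.mem_eigenspace_iff.1 hv
    let U : LieSubmodule F K V :=
      { toSubmodule := (LieModule.toEnd F K V z).eigenspace μ
        lie_mem := by
          intro x u hu
          have hu : ⁅z, u⁆ = μ • u := Module.End.mem_eigenspace_iff.1 hu
          refine Module.End.mem_eigenspace_iff.2 ?_
          change ⁅z, ⁅x, u⁆⁆ = μ • ⁅x, u⁆
          rw [leibniz_lie z x u, ← lie_skew z x, hcen x, hu, lie_smul]; simp }
    have hU : LieModule.toEnd F K U z = μ • LinearMap.id := by
      ext u
      exact Module.End.mem_eigenspace_iff.1 u.2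
    have htr : LinearMap.trace F U (LieModule.toEnd F K U z) = 0 :=
      LieModule.trace_toEnd_eq_zero_of_mem_lcs F K U (le_refl 1) hz'
    rw [hU, map_smul, LinearMap.trace_id, smul_eq_mul, mul_eq_zero, Nat.cast_eq_zero] at htr
    rcases htr with h0 | h0
    · rw [LinearMap.mem_ker, hv', h0, zero_smul]
    · have h1 : U.toSubmodule = ⊥ := Submodule.finrank_eq_zero.1 h0
      have h2 : v ∈ U.toSubmodule := hv
      rw [h1, Submodule.mem_bot] at h2
      rw [h2]; exact zero_mem _
  have := iSup_le key
  rw [hs.iSup_eigenspace_eq_top, top_le_iff] at this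
  exact LinearMap.ker_eq_top.1 this

/-- A Lie algebra with nondegenerate trace form on `V` whose centre acts semisimply splits `V`.
If some central `z` acts nontrivially on a submodule, then `z` itself is the endomorphism required
by `lieSplits_of_endomorphism`. Otherwise the action factors through the semisimple algebra
`[K, K]`, whose Casimir operator serves, and commutes with all of `K` since `[K, K]` is an ideal. -/
theorem lieSplits_of_reductive (F K V : Type*) [Field F] [IsAlgClosed F]
    [CharZero F] [LieRing K] [LieAlgebra F K] [FiniteDimensional F K]
    [AddCommGroup V] [Module F V] [LieRingModule K V] [LieModule F K V]
    [FiniteDimensional F V]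
    (hnd : ∀ x : K, (∀ y, LieModule.traceForm F K V x y = 0) → x = 0)
    (hss : ∀ z ∈ LieAlgebra.center F K, (LieModule.toEnd F K V z).IsSemisimple) :
    LieSplits F K V := by
  have hrad := radical_le_center_of_traceForm F K V hnd
  have hcen : ∀ z ∈ LieAlgebra.center F K, ∀ x : K, ⁅x, z⁆ = 0 := fun z hz =>
    (LieModule.mem_maxTrivSubmodule F K K z).1 hz
  refine lieSplits_of_endomorphism fun U hU => ?_
  by_cases hz : ∃ z ∈ LieAlgebra.center F K, ∃ u : U, ⁅z, u⁆ ≠ 0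
  · obtain ⟨z, hz, u, hu⟩ := hz
    refine ⟨LieModule.toEnd F K U z, fun x u => ?_, fun u => Submodule.subset_span ⟨z, u, rfl⟩, ?_⟩
    · simp only [LieModule.toEnd_apply_apply]
      rw [leibniz_lie z x u, ← lie_skew z x, hcen z hz x]; simp
    · intro hnil
      have hs : (LieModule.toEnd F K U z).IsSemisimple :=
        (hss z hz).restrict (p := U.toSubmodule) (fun v hv => U.lie_mem hv)
      have := Module.End.eq_zero_of_isNilpotent_isSemisimple hnil hs
      exact hu (LinearMap.congr_fun this u)
  push Not at hz
  let s : LieIdeal F K := ⁅(⊤ : LieIdeal F K), (⊤ : LieIdeal F K)⁆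
  -- `K` is the direct sum of `s = [K, K]` and its centre
  have hdisj : ∀ x ∈ s, x ∈ LieAlgebra.center F K → x = 0 := by
    intro x hxs hxz
    have hx0 := toEnd_eq_zero_of_mem_center_of_mem_lie_top F K V x hxz hxs (hss x hxz)
    refine hnd x fun y => ?_
    rw [LieModule.traceForm_apply_apply, hx0]; simp
  have hBrefl : (LieModule.traceForm F K V).IsRefl := fun a b h => by
    rwa [LieModule.traceForm_comm]
  have hB : LinearMap.BilinForm.Nondegenerate (LieModule.traceForm F K V) :=
    (LinearMap.IsRefl.nondegenerate_iff_separatingLeft hBrefl).2 hnd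
  have hperp : LinearMap.BilinForm.orthogonal (LieModule.traceForm F K V) s.toSubmodule
      ≤ (LieAlgebra.center F K).toSubmodule := by
    intro x hx
    refine (LieModule.mem_maxTrivSubmodule F K K x).2 fun y => hnd _ fun w => ?_
    have := hx ⁅w, y⁆ (LieSubmodule.lie_mem_lie (LieSubmodule.mem_top w) (LieSubmodule.mem_top y))
    rw [LieModule.traceForm_comm, ← LieModule.traceForm_apply_lie_apply]
    exact this
  have htop : ∀ x : K, ∃ a ∈ s, ∃ z ∈ LieAlgebra.center F K, a + z = x := by
    intro x
    have h1 := LinearMap.BilinForm.finrank_orthogonal hB s.toSubmodule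
    have h2 := Submodule.finrank_mono hperp
    have h3 : Disjoint s.toSubmodule (LieAlgebra.center F K).toSubmodule := by
      rw [Submodule.disjoint_def]; exact hdisj
    have h4 : s.toSubmodule ⊔ (LieAlgebra.center F K).toSubmodule = ⊤ := by
      have := Submodule.finrank_le s.toSubmodule
      exact Submodule.eq_top_of_disjoint _ _ (by omega) h3
    exact Submodule.mem_sup.1 (h4 ▸ Submodule.mem_top)
  -- an abelian ideal of `s` is an ideal of `K`, hence lies in `rad K`, which is central
  have hsrad : LieAlgebra.HasTrivialRadical F s := by
    rw [LieAlgebra.hasTrivialRadical_iff_no_abelian_ideals]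
    intro I hI
    let I' : LieIdeal F K :=
      { toSubmodule := I.toSubmodule.map s.toSubmodule.subtype
        lie_mem := by
          rintro x _ ⟨i, hi, rfl⟩
          obtain ⟨a, ha, z, hz, rfl⟩ := htop x
          refine ⟨⁅(⟨a, ha⟩ : s), (show s from i)⁆, I.lie_mem hi, ?_⟩
          have : ⁅z, (i : K)⁆ = 0 := by rw [← lie_skew, hcen z hz, neg_zero]
          change ⁅a, (i : K)⁆ = ⁅a + z, (i : K)⁆
          rw [add_lie, this, add_zero] }
    have hab : IsLieAbelian I' := by
      refine ⟨?_⟩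
      rintro ⟨_, i, hi, rfl⟩ ⟨_, j, hj, rfl⟩
      have := hI.trivial ⟨i, hi⟩ ⟨j, hj⟩
      have h2 := congrArg (fun a : I => ((a : s) : K)) this
      exact Subtype.ext h2
    have hle : I' ≤ LieAlgebra.radical F K := by
      rw [← LieAlgebra.LieIdeal.solvable_iff_le_radical]
      exact LieAlgebra.ofAbelianIsSolvable I'
    rw [LieSubmodule.eq_bot_iff]
    intro i hi
    exact Subtype.ext (hdisj i i.2 (hrad (hle ⟨i, hi, rfl⟩)))
  have hnt : ¬ LieModule.IsTrivial s U := by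
    intro htr
    refine hU ⟨fun x u => ?_⟩
    obtain ⟨a, ha, z, hz', rfl⟩ := htop x
    rw [add_lie, hz z hz', add_zero]
    exact htr.trivial ⟨a, ha⟩ u
  obtain ⟨T, h1, h2, h3⟩ := exists_module_casimir (F := F) (K := s) (U := U)
    (fun x hx => toEnd_eq_zero_of_mem_ker_traceForm x hx) hnt
  refine ⟨T, fun x u => ?_, fun u => ?_, h3⟩
  · have := h1 (LieModule.toEnd F K U x) fun a => ⟨⟨⁅x, (a : K)⁆, s.lie_mem a.2⟩, by
      ext v
      change (⁅x, ⁅(a : K), v⁆⁆ - ⁅(a : K), ⁅x, v⁆⁆ : U).1 = (⁅⁅x, (a : K)⁆, v⁆ : U).1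
      rw [lie_lie]⟩
    exact (LinearMap.congr_fun this u).symm
  · refine Submodule.span_mono ?_ (h2 u)
    rintro _ ⟨a, v, rfl⟩
    exact ⟨a, v, rfl⟩

/-! ### The subalgebra spanned by an `sl₂`-triple -/

/-- A Lie algebra spanned by an `sl₂`-triple is semisimple: applying `(ad e)²` and `(ad f)²` to an
element of an abelian ideal shows that its coefficients vanish. -/
theorem hasTrivialRadical_of_isSl2Triple {F T : Type*} [Field F] [CharZero F]
    [LieRing T] [LieAlgebra F T] [FiniteDimensional F T] {h e f : T} (t : IsSl2Triple h e f)
    (hspan : ∀ x : T, ∃ a b c : F, x = a • e + b • f + c • h) :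
    LieAlgebra.HasTrivialRadical F T := by
  rw [LieAlgebra.hasTrivialRadical_iff_no_abelian_ideals]
  intro I hI
  have hab : ∀ x ∈ I, ∀ y ∈ I, ⁅x, y⁆ = 0 := fun x hx y hy =>
    congrArg Subtype.val (hI.trivial ⟨x, hx⟩ ⟨y, hy⟩)
  have hhe := t.lie_h_e_smul F
  have hhf := t.lie_lie_smul_f F
  have heh : ⁅e, h⁆ = -((2 : F) • e) := by rw [← lie_skew, hhe]
  have hfh : ⁅f, h⁆ = (2 : F) • f := by rw [← lie_skew, hhf, neg_neg]
  have hfe : ⁅f, e⁆ = -h := by rw [← lie_skew, t.lie_e_f]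
  have hh : h ∉ I := by
    intro hh
    have h1 : ⁅h, e⁆ ∈ I := lie_mem_left F T I h e hh
    have h2 := hab h hh _ h1
    rw [hhe, lie_smul, hhe, smul_smul] at h2
    exact t.e_ne_zero ((smul_eq_zero.1 h2).resolve_left (by norm_num))
  have he : e ∉ I := fun he => hh (t.lie_e_f ▸ lie_mem_left F T I e f he)
  have hf : f ∉ I := fun hf => hh (t.lie_e_f ▸ lie_mem_right F T I e f hf)
  rw [LieSubmodule.eq_bot_iff]
  intro x hx
  obtain ⟨a, b, c, rfl⟩ := hspan x
  have hb : b = 0 := by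
    have h1 : ⁅e, ⁅e, a • e + b • f + c • h⁆⁆ ∈ I := I.lie_mem (I.lie_mem hx)
    have h2 : ⁅e, ⁅e, a • e + b • f + c • h⁆⁆ = (-2 * b) • e := by
      simp only [lie_add, lie_smul, lie_self, t.lie_e_f, heh, smul_zero, lie_neg, lie_zero]
      module
    rw [h2] at h1
    by_contra hb
    exact he ((Submodule.smul_mem_iff I.toSubmodule (by simpa using hb)).1 h1)
  have ha : a = 0 := by
    have h1 : ⁅f, ⁅f, a • e + b • f + c • h⁆⁆ ∈ I := I.lie_mem (I.lie_mem hx)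
    have h2 : ⁅f, ⁅f, a • e + b • f + c • h⁆⁆ = (-2 * a) • f := by
      simp only [lie_add, lie_smul, lie_self, hfe, hfh, smul_zero, lie_neg, lie_zero]
      module
    rw [h2] at h1
    by_contra ha
    exact hf ((Submodule.smul_mem_iff I.toSubmodule (by simpa using ha)).1 h1)
  subst ha hb
  have hc : c = 0 := by
    by_contra hc
    exact hh ((Submodule.smul_mem_iff I.toSubmodule hc).1 (by simpa using hx))
  simp [hc]

theorem hasTrivialRadical_toLieSubalgebra {F L : Type*} [Field F] [CharZero F]
    [LieRing L] [LieAlgebra F L] [FiniteDimensional F L] {h e f : L} (t : IsSl2Triple h e f) :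
    LieAlgebra.HasTrivialRadical F (t.toLieSubalgebra F) := by
  have hmem : ∀ a b c : F, a • e + b • f + c • h ∈ t.toLieSubalgebra F := fun a b c =>
    IsSl2Triple.mem_toLieSubalgebra_iff.2 ⟨a, b, c, by rw [t.lie_e_f]⟩
  have t' : IsSl2Triple (L := t.toLieSubalgebra F) ⟨h, by simpa using hmem 0 0 1⟩
      ⟨e, by simpa using hmem 1 0 0⟩ ⟨f, by simpa using hmem 0 1 0⟩ :=
    { h_ne_zero := fun hh => t.h_ne_zero (congrArg Subtype.val hh)
      lie_e_f := Subtype.ext t.lie_e_f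
      lie_h_e_nsmul := Subtype.ext t.lie_h_e_nsmul
      lie_h_f_nsmul := Subtype.ext t.lie_h_f_nsmul }
  refine hasTrivialRadical_of_isSl2Triple t' ?_
  rintro ⟨x, hx⟩
  obtain ⟨a, b, c, hx'⟩ := IsSl2Triple.mem_toLieSubalgebra_iff.1 hx
  exact ⟨a, b, c, Subtype.ext (by rw [t.lie_e_f] at hx'; exact hx')⟩

/-! ### Jordan decomposition -/

open Module.End LieAlgebra in

/-- Abstract Jordan decomposition: the semisimple part of `ad x` is a derivation, hence inner. The
nilpotent part `n` commutes with every eigenvector of `ad x`. -/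
theorem exists_nilpotent_part {F L : Type*} [Field F] [IsAlgClosed F] [CharZero F]
    [LieRing L] [LieAlgebra F L] [FiniteDimensional F L] [LieAlgebra.IsKilling F L] (x : L) :
    ∃ n : L, IsNilpotent (ad F L n) ∧ (∀ (v : L) (c : F), ⁅x, v⁆ = c • v → ⁅n, v⁆ = 0) ∧
      (ad F L (x - n)).IsSemisimple := by
  obtain ⟨N, -, S, hS₀, hN, hS, hSN⟩ := (ad F L x).exists_isNilpotent_isSemisimple
  replace hS₀ : Commute (ad F L x) S := Algebra.commute_of_mem_adjoin_self hS₀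
  have hN' : N = ad F L x - S := eq_sub_of_add_eq hSN.symm
  have aux {μ : F} {y : L} (hy : y ∈ (ad F L x).maxGenEigenspace μ) : S y = μ • y := by
    rw [maxGenEigenspace_eq] at hy
    rw [apply_eq_of_mem_of_comm_of_isFinitelySemisimple_of_isNil hy hS₀ hS.isFinitelySemisimple
      (hN' ▸ hN)]
  have h_der (y z : L) : S ⁅y, z⁆ = ⁅S y, z⁆ + ⁅y, S z⁆ := by
    have htop := Module.End.iSup_maxGenEigenspace_eq_top (ad F L x)
    have hy : y ∈ ⨆ μ : F, (ad F L x).maxGenEigenspace μ := htop ▸ Submodule.mem_top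
    have hz : z ∈ ⨆ μ : F, (ad F L x).maxGenEigenspace μ := htop ▸ Submodule.mem_top
    induction hy using Submodule.iSup_induction' with
    | mem α y hy =>
      induction hz using Submodule.iSup_induction' with
      | mem β z hz =>
        have hyz : ⁅y, z⁆ ∈ (ad F L x).maxGenEigenspace (α + β) :=
          LieModule.lie_mem_maxGenEigenspace_toEnd hy hz
        rw [aux hy, aux hz, aux hyz, smul_lie, lie_smul, ← add_smul]
      | zero => simp
      | add _ _ _ _ h h' => simp only [lie_add, map_add, h, h']; abel
    | zero => simp
    | add _ _ _ _ h h' => simp only [add_lie, map_add, h, h']; abel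
  let S' : LieDerivation F L L := ⟨S, fun y z => by rw [h_der, ← lie_skew (S y) z]; abel⟩
  obtain ⟨y, hy⟩ := LieDerivation.IsKilling.exists_eq_ad S'
  have hSy : S = ad F L y := by rw [← LieDerivation.coe_ad_apply_eq_ad_apply y, hy]
  refine ⟨x - y, ?_, fun v c hv => ?_, ?_⟩
  · rw [map_sub, ← hSy, ← hN']; exact hN
  · have : v ∈ (ad F L x).maxGenEigenspace c :=
      (Module.End.genEigenspace_le_maximal _ _ 1) (by simpa [Module.End.mem_eigenspace_iff] using hv)
    have h1 := aux this
    rw [hSy, ad_apply] at h1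
    rw [sub_lie, hv, h1, sub_self]
  · rw [sub_sub_cancel, ← hSy]; exact hS

/-! ### The centraliser of an `sl₂`-triple -/

/-- The centraliser of `{e, h, f}` in `L`; for an `sl₂`-triple this is `g(0)_e`. -/
def sl2Centralizer (F : Type*) {L : Type*} [CommRing F] [LieRing L] [LieAlgebra F L] (e h f : L) :
    LieSubalgebra F L where
  carrier := {x | ⁅x, e⁆ = 0 ∧ ⁅x, h⁆ = 0 ∧ ⁅x, f⁆ = 0}
  add_mem' := by
    rintro a b ⟨h1, h2, h3⟩ ⟨h4, h5, h6⟩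
    simp [h1, h2, h3, h4, h5, h6]
  zero_mem' := by simp
  smul_mem' := by
    rintro c a ⟨h1, h2, h3⟩
    simp [h1, h2, h3]
  lie_mem' := by
    rintro a b ⟨h1, h2, h3⟩ ⟨h4, h5, h6⟩
    refine ⟨?_, ?_, ?_⟩ <;> rw [lie_lie] <;> simp [h1, h2, h3, h4, h5, h6]

/-- Vectors of `L` fixed by `K` are Killing-orthogonal to `[K, U]`, by invariance of the form. -/
theorem killingForm_eq_zero_of_mem_maxTriv {F L : Type*} [Field F]
    [LieRing L] [LieAlgebra F L] (K : LieSubalgebra F L)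
    (U : LieSubmodule F K L) {v w : L} (hv : v ∈ LieModule.maxTrivSubmodule F K L)
    (hw : w ∈ ⁅(⊤ : LieIdeal F K), U⁆) : killingForm F L v w = 0 := by
  rw [← LieSubmodule.mem_toSubmodule, LieSubmodule.lieIdeal_oper_eq_linear_span'] at hw
  induction hw using Submodule.span_induction with
  | mem z hz =>
    obtain ⟨x, -, u, -, rfl⟩ := hz
    have h1 : ⁅(x : L), v⁆ = 0 := (LieModule.mem_maxTrivSubmodule F K L v).1 hv x
    have h2 : ⁅v, (x : L)⁆ = 0 := by rw [← lie_skew, h1, neg_zero]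
    change killingForm F L v ⁅(x : L), u⁆ = 0
    rw [← LieModule.traceForm_apply_lie_apply, h2]; simp
  | zero => simp
  | add a b _ _ ha hb => rw [map_add, ha, hb, add_zero]
  | smul c a _ ha => rw [map_smul, ha, smul_zero]

/-- If `L = L^K + [K, L]`, then the Killing form of `L` is nondegenerate on the invariants `L^K`. -/
theorem eq_zero_of_mem_maxTriv_of_killingForm {F L : Type*} [Field F]
    [LieRing L] [LieAlgebra F L] [FiniteDimensional F L] [LieAlgebra.IsKilling F L]
    (K : LieSubalgebra F L) (hK : LieSplits F K L) {v : L}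
    (hv : v ∈ LieModule.maxTrivSubmodule F K L)
    (hw : ∀ w ∈ LieModule.maxTrivSubmodule F K L, killingForm F L v w = 0) : v = 0 := by
  have : v ∈ LinearMap.ker (killingForm F L) := by
    refine LinearMap.ext fun y => ?_
    obtain ⟨a, ha, b, hb, rfl⟩ := (LieSubmodule.mem_sup _ _ _).1 (hK ⊤ (LieSubmodule.mem_top y))
    rw [map_add, hw a ha, killingForm_eq_zero_of_mem_maxTriv K ⊤ hv hb]; simp
  rwa [LieAlgebra.IsKilling.ker_killingForm_eq_bot, Submodule.mem_bot] at this

section Sl2Centralizer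
variable {F L : Type*} [Field F] [CharZero F] [LieRing L] [LieAlgebra F L] [FiniteDimensional F L]
    [LieAlgebra.IsKilling F L] {e h f : L}

/-- The Killing form of `L` is nondegenerate on the centraliser of an `sl₂`-triple, since this
centraliser is the space of invariants of the semisimple algebra spanned by the triple. -/
theorem traceForm_sl2Centralizer_nondegenerate (t : IsSl2Triple h e f)
    (x : sl2Centralizer F e h f)
    (hx : ∀ y, LieModule.traceForm F (sl2Centralizer F e h f) L x y = 0) : x = 0 := by
  have := hasTrivialRadical_toLieSubalgebra (F := F) t
  have hsplit := lieSplits_of_hasTrivialRadical F (t.toLieSubalgebra F) L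
  have hmem : ∀ a b c : F, a • e + b • f + c • ⁅e, f⁆ ∈ t.toLieSubalgebra F := fun a b c =>
    IsSl2Triple.mem_toLieSubalgebra_iff.2 ⟨a, b, c, rfl⟩
  have hiff : ∀ v, v ∈ LieModule.maxTrivSubmodule F (t.toLieSubalgebra F) L →
      v ∈ sl2Centralizer F e h f := by
    intro v hv
    rw [LieModule.mem_maxTrivSubmodule] at hv
    have key : ∀ u ∈ t.toLieSubalgebra F, ⁅v, u⁆ = 0 := fun u hu => by
      rw [← lie_skew]; exact neg_eq_zero.2 (hv ⟨u, hu⟩)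
    exact ⟨key e (by simpa using hmem 1 0 0), key h (by simpa [t.lie_e_f] using hmem 0 0 1),
      key f (by simpa using hmem 0 1 0)⟩
  refine Subtype.ext (eq_zero_of_mem_maxTriv_of_killingForm (t.toLieSubalgebra F) hsplit ?_ ?_)
  · rw [LieModule.mem_maxTrivSubmodule]
    rintro ⟨u, hu⟩
    obtain ⟨a, b, c, rfl⟩ := IsSl2Triple.mem_toLieSubalgebra_iff.1 hu
    obtain ⟨h1, h2, h3⟩ := x.2
    change ⁅a • e + b • f + c • ⁅e, f⁆, (x : L)⁆ = 0
    rw [← lie_skew, t.lie_e_f]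
    simp [h1, h2, h3]
  · intro w hw
    exact hx ⟨w, hiff w hw⟩

/-- If `x` commutes with the centraliser `k` of the triple and has `e`, `h`, `f` as eigenvectors, then
`ad x` is semisimple: the nilpotent part `n` of `x` lies in `k` and commutes with `k`, so `n` is in
the radical of the trace form of `k`, which is zero. Both `h` and the centre of `k` satisfy the
hypotheses. -/
theorem isSemisimple_ad_of_centralizes [IsAlgClosed F] (t : IsSl2Triple h e f) (x : L)
    (hx : ∀ y ∈ sl2Centralizer F e h f, ⁅x, y⁆ = 0)
    (he : ∃ c : F, ⁅x, e⁆ = c • e) (hh : ∃ c : F, ⁅x, h⁆ = c • h) (hf : ∃ c : F, ⁅x, f⁆ = c • f) :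
    (LieAlgebra.ad F L x).IsSemisimple := by
  obtain ⟨n, hn, hv, hs⟩ := exists_nilpotent_part (F := F) x
  obtain ⟨a, ha⟩ := he
  obtain ⟨b, hb⟩ := hh
  obtain ⟨c, hc⟩ := hf
  have hnk : n ∈ sl2Centralizer F e h f := ⟨hv e a ha, hv h b hb, hv f c hc⟩
  have h0 : (⟨n, hnk⟩ : sl2Centralizer F e h f) = 0 := by
    refine traceForm_sl2Centralizer_nondegenerate t _ fun y => ?_
    have hny : ⁅n, (y : L)⁆ = 0 := hv y 0 (by rw [hx y y.2, zero_smul])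
    change LinearMap.trace F L (LieAlgebra.ad F L n * LieAlgebra.ad F L (y : L)) = 0
    have hcomm : Commute (LieAlgebra.ad F L n) (LieAlgebra.ad F L (y : L)) := by
      rw [commute_iff_lie_eq, ← LieHom.map_lie, hny, map_zero]
    exact (LinearMap.isNilpotent_trace_of_isNilpotent (hcomm.isNilpotent_mul_right hn)).eq_zero
  have : n = 0 := congrArg Subtype.val h0
  rwa [this, sub_zero] at hs

theorem lieSplits_sl2Centralizer [IsAlgClosed F] (t : IsSl2Triple h e f) :
    LieSplits F (sl2Centralizer F e h f) L := by
  refine lieSplits_of_reductive F _ L (traceForm_sl2Centralizer_nondegenerate t) fun z hz => ?_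
  obtain ⟨h1, h2, h3⟩ := z.2
  refine isSemisimple_ad_of_centralizes t (z : L) (fun y hy => ?_) ⟨0, by simpa using h1⟩
    ⟨0, by simpa using h2⟩ ⟨0, by simpa using h3⟩
  have := (LieModule.mem_maxTrivSubmodule F _ _ z).1 hz ⟨y, hy⟩
  rw [← lie_skew]
  exact neg_eq_zero.2 (congrArg Subtype.val this)

theorem isSemisimple_ad_h [IsAlgClosed F] (t : IsSl2Triple h e f) :
    (LieAlgebra.ad F L h).IsSemisimple := by
  refine isSemisimple_ad_of_centralizes t h (fun y hy => ?_) ⟨2, t.lie_h_e_smul F⟩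
    ⟨0, by simp⟩ ⟨-2, by rw [t.lie_lie_smul_f F, neg_smul]⟩
  rw [← lie_skew, hy.2.1, neg_zero]

end Sl2Centralizer

/-! ### Comparison of weights -/

/-- The linear span of all brackets `⁅a, b⁆` with `a ∈ A` and `b ∈ B`. -/
def bracketSpan (F : Type*) {L : Type*} [CommRing F] [LieRing L] [LieAlgebra F L]
    (A B : Set L) : Submodule F L :=
  Submodule.span F {z : L | ∃ a ∈ A, ∃ b ∈ B, z = ⁅a, b⁆}

theorem exists_nat_of_lie_eq_zero {F L : Type*} [Field F] [CharZero F] [LieRing L]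
    [LieAlgebra F L] [FiniteDimensional F L] {e h f : L} (t : IsSl2Triple h e f)
    {x : L} {μ : F} (hx : ⁅e, x⁆ = 0) (hμ : ⁅h, x⁆ = μ • x) :
    x = 0 ∨ ∃ n : ℕ, μ = n := by
  by_cases h0 : x = 0
  · exact Or.inl h0
  · exact Or.inr (IsSl2Triple.HasPrimitiveVectorWith.exists_nat
      (t := t) (m := x) (μ := μ) ⟨h0, hμ, hx⟩)

/-- A vector killed by `e` and `h` is a highest weight vector of weight `0`, so `f` kills it too. -/
theorem mem_sl2Centralizer_of_lie_eq_zero {F L : Type*} [Field F] [CharZero F] [LieRing L]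
    [LieAlgebra F L] [FiniteDimensional F L] {e h f : L} (t : IsSl2Triple h e f)
    {x : L} (hx : ⁅e, x⁆ = 0) (hh : ⁅h, x⁆ = 0) : x ∈ sl2Centralizer F e h f := by
  have hf : ⁅f, x⁆ = 0 := by
    by_cases h0 : x = 0
    · rw [h0, lie_zero]
    · have P : IsSl2Triple.HasPrimitiveVectorWith t x (0 : F) := ⟨h0, by simp [hh], hx⟩
      simpa using P.pow_toEnd_f_eq_zero_of_eq_nat (n := 0) (by simp)
  refine ⟨?_, ?_, ?_⟩ <;> rw [← lie_skew, neg_eq_zero] <;> assumption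

/-- If `e ∈ [g_e, g_e]` then `e ∈ [g(0)_e, g] + [g(1)_e, g(1)_e]`. The eigenvalues of `h` on `g_e` are
natural numbers and `e` has eigenvalue `2 = 0 + 2 = 1 + 1 = 2 + 0`, so only brackets of these
weights contribute to the component of eigenvalue `2`. -/
theorem mem_sup_of_mem_derived {F L : Type*} [Field F] [IsAlgClosed F] [CharZero F] [LieRing L]
    [LieAlgebra F L] [FiniteDimensional F L] [LieAlgebra.IsKilling F L] {e h f : L}
    (t : IsSl2Triple h e f)
    (he : e ∈ bracketSpan F {y : L | ⁅e, y⁆ = 0} {y : L | ⁅e, y⁆ = 0}) :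
    e ∈ bracketSpan F (sl2Centralizer F e h f : Set L) Set.univ ⊔
      bracketSpan F {x : L | ⁅h, x⁆ = (1 : F) • x ∧ ⁅e, x⁆ = 0}
        {x : L | ⁅h, x⁆ = (1 : F) • x ∧ ⁅e, x⁆ = 0} := by
  set S := bracketSpan F (sl2Centralizer F e h f : Set L) Set.univ ⊔
      bracketSpan F {x : L | ⁅h, x⁆ = (1 : F) • x ∧ ⁅e, x⁆ = 0}
        {x : L | ⁅h, x⁆ = (1 : F) • x ∧ ⁅e, x⁆ = 0} with hS
  let D := LieAlgebra.ad F L h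
  have hD : ∀ (μ : F) (x : L), x ∈ D.eigenspace μ ↔ ⁅h, x⁆ = μ • x := fun μ x =>
    Module.End.mem_eigenspace_iff
  let S2 : Submodule F L := S ⊓ D.eigenspace 2
  -- `Q` collects the eigenspaces of `ad h` other than that of `2`
  let Q : Submodule F L := ⨆ μ : F, ⨆ (_ : μ ≠ 2), D.eigenspace μ
  have hadd : ∀ (i j : F) (a b : L), ⁅h, a⁆ = i • a → ⁅h, b⁆ = j • b →
      ⁅h, ⁅a, b⁆⁆ = (i + j) • ⁅a, b⁆ := by
    intro i j a b ha hb
    rw [leibniz_lie, ha, hb, smul_lie, lie_smul, ← add_smul]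
  have hhom : ∀ (i j : F) (a b : L), ⁅e, a⁆ = 0 → ⁅h, a⁆ = i • a → ⁅e, b⁆ = 0 →
      ⁅h, b⁆ = j • b → ⁅a, b⁆ ∈ S2 ⊔ Q := by
    intro i j a b hea hha heb hhb
    have hij := hadd i j a b hha hhb
    by_cases h2 : i + j = 2
    · refine Submodule.mem_sup_left ⟨?_, (hD _ _).2 (h2 ▸ hij)⟩
      rcases exists_nat_of_lie_eq_zero t hea hha with rfl | ⟨m, rfl⟩
      · rw [zero_lie]; exact zero_mem _
      rcases exists_nat_of_lie_eq_zero t heb hhb with rfl | ⟨n, rfl⟩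
      · rw [lie_zero]; exact zero_mem _
      have hmn : m + n = 2 := by exact_mod_cast h2
      obtain ⟨rfl, rfl⟩ | ⟨rfl, rfl⟩ | ⟨rfl, rfl⟩ :
        (m = 0 ∧ n = 2) ∨ (m = 1 ∧ n = 1) ∨ (m = 2 ∧ n = 0) := by omega
      · exact Submodule.mem_sup_left (Submodule.subset_span
          ⟨a, mem_sl2Centralizer_of_lie_eq_zero t hea (by simpa using hha), b, trivial, rfl⟩)
      · exact Submodule.mem_sup_right (Submodule.subset_span
          ⟨a, ⟨by simpa using hha, hea⟩, b, ⟨by simpa using hhb, heb⟩, rfl⟩)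
      · rw [← lie_skew]
        exact neg_mem (Submodule.mem_sup_left (Submodule.subset_span
          ⟨b, mem_sl2Centralizer_of_lie_eq_zero t heb (by simpa using hhb), a, trivial, rfl⟩))
    · exact Submodule.mem_sup_right
        (Submodule.mem_iSup_of_mem (i + j) (Submodule.mem_iSup_of_mem h2 ((hD _ _).2 hij)))
  let Z : Submodule F L := LinearMap.ker (LieAlgebra.ad F L e)
  have hZ : ∀ a, ⁅e, a⁆ = 0 → a ∈ ⨆ μ : F, Z ⊓ D.eigenspace μ := by
    intro a ha
    have hstab : ∀ x ∈ Z, D x ∈ Z := by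
      intro x hx
      have hx : ⁅e, x⁆ = 0 := hx
      change ⁅e, ⁅h, x⁆⁆ = 0
      rw [leibniz_lie, ← lie_skew e h, t.lie_h_e_smul F, hx]
      simp [hx]
    have h1 := Submodule.inf_iSup_genEigenspace hstab 1
    have h2 : ⨆ μ : F, D.genEigenspace μ 1 = ⊤ := (isSemisimple_ad_h t).iSup_eigenspace_eq_top
    rw [h2, inf_top_eq] at h1
    exact h1.le ha
  have hle : e ∈ S2 ⊔ Q := by
    refine Submodule.span_le.2 ?_ he
    rintro _ ⟨a, ha, b, hb, rfl⟩
    replace ha := hZ a ha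
    replace hb := hZ b hb
    change ⁅a, b⁆ ∈ S2 ⊔ Q
    induction ha using Submodule.iSup_induction' with
    | mem i a ha =>
      induction hb using Submodule.iSup_induction' with
      | mem j b hb => exact hhom i j a b ha.1 ((hD _ _).1 ha.2) hb.1 ((hD _ _).1 hb.2)
      | zero => simp
      | add _ _ _ _ h1 h2 => rw [lie_add]; exact add_mem h1 h2
    | zero => simp
    | add _ _ _ _ h1 h2 => rw [add_lie]; exact add_mem h1 h2
  obtain ⟨s, hs, q, hq, hsq⟩ := Submodule.mem_sup.1 hle
  have hdis := D.eigenspaces_iSupIndep 2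
  have hq2 : q ∈ D.eigenspace 2 := by
    rw [← eq_sub_iff_add_eq'] at hsq
    rw [hsq]
    exact sub_mem ((hD _ _).2 (t.lie_h_e_smul F)) hs.2
  have hq0 : q = 0 := Submodule.disjoint_def.1 hdis q hq2 hq
  rw [hq0, add_zero] at hsq
  exact hsq ▸ hs.1

/-- Put `k = g(0)_e` and `N = [g(1)_e, g(1)_e]`, and write `e = m + w` with `m ∈ [k, g]` and `w ∈ N`.
Splitting `w = w₀ + w₁` with `w₀ ∈ N` invariant under `k` and `w₁ ∈ [k, N]`, the vector `e - w₀` is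
`k`-invariant and lies in `[k, g]`; the Killing form forces it to vanish, so `e = w₀ ∈ N`. -/
theorem mem_span_of_mem_derived {F L : Type*} [Field F] [IsAlgClosed F] [CharZero F] [LieRing L]
    [LieAlgebra F L] [FiniteDimensional F L] [LieAlgebra.IsKilling F L] {e h f : L}
    (t : IsSl2Triple h e f)
    (he : e ∈ bracketSpan F {y : L | ⁅e, y⁆ = 0} {y : L | ⁅e, y⁆ = 0}) :
    e ∈ bracketSpan F {x : L | ⁅h, x⁆ = (1 : F) • x ∧ ⁅e, x⁆ = 0}
        {x : L | ⁅h, x⁆ = (1 : F) • x ∧ ⁅e, x⁆ = 0} := by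
  let K := sl2Centralizer F e h f
  let N : LieSubmodule F K L :=
    { toSubmodule := bracketSpan F {x : L | ⁅h, x⁆ = (1 : F) • x ∧ ⁅e, x⁆ = 0}
        {x : L | ⁅h, x⁆ = (1 : F) • x ∧ ⁅e, x⁆ = 0}
      lie_mem := by
        rintro ⟨x, hx1, hx2, hx3⟩ n hn
        have hxe : ⁅e, x⁆ = 0 := by rw [← lie_skew, hx1, neg_zero]
        have hxh : ⁅h, x⁆ = 0 := by rw [← lie_skew, hx2, neg_zero]
        have hst : ∀ a : L, (⁅h, a⁆ = (1 : F) • a ∧ ⁅e, a⁆ = 0) →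
            (⁅h, ⁅x, a⁆⁆ = (1 : F) • ⁅x, a⁆ ∧ ⁅e, ⁅x, a⁆⁆ = 0) := by
          rintro a ⟨h1, h2⟩
          constructor
          · rw [leibniz_lie, hxh, h1, zero_lie, zero_add, lie_smul]
          · rw [leibniz_lie, hxe, h2, zero_lie, zero_add, lie_zero]
        change ⁅x, n⁆ ∈ bracketSpan F _ _
        replace hn : n ∈ bracketSpan F _ _ := hn
        induction hn using Submodule.span_induction with
        | mem z hz =>
          obtain ⟨a, ha, b, hb, rfl⟩ := hz
          rw [leibniz_lie]
          exact add_mem (Submodule.subset_span ⟨_, hst a ha, b, hb, rfl⟩)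
            (Submodule.subset_span ⟨a, ha, _, hst b hb, rfl⟩)
        | zero => simp
        | add a b _ _ ha hb => rw [lie_add]; exact add_mem ha hb
        | smul c a _ ha => rw [lie_smul]; exact Submodule.smul_mem _ c ha }
  change e ∈ N
  have hsplit : LieSplits F K L := lieSplits_sl2Centralizer t
  obtain ⟨m, hm, w, hw, hmw⟩ := Submodule.mem_sup.1 (mem_sup_of_mem_derived t he)
  have hm' : m ∈ ⁅(⊤ : LieIdeal F K), (⊤ : LieSubmodule F K L)⁆ := by
    refine Submodule.span_le
      (p := (⁅(⊤ : LieIdeal F K), (⊤ : LieSubmodule F K L)⁆ : LieSubmodule F K L).toSubmodule).2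
      ?_ hm
    rintro _ ⟨a, ha, b, -, rfl⟩
    exact LieSubmodule.lie_mem_lie (x := (⟨a, ha⟩ : K)) (LieSubmodule.mem_top _)
      (LieSubmodule.mem_top b)
  obtain ⟨w0, hw0, w1, hw1, rfl⟩ := (LieSubmodule.mem_sup _ _ _).1 (hsplit N hw)
  have hw1N : w1 ∈ N := LieSubmodule.lie_le_right N ⊤ hw1
  have hw0N : w0 ∈ N := by simpa using sub_mem (show w0 + w1 ∈ N from hw) hw1N
  have hetriv : e ∈ LieModule.maxTrivSubmodule F K L := by
    rw [LieModule.mem_maxTrivSubmodule]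
    exact fun x => x.2.1
  have hv : e - w0 = 0 := by
    refine eq_zero_of_mem_maxTriv_of_killingForm K hsplit (sub_mem hetriv hw0) fun u hu => ?_
    have hmem : e - w0 ∈ ⁅(⊤ : LieIdeal F K), (⊤ : LieSubmodule F K L)⁆ := by
      have : e - w0 = m + w1 := by rw [← hmw]; abel
      rw [this]
      exact add_mem hm' (LieSubmodule.mono_lie_right _ le_top hw1)
    have := killingForm_eq_zero_of_mem_maxTriv K _ hu hmem
    rwa [LieModule.traceForm_comm] at this
  rw [sub_eq_zero.1 hv]
  exact hw0N

end AssociativeLie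

/-- `e ∈ [g_e, g_e]` iff `e ∈ [g(1)_e, g(1)_e]`. -/
theorem reachable_iff_reachable_via_g1e
    (F : Type*) [Field F] [IsAlgClosed F] [CharZero F]
    (L : Type*) [LieRing L] [LieAlgebra F L] [FiniteDimensional F L]
    [LieAlgebra.IsSemisimple F L]
    (e h f : L)
    (t1 : ⁅h, e⁆ = (2 : F) • e) (t2 : ⁅h, f⁆ = (-2 : F) • f) (t3 : ⁅e, f⁆ = h)
    (ge : Set L) (hge : ge = {y : L | ⁅e, y⁆ = 0})
    (g1e : Set L) (hg1e : g1e = {x : L | ⁅h, x⁆ = (1 : F) • x ∧ ⁅e, x⁆ = 0}) :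
    e ∈ Submodule.span F {z : L | ∃ a ∈ ge, ∃ b ∈ ge, z = ⁅a, b⁆}
      ↔ e ∈ Submodule.span F {z : L | ∃ a ∈ g1e, ∃ b ∈ g1e, z = ⁅a, b⁆} := by
  subst hge hg1e
  constructor
  · intro he
    -- `IsSl2Triple` requires `h ≠ 0`; for `h = 0` also `e = 0`
    by_cases hh : h = 0
    · have h2 : (2 : F) • e = 0 := by rw [← t1, hh, zero_lie]
      rw [(smul_eq_zero.1 h2).resolve_left two_ne_zero]
      exact zero_mem _
    · have t : IsSl2Triple h e f :=
        { h_ne_zero := hh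
          lie_e_f := t3
          lie_h_e_nsmul := by rw [t1, two_smul, two_nsmul]
          lie_h_f_nsmul := by rw [t2, neg_smul, two_smul, two_nsmul] }
      exact mem_span_of_mem_derived t he
  · refine fun he => Submodule.span_mono ?_ he
    rintro _ ⟨a, ha, b, hb, rfl⟩
    exact ⟨a, ha.2, b, hb.2, rfl⟩
end

section
/- Let F be an algebraically closed field of characteristic 0, V a finite-dimensional F-vector space, B a nondegenerate bilinear form on V with B(v,w) = ε·B(w,v) for all v, w (ε = ±1), and g the Lie algebra of B-skew-adjoint endomorphisms of V. Let e ∈ g be nilpotent and reachable, i.e., e ∈ [g_e, g_e], and let (e, h, f) be an sl2-triple in g. Then [g(1)_e, g(1)_e] = g(2)_e. -/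
/-!
Under the `sl₂`-triple, `V` is spanned by strings `w, e w, …, e ^ d w` through lowest weight
vectors `w` of weight `-d` (`span_strings`), and `⟨v, w⟩ = B(v, e ^ d w)` is a nondegenerate form
on the space `lowest h f d` of such vectors. For lowest weight vectors `v`, `w` of weights `-d`,
`-c` and `N ≥ max d c`, the string map

  `strMap B e N v w : z ↦ ∑_{i + j = N} B(v, e ^ i z) e ^ j w`

commutes with `e` and has degree `2 N - d - c` for `ad h`. String maps obey a simple
multiplication rule (`strMap_mul`), the identity is a combination of them (`one_mem_span`), and
expanding `y = 1 * y * 1` shows that they span the centraliser of `e`, degree by degree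
(`centralizer_mem_span`, `centralizer_two_mem_span`). The string map of `v`, `w` has, up to sign,
the one of `w`, `v` as its adjoint, so the centraliser of `e` in `so(V)` or `sp(V)` is spanned by
the differences `skewStr B ε e N v w`.

If `e` is reachable, the set of weights `d` with `lowest h f d ≠ ⊥` is an initial segment of `ℕ`
(`no_gap`): at a gap `a`, the trace of the coefficient of `e` on the strings of length `> a + 1`
is a functional which vanishes on all commutators of the centraliser and counts those strings
when evaluated at `e`, so that there are none.

The degree two elements are the `skewStr B ε e N v w` with `N = d + 1` for `v`, `w` of the same
weight `-d`, or with `N = d + 2` for weights `-d` and `-(d + 2)`. Since there are no gaps, the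
latter are brackets of two degree one elements through a vector of the intermediate weight
(`bracket_jump`). A bracket of two elements joining the weights `-d` and `-(d + 1)` is a
combination of an element of the former kind for `d` and one for `d + 1` (`bracket_adjacent`), and
induction on `d`, starting from the vanishing of `skewStr B ε e 1` on vectors of weight `0`,
produces all of them.
-/

open Module

namespace ReachableNilpotent

open Finset

variable {F : Type*} [Field F] {V : Type*} [AddCommGroup V] [Module F V]

/-- An `sl₂`-triple `(e, h, f)` with `e` nilpotent, consisting of endomorphisms that are
skew-adjoint for a nondegenerate form `B` with `B v w = ε * B w v`, `ε = ±1`. The commutation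
relations are stated pointwise. -/
structure FormTriple (B : LinearMap.BilinForm F V) (ε : F) (e h f : End F V) : Prop where
  nondeg : B.Nondegenerate
  eps : ε * ε = 1
  symm : ∀ v w, B v w = ε * B w v
  skew_e : ∀ v w, B (e v) w = - B v (e w)
  skew_h : ∀ v w, B (h v) w = - B v (h w)
  skew_f : ∀ v w, B (f v) w = - B v (f w)
  nil : IsNilpotent e
  he : ∀ v, h (e v) = e (h v) + (2 : F) • e v
  hf : ∀ v, h (f v) = f (h v) - (2 : F) • f v
  ef : ∀ v, e (f v) = f (e v) + h v

/-- The space of lowest weight vectors of weight `-d`. -/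
def lowest (h f : End F V) (d : ℕ) : Submodule F V where
  carrier := {v | f v = 0 ∧ h v = -(d : F) • v}
  add_mem' := by
    rintro a b ⟨ha, ha'⟩ ⟨hb, hb'⟩
    exact ⟨by simp [ha, hb], by rw [map_add, ha', hb', smul_add]⟩
  zero_mem' := by simp
  smul_mem' := by
    rintro c a ⟨ha, ha'⟩
    exact ⟨by simp [ha], by rw [map_smul, ha', smul_comm]⟩

namespace FormTriple

variable {B : LinearMap.BilinForm F V} {ε : F} {e h f : End F V}

/-! ### Decomposition of `V` into strings -/

lemma h_pow (T : FormTriple B ε e h f) (k : ℕ) (v : V) :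
    h ((e ^ k) v) = (e ^ k) (h v) + (2 * k : F) • (e ^ k) v := by
  induction k with
  | zero => simp
  | succ k ih =>
    rw [pow_succ', Module.End.mul_apply, T.he, ih, Module.End.mul_apply]
    push_cast
    simp only [map_add, map_smul]
    module

/-- On `ker (e f)`, which contains `ker f`, the operator `f` lowers the `e`-strings as it does for
a lowest weight vector. -/
lemma f_pow_succ (T : FormTriple B ε e h f) (y : V) (hy : e (f y) = 0) (k : ℕ) :
    f ((e ^ (k + 1)) y) = -((k : F) + 1) • (e ^ k) (h y + (k : F) • y) := by
  induction k with
  | zero =>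
    have := T.ef y
    rw [hy] at this
    simp only [zero_add, pow_one, pow_zero, Module.End.one_apply, Nat.cast_zero, zero_smul, add_zero,
      neg_smul, one_smul]
    exact eq_neg_of_add_eq_zero_left this.symm
  | succ k ih =>
    have h1 := T.ef ((e ^ (k + 1)) y)
    rw [ih, T.h_pow, map_smul, ← Module.End.mul_apply, ← pow_succ'] at h1
    rw [pow_succ' e (k + 1), Module.End.mul_apply]
    rw [← sub_eq_iff_eq_add] at h1
    rw [← h1]
    simp only [map_add, map_smul]
    push_cast
    module

/-- The weight of a lowest weight vector lies in `{0, -1, -2, …}`. -/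
lemma eq_zero_of_pow [CharZero F] (T : FormTriple B ε e h f) {y : V} {μ : F}
    (hy : f y = 0) (hμ : h y = μ • y) (hn : ∀ k : ℕ, μ + k ≠ 0) : y = 0 := by
  obtain ⟨n, hn0⟩ := T.nil
  have key : ∀ k, (e ^ k) y = 0 → y = 0 := by
    intro k
    induction k with
    | zero => simp
    | succ k ih =>
      intro h0
      apply ih
      have h1 := T.f_pow_succ y (by simp [hy]) k
      rw [h0, hμ, ← add_smul, map_smul, map_zero, smul_smul] at h1
      have h2 := smul_eq_zero.1 h1.symm
      refine h2.resolve_left (mul_ne_zero (neg_ne_zero.2 ?_) (hn k))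
      exact_mod_cast Nat.succ_ne_zero k
  exact key n (by simp [hn0])

/-- `e ^ (d + 1) w = 0`, for otherwise it would be a lowest weight vector of weight `d + 2 > 0`. -/
lemma pow_lowest [CharZero F] (T : FormTriple B ε e h f) {d : ℕ} {w : V} (hw : w ∈ lowest h f d) :
    (e ^ (d + 1)) w = 0 := by
  apply T.eq_zero_of_pow (μ := (d : F) + 2)
  · rw [T.f_pow_succ w (by simp [hw.1]), hw.2, ← add_smul]
    simp
  · rw [T.h_pow, hw.2, map_smul, ← add_smul]
    push_cast
    congr 1
    ring
  · intro k
    exact_mod_cast (by omega : d + 2 + k ≠ 0)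

lemma pow_lowest' [CharZero F] (T : FormTriple B ε e h f) {d : ℕ} {w : V} (hw : w ∈ lowest h f d)
    {k : ℕ} (hk : d < k) : (e ^ k) w = 0 := by
  obtain ⟨j, rfl⟩ := Nat.exists_eq_add_of_lt hk
  rw [show d + j + 1 = j + (d + 1) by omega, pow_add, Module.End.mul_apply, T.pow_lowest hw, map_zero]

/-- There is no highest weight vector of negative weight. -/
lemma highest_eq_zero [CharZero F] [FiniteDimensional F V] (T : FormTriple B ε e h f) {z : V}
    (hz : e z = 0) {m : ℕ} (hm : h z = -((m : F) + 1) • z) : z = 0 := by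
  by_contra hne
  have hm' : (m : F) + 1 ≠ 0 := by exact_mod_cast Nat.succ_ne_zero m
  let _ : LieRing (End F V) := LieRing.ofAssociativeRing
  let _ : LieAlgebra F (End F V) := LieAlgebra.ofAssociativeAlgebra
  have t : IsSl2Triple h e f := by
    refine ⟨?_, ?_, ?_, ?_⟩
    · rintro rfl
      have := smul_eq_zero.1 hm.symm
      exact this.elim (neg_ne_zero.2 hm') hne
    · ext v; simp [Ring.lie_def, T.ef]
    · ext v; simp [Ring.lie_def, T.he, two_smul]
    · ext v; simp [Ring.lie_def, T.hf, two_smul]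
  have P : t.HasPrimitiveVectorWith z (-((m : F) + 1)) :=
    ⟨hne, by simpa using hm, by simpa using hz⟩
  obtain ⟨n, hn⟩ := P.exists_nat
  have : ((n + m + 1 : ℕ) : F) = 0 := by push_cast; rw [← hn]; ring
  exact absurd (Nat.cast_eq_zero.1 this) (by omega)

/-- `h` acts on `ker (e f)` diagonalisably with weights in `{0, -1, …}`: the operator
`f ^ n ∘ e ^ n` acts there as a nonzero multiple of `h (h + 1) ⋯ (h + n - 1)`, and vanishes for
large `n`. -/
lemma mem_span_weights [CharZero F] (T : FormTriple B ε e h f) (n : ℕ) :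
    ∀ y : V, e (f y) = 0 → (f ^ n) ((e ^ n) y) = 0 →
      y ∈ Submodule.span F {y : V | e (f y) = 0 ∧ ∃ i < n, h y = -(i : F) • y} := by
  induction n with
  | zero => intro y _ h0; simp at h0; simp [h0]
  | succ n ih =>
    intro y hy h0
    have hKh : e (f (h y)) = 0 := by
      have h1 : f (h y) = h (f y) + (2 : F) • f y := by rw [T.hf]; module
      have h2 : e (h (f y)) = h (e (f y)) - (2 : F) • e (f y) := by rw [T.he]; module
      rw [h1, map_add, map_smul, h2, hy]; simp
    have h1 : h y + (n : F) • y ∈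
        Submodule.span F {y : V | e (f y) = 0 ∧ ∃ i < n, h y = -(i : F) • y} := by
      apply ih
      · simp [hKh, hy]
      · rw [pow_succ f, Module.End.mul_apply, T.f_pow_succ y hy, map_smul] at h0
        refine (smul_eq_zero.1 h0).resolve_left (neg_ne_zero.2 ?_)
        exact_mod_cast Nat.succ_ne_zero n
    -- `h + n` is invertible on the span of the weights `0, …, -(n - 1)`
    have h2 : ∀ x ∈ Submodule.span F {y : V | e (f y) = 0 ∧ ∃ i < n, h y = -(i : F) • y},
        ∃ x' ∈ Submodule.span F {y : V | e (f y) = 0 ∧ ∃ i < n, h y = -(i : F) • y},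
          h x' + (n : F) • x' = x := by
      intro x hx
      induction hx using Submodule.span_induction with
      | mem x hx =>
        obtain ⟨hx1, i, hi, hx2⟩ := hx
        have hne : (n : F) - i ≠ 0 := sub_ne_zero.2 (by exact_mod_cast hi.ne')
        refine ⟨((n : F) - i)⁻¹ • x,
          Submodule.smul_mem _ _ (Submodule.subset_span ⟨hx1, i, hi, hx2⟩), ?_⟩
        rw [map_smul, hx2, smul_smul, smul_smul, ← add_smul]
        rw [show ((n : F) - i)⁻¹ * -(i : F) + n * ((n : F) - i)⁻¹ = 1 by field_simp; ring, one_smul]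
      | zero => exact ⟨0, by simp, by simp⟩
      | add a b _ _ iha ihb =>
        obtain ⟨a', ha, rfl⟩ := iha
        obtain ⟨b', hb, rfl⟩ := ihb
        exact ⟨a' + b', add_mem ha hb, by rw [map_add]; module⟩
      | smul c a _ iha =>
        obtain ⟨a', ha, rfl⟩ := iha
        exact ⟨c • a', Submodule.smul_mem _ _ ha, by rw [map_smul]; module⟩
    obtain ⟨x', hx', hxe⟩ := h2 _ h1
    have hmono : Submodule.span F {y : V | e (f y) = 0 ∧ ∃ i < n, h y = -(i : F) • y} ≤
        Submodule.span F {y : V | e (f y) = 0 ∧ ∃ i < n + 1, h y = -(i : F) • y} :=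
      Submodule.span_mono fun z ⟨hz, i, hi, hz'⟩ => ⟨hz, i, by omega, hz'⟩
    have hK : e (f x') = 0 := by
      have : Submodule.span F {y : V | e (f y) = 0 ∧ ∃ i < n, h y = -(i : F) • y} ≤
          LinearMap.ker (e * f) := Submodule.span_le.2 fun z hz => by simpa using hz.1
      simpa using this hx'
    rw [← sub_add_cancel y x']
    refine add_mem (Submodule.subset_span ⟨by simp [hy, hK], n, by omega, ?_⟩) (hmono hx')
    rw [map_sub, eq_sub_of_add_eq hxe]
    module

/-- Each weight vector in `ker (e f)` is killed by `f`, as its image under `f` is a highest weight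
vector of negative weight. -/
lemma mem_span_lowest [CharZero F] [FiniteDimensional F V] (T : FormTriple B ε e h f) {y : V}
    (hy : e (f y) = 0) : y ∈ Submodule.span F {w : V | ∃ d, w ∈ lowest h f d} := by
  obtain ⟨n, hn⟩ := T.nil
  refine Submodule.span_mono ?_ (T.mem_span_weights n y hy (by simp [hn]))
  rintro z ⟨hz, i, -, hz'⟩
  refine ⟨i, ?_, hz'⟩
  apply T.highest_eq_zero hz (m := i + 1)
  rw [T.hf, hz', map_smul]
  push_cast
  module

lemma ker_f_of_ker_ef [CharZero F] [FiniteDimensional F V] (T : FormTriple B ε e h f) {y : V}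
    (hy : e (f y) = 0) : f y = 0 := by
  have : Submodule.span F {w : V | ∃ d, w ∈ lowest h f d} ≤ LinearMap.ker f :=
    Submodule.span_le.2 fun w ⟨d, hw⟩ => hw.1
  exact this (T.mem_span_lowest hy)

lemma isRefl (T : FormTriple B ε e h f) : B.IsRefl := fun v w hvw => by
  rw [T.symm, hvw, mul_zero]

/-- Since `(ker f + im e)^⊥ = im f ∩ ker e = 0`. -/
lemma ker_sup_range [CharZero F] [FiniteDimensional F V] (T : FormTriple B ε e h f) :
    LinearMap.ker f ⊔ LinearMap.range e = ⊤ := by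
  have hr : B.orthogonal (LinearMap.range f) = LinearMap.ker f := by
    ext z
    rw [LinearMap.BilinForm.mem_orthogonal_iff]
    constructor
    · intro hz
      refine T.nondeg.2 _ fun v => ?_
      have := hz (f v) ⟨v, rfl⟩
      rw [T.skew_f] at this
      simpa using this
    · rintro hz _ ⟨v, rfl⟩
      rw [T.skew_f, LinearMap.mem_ker.1 hz]; simp
  rw [← LinearMap.BilinForm.orthogonal_orthogonal T.nondeg T.isRefl
    (LinearMap.ker f ⊔ LinearMap.range e)]
  have : B.orthogonal (LinearMap.ker f ⊔ LinearMap.range e) = ⊥ := by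
    rw [eq_bot_iff]
    intro z hz
    have h1 : z ∈ LinearMap.range f := by
      rw [← LinearMap.BilinForm.orthogonal_orthogonal T.nondeg T.isRefl (LinearMap.range f), hr]
      exact fun v hv => hz v (Submodule.mem_sup_left hv)
    obtain ⟨y, rfl⟩ := h1
    refine T.ker_f_of_ker_ef (T.nondeg.2 _ fun v => ?_)
    have := hz (e v) (Submodule.mem_sup_right ⟨v, rfl⟩)
    rw [T.skew_e] at this
    simpa using this
  rw [this]
  ext z
  simp

/-- `V` is spanned by the strings `w, e w, …, e ^ d w` through lowest weight vectors. -/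
lemma span_strings [CharZero F] [FiniteDimensional F V] (T : FormTriple B ε e h f) (v : V) :
    v ∈ Submodule.span F {x : V | ∃ d, ∃ w ∈ lowest h f d, ∃ j, x = (e ^ j) w} := by
  set U := Submodule.span F {x : V | ∃ d, ∃ w ∈ lowest h f d, ∃ j, x = (e ^ j) w} with hU
  have hker : ∀ κ, f κ = 0 → ∀ k, (e ^ k) κ ∈ U := by
    intro κ hκ k
    have h1 : Submodule.span F {w : V | ∃ d, w ∈ lowest h f d} ≤ U.comap (e ^ k) :=
      Submodule.span_le.2 fun w ⟨d, hw⟩ => Submodule.subset_span ⟨d, w, hw, k, rfl⟩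
    exact h1 (T.mem_span_lowest (by simp [hκ]))
  have key : ∀ k, ∃ u ∈ U, ∃ v', v = u + (e ^ k) v' := by
    intro k
    induction k with
    | zero => exact ⟨0, zero_mem _, v, by simp⟩
    | succ k ih =>
      obtain ⟨u, hu, v', rfl⟩ := ih
      have : v' ∈ LinearMap.ker f ⊔ LinearMap.range e := by rw [T.ker_sup_range]; trivial
      obtain ⟨κ, hκ, _, ⟨x, rfl⟩, rfl⟩ := Submodule.mem_sup.1 this
      exact ⟨u + (e ^ k) κ, add_mem hu (hker κ hκ k), x, by
        rw [map_add, pow_succ, Module.End.mul_apply, add_assoc]⟩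
  obtain ⟨n, hn⟩ := T.nil
  obtain ⟨u, hu, v', hv⟩ := key n
  rw [hv, hn]
  simpa using hu

/-! ### String maps: spanning the centraliser of `e` -/

lemma skew_pow (T : FormTriple B ε e h f) (k : ℕ) (v w : V) :
    B ((e ^ k) v) w = (-1) ^ k * B v ((e ^ k) w) := by
  induction k generalizing v w with
  | zero => simp
  | succ k ih =>
    rw [pow_succ e, Module.End.mul_apply, ih, T.skew_e, ← Module.End.mul_apply, ← pow_succ',
      ← pow_succ]
    ring

lemma apply_eq_zero_of_pow (T : FormTriple B ε e h f) {k : ℕ} {v : V} (hv : (e ^ k) v = 0) (w : V) :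
    B v ((e ^ k) w) = 0 := by
  have h1 := T.skew_pow k v w
  rw [hv, map_zero, LinearMap.zero_apply] at h1
  exact (mul_eq_zero.1 h1.symm).resolve_left (pow_ne_zero _ (by simp))

lemma weight_pair (T : FormTriple B ε e h f) {a b : V} {α β : F} (ha : h a = α • a)
    (hb : h b = β • b) (hαβ : α + β ≠ 0) : B a b = 0 := by
  have h1 := T.skew_h a b
  rw [ha, hb] at h1
  simp only [map_smul, LinearMap.smul_apply, smul_eq_mul] at h1
  have h2 : (α + β) * B a b = 0 := by linear_combination h1
  exact (mul_eq_zero.1 h2).resolve_left hαβ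

/-- A lowest weight vector of
weight `-d` pairs nontrivially only with highest weight vectors of weight `d`. -/
lemma pair_eq_zero [CharZero F] (T : FormTriple B ε e h f) {d c s : ℕ} {v w : V}
    (hv : v ∈ lowest h f d) (hw : w ∈ lowest h f c) (hne : ¬ (s = d ∧ c = d)) :
    B v ((e ^ s) w) = 0 := by
  by_cases h1 : c < s
  · rw [T.pow_lowest' hw h1, map_zero]
  by_cases h2 : d < s
  · exact T.apply_eq_zero_of_pow (T.pow_lowest' hv h2) w
  refine T.weight_pair hv.2 (β := (2 * s - c : F)) ?_ ?_
  · rw [T.h_pow, hw.2, map_smul]; module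
  · intro h0
    have h3 : ((2 * s : ℕ) : F) = ((c + d : ℕ) : F) := by push_cast; linear_combination h0
    have h4 := Nat.cast_injective h3
    omega

/-- The form `⟨v, w⟩ = B(v, e ^ d w)` on lowest weight vectors of weight `-d`. -/
lemma pair_symm (T : FormTriple B ε e h f) (d : ℕ) (v w : V) :
    B v ((e ^ d) w) = ε * (-1) ^ d * B w ((e ^ d) v) := by
  rw [T.symm, T.skew_pow]; ring

lemma pair_nondeg [CharZero F] [FiniteDimensional F V] (T : FormTriple B ε e h f) {d : ℕ} {v : V}
    (hv : v ∈ lowest h f d) (h0 : ∀ w ∈ lowest h f d, B v ((e ^ d) w) = 0) : v = 0 := by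
  refine T.nondeg.1 _ fun z => ?_
  have : Submodule.span F {x : V | ∃ d, ∃ w ∈ lowest h f d, ∃ j, x = (e ^ j) w} ≤
      LinearMap.ker (B v) := by
    refine Submodule.span_le.2 ?_
    rintro _ ⟨c, w, hw, j, rfl⟩
    by_cases hc : j = d ∧ c = d
    · obtain ⟨rfl, rfl⟩ := hc
      exact h0 w hw
    · exact T.pair_eq_zero hv hw hc
  exact this (T.span_strings z)

lemma exists_pair_eq_one [CharZero F] [FiniteDimensional F V] (T : FormTriple B ε e h f) {d : ℕ}
    (hd : lowest h f d ≠ ⊥) :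
    ∃ v ∈ lowest h f d, ∃ w ∈ lowest h f d, B v ((e ^ d) w) = 1 := by
  obtain ⟨v, hv, hv0⟩ := Submodule.exists_mem_ne_zero_of_ne_bot hd
  have : ¬ ∀ w ∈ lowest h f d, B v ((e ^ d) w) = 0 := fun h0 => hv0 (T.pair_nondeg hv h0)
  push Not at this
  obtain ⟨w, hw, hw0⟩ := this
  exact ⟨v, hv, (B v ((e ^ d) w))⁻¹ • w, Submodule.smul_mem _ _ hw, by simp [hw0]⟩

/-- Dual bases of the space of lowest weight vectors of weight `-d`. -/
lemma exists_dual [CharZero F] [FiniteDimensional F V] (T : FormTriple B ε e h f) (d : ℕ) :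
    ∃ (n : ℕ) (u us : Fin n → V), (∀ i, u i ∈ lowest h f d) ∧ (∀ i, us i ∈ lowest h f d) ∧
      (∀ i, B (us i) ((e ^ d) (u i)) = 1) ∧
      ∀ z ∈ lowest h f d, ∑ i, B (us i) ((e ^ d) z) • u i = z := by
  let β : LinearMap.BilinForm F (lowest h f d) :=
    B.compl₁₂ (lowest h f d).subtype ((e ^ d) ∘ₗ (lowest h f d).subtype)
  have hβ : ∀ v w : lowest h f d, β v w = B v ((e ^ d) w) := fun v w => rfl
  have hnd : β.Nondegenerate := by
    constructor
    · intro v hv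
      exact Subtype.ext (T.pair_nondeg v.2 fun w hw => hv ⟨w, hw⟩)
    · intro v hv
      refine Subtype.ext (T.pair_nondeg v.2 fun w hw => ?_)
      have := hv ⟨w, hw⟩
      rw [hβ] at this
      rw [T.pair_symm, this, mul_zero]
  let b := Module.finBasis F (lowest h f d)
  refine ⟨_, fun i => b i, fun i => β.dualBasis hnd b i, fun i => (b i).2,
    fun i => (β.dualBasis hnd b i).2, fun i => ?_, fun z hz => ?_⟩
  · rw [← hβ, LinearMap.BilinForm.apply_dualBasis_left, if_pos rfl]
  · have h1 : ∀ i, β (β.dualBasis hnd b i) ⟨z, hz⟩ = b.repr ⟨z, hz⟩ i := by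
      intro i
      conv_lhs => rw [← b.sum_repr ⟨z, hz⟩, map_sum]
      simp_rw [map_smul, LinearMap.BilinForm.apply_dualBasis_left]
      simp
    have h2 := congrArg (lowest h f d).subtype (b.sum_repr ⟨z, hz⟩)
    simp only [← h1, hβ, map_sum, map_smul, Submodule.subtype_apply] at h2
    exact h2

end FormTriple

/-- The endomorphism `z ↦ ∑_{i + j = N} B(v, e ^ i z) e ^ j w`. It commutes with `e` as soon as
`e ^ (N + 1)` kills `v` and `w`. -/
def strMap (B : LinearMap.BilinForm F V) (e : End F V) (N : ℕ) (v w : V) : End F V :=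
  ∑ p ∈ antidiagonal N, ((B v) ∘ₗ (e ^ p.1)).smulRight ((e ^ p.2) w)

lemma strMap_apply (B : LinearMap.BilinForm F V) (e : End F V) (N : ℕ) (v w z : V) :
    strMap B e N v w z = ∑ p ∈ antidiagonal N, B v ((e ^ p.1) z) • (e ^ p.2) w := by
  simp [strMap]

namespace FormTriple

variable {B : LinearMap.BilinForm F V} {ε : F} {e h f : End F V}

lemma strMap_commute (T : FormTriple B ε e h f) {N : ℕ} {v w : V} (hv : (e ^ (N + 1)) v = 0)
    (hw : (e ^ (N + 1)) w = 0) (z : V) : strMap B e N v w (e z) = e (strMap B e N v w z) := by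
  have h1 := Finset.Nat.sum_antidiagonal_succ (n := N)
    (f := fun p : ℕ × ℕ => B v ((e ^ p.1) z) • (e ^ p.2) w)
  have h2 := Finset.Nat.sum_antidiagonal_succ' (n := N)
    (f := fun p : ℕ × ℕ => B v ((e ^ p.1) z) • (e ^ p.2) w)
  simp only [hw, smul_zero, zero_add, T.apply_eq_zero_of_pow hv, zero_smul] at h1 h2
  rw [h1] at h2
  rw [strMap_apply, strMap_apply, map_sum]
  simp only [map_smul, ← Module.End.mul_apply, ← pow_succ, ← pow_succ']
  exact h2

lemma strMap_adjoint (T : FormTriple B ε e h f) (N : ℕ) (v w z z' : V) :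
    B (strMap B e N v w z) z' = B z ((ε * (-1) ^ N) • strMap B e N w v z') := by
  rw [strMap_apply, strMap_apply, ← Finset.Nat.sum_antidiagonal_swap]
  simp only [map_sum, map_smul, LinearMap.sum_apply, LinearMap.smul_apply, smul_eq_mul,
    Prod.fst_swap, Prod.snd_swap, Finset.mul_sum]
  refine Finset.sum_congr rfl fun p hp => ?_
  rw [T.symm v, T.skew_pow p.2 z, T.skew_pow p.1 w, ← HasAntidiagonal.mem_antidiagonal.1 hp, pow_add]
  ring

lemma strMap_eval [CharZero F] (T : FormTriple B ε e h f) {N d b : ℕ} {v z : V} (w : V)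
    (hN : d ≤ N) (hv : v ∈ lowest h f d) (hz : z ∈ lowest h f b) :
    strMap B e N v w z = if b = d then B v ((e ^ d) z) • (e ^ (N - d)) w else 0 := by
  rw [strMap_apply]
  split_ifs with hb
  · rw [Finset.sum_eq_single (d, N - d)]
    · rintro ⟨i, j⟩ hp hne
      rw [T.pair_eq_zero hv hz, zero_smul]
      rintro ⟨rfl, -⟩
      rw [HasAntidiagonal.mem_antidiagonal] at hp
      exact hne (by simp at hp ⊢; omega)
    · intro h0
      exact absurd (by simp; omega) h0
  · refine Finset.sum_eq_zero fun p _ => ?_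
    rw [T.pair_eq_zero hv hz fun h' => hb h'.2, zero_smul]

/-- Products of string maps, with an element `y` of the centraliser of `e` in between. -/
lemma strMap_mul_mul (T : FormTriple B ε e h f) {N M : ℕ} {v w v' w' : V}
    (hw : (e ^ (N + 1)) w = 0) (hv' : (e ^ (M + 1)) v' = 0) (y : End F V)
    (hy : ∀ z, y (e z) = e (y z)) :
    strMap B e N v w * y * strMap B e M v' w' =
      ∑ p ∈ antidiagonal (N + M), B v ((e ^ p.1) (y w')) • strMap B e p.2 v' w := by
  have hyk : ∀ k z, y ((e ^ k) z) = (e ^ k) (y z) := by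
    intro k
    induction k with
    | zero => simp
    | succ k ih => intro z; rw [pow_succ, Module.End.mul_apply, ih, hy]; rfl
  ext z
  simp only [Module.End.mul_apply, strMap_apply, LinearMap.sum_apply, LinearMap.smul_apply,
    map_sum, map_smul, Finset.smul_sum, smul_smul, hyk]
  simp only [← Module.End.mul_apply (e ^ _) (e ^ _), ← pow_add]
  rw [← Finset.sum_product' (f := fun (x q : ℕ × ℕ) =>
    (B v' ((e ^ x.1) z) * B v ((e ^ (q.1 + x.2)) (y w'))) • (e ^ q.2) w), Finset.sum_sigma']
  -- the pairs with sums `M` and `N` are matched with the exponents of `e` in each term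
  refine Finset.sum_of_injOn
    (fun q => ⟨(q.2.1 + q.1.2, q.1.1 + q.2.2), (q.1.1, q.2.2)⟩) ?_ ?_ ?_ ?_
  · rintro ⟨⟨i, j⟩, i', j'⟩ hp ⟨⟨k, l⟩, k', l'⟩ hq heq
    simp only [coe_product, Set.mem_prod, mem_coe, HasAntidiagonal.mem_antidiagonal] at hp hq
    simp only [Sigma.mk.injEq, Prod.mk.injEq, heq_eq_eq] at heq ⊢
    omega
  · rintro ⟨⟨i, j⟩, i', j'⟩ hp
    simp only [coe_product, Set.mem_prod, mem_coe, HasAntidiagonal.mem_antidiagonal] at hp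
    refine mem_coe.2 (mem_sigma.2 ⟨HasAntidiagonal.mem_antidiagonal.2 ?_,
      HasAntidiagonal.mem_antidiagonal.2 rfl⟩)
    dsimp only
    omega
  · rintro ⟨⟨s, K⟩, k, l⟩ hp hne
    simp only [mem_sigma, HasAntidiagonal.mem_antidiagonal] at hp
    by_cases hk : M < k
    · have : (e ^ k) v' = 0 := by
        rw [← Nat.sub_add_cancel (Nat.succ_le_of_lt hk), pow_add, Module.End.mul_apply, hv',
          map_zero]
      simp [T.apply_eq_zero_of_pow this]
    by_cases hl : N < l
    · have : (e ^ l) w = 0 := by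
        rw [← Nat.sub_add_cancel (Nat.succ_le_of_lt hl), pow_add, Module.End.mul_apply, hw,
          map_zero]
      simp [this]
    refine absurd ⟨⟨(k, M - k), (N - l, l)⟩, ?_, ?_⟩ hne
    · simp only [coe_product, Set.mem_prod, mem_coe, HasAntidiagonal.mem_antidiagonal]
      omega
    · simp only [Sigma.mk.injEq, Prod.mk.injEq]
      obtain ⟨hp1, rfl⟩ := hp
      exact ⟨by omega, HEq.rfl⟩
  · rintro ⟨⟨i, j⟩, i', j'⟩ hp
    simp only
    rw [mul_comm]

lemma strMap_mul [CharZero F] (T : FormTriple B ε e h f) {N M d a : ℕ} {v w v' w' : V}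
    (hw : (e ^ (N + 1)) w = 0) (hv' : (e ^ (M + 1)) v' = 0)
    (hv : v ∈ lowest h f d) (hw' : w' ∈ lowest h f a) (hN : d ≤ N) :
    strMap B e N v w * strMap B e M v' w' =
      if a = d then B v ((e ^ d) w') • strMap B e (N + M - d) v' w else 0 := by
  have h1 := T.strMap_mul_mul (v := v) (w' := w') hw hv' 1 (by simp)
  rw [mul_one] at h1
  rw [h1]
  simp only [Module.End.one_apply]
  split_ifs with hb
  · rw [Finset.sum_eq_single (d, N + M - d)]
    · rintro ⟨i, j⟩ hp hne
      rw [T.pair_eq_zero hv hw', zero_smul]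
      rintro ⟨rfl, -⟩
      rw [HasAntidiagonal.mem_antidiagonal] at hp
      exact hne (by simp at hp ⊢; omega)
    · intro h0
      exact absurd (by simp; omega) h0
  · refine Finset.sum_eq_zero fun p _ => ?_
    rw [T.pair_eq_zero hv hw' fun h' => hb h'.2, zero_smul]

lemma exists_lowest_bound [CharZero F] [FiniteDimensional F V] (T : FormTriple B ε e h f) :
    ∃ n : ℕ, ∀ d, ∀ w ∈ lowest h f d, w ≠ 0 → d < n := by
  obtain ⟨n, hn⟩ := T.nil
  refine ⟨n, fun d w hw hw0 => ?_⟩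
  by_contra hd
  refine hw0 (T.pair_nondeg hw fun z _ => ?_)
  rw [pow_eq_zero_of_le (not_lt.1 hd) hn, LinearMap.zero_apply, map_zero]

/-- The identity is a combination of string maps: this is the expansion of a vector in dual
bases adapted to the strings. -/
lemma one_mem_span [CharZero F] [FiniteDimensional F V] (T : FormTriple B ε e h f) :
    (1 : End F V) ∈ Submodule.span F {x : End F V |
      ∃ d, ∃ v ∈ lowest h f d, ∃ w ∈ lowest h f d, x = strMap B e d v w} := by
  choose n u us hu hus _ hsum using T.exists_dual
  obtain ⟨m, hm⟩ := T.exists_lowest_bound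
  have key : (1 : End F V) = ∑ d ∈ range m, ∑ i, strMap B e d (us d i) (u d i) := by
    have hc : ∀ z k, (∑ d ∈ range m, ∑ i, strMap B e d (us d i) (u d i)) ((e ^ k) z) =
        (e ^ k) ((∑ d ∈ range m, ∑ i, strMap B e d (us d i) (u d i)) z) := by
      intro z k
      induction k generalizing z with
      | zero => simp
      | succ k ih =>
        rw [pow_succ, Module.End.mul_apply, ih, Module.End.mul_apply]
        congr 1
        simp only [LinearMap.sum_apply, map_sum]
        refine Finset.sum_congr rfl fun d _ => Finset.sum_congr rfl fun i _ => ?_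
        exact T.strMap_commute (T.pow_lowest (hus d i)) (T.pow_lowest (hu d i)) z
    ext z
    have : Submodule.span F {x : V | ∃ d, ∃ w ∈ lowest h f d, ∃ j, x = (e ^ j) w} ≤
        LinearMap.ker (1 - ∑ d ∈ range m, ∑ i, strMap B e d (us d i) (u d i)) := by
      refine Submodule.span_le.2 ?_
      rintro _ ⟨b, w, hw, j, rfl⟩
      rw [SetLike.mem_coe, LinearMap.mem_ker, LinearMap.sub_apply, hc, Module.End.one_apply,
        sub_eq_zero]
      congr 1
      simp only [LinearMap.sum_apply, T.strMap_eval _ le_rfl (hus _ _) hw, Nat.sub_self, pow_zero,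
        Module.End.one_apply]
      rw [Finset.sum_eq_single b]
      · simp [hsum b w hw]
      · intro d _ hd
        simp [hd.symm]
      · intro hb
        have : w = 0 := by
          by_contra hw0
          exact hb (mem_range.2 (hm b w hw hw0))
        simp [this]
    have := this (T.span_strings z)
    rwa [LinearMap.mem_ker, LinearMap.sub_apply, sub_eq_zero] at this
  rw [key]
  exact Submodule.sum_mem _ fun d _ => Submodule.sum_mem _ fun i _ =>
    Submodule.subset_span ⟨d, _, hus d i, _, hu d i, rfl⟩

/-- Expanding `y = 1 * y * 1` with the help of `one_mem_span`, `y` is a combination of the string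
maps `strMap B e K v' w` for which `B(v, e ^ s y w')` occurs with a nonzero value. -/
lemma mem_span_of_expand [CharZero F] [FiniteDimensional F V] (T : FormTriple B ε e h f)
    (y : End F V) (hy : ∀ z, y (e z) = e (y z)) (P : End F V → Prop)
    (hP : ∀ d c s K v v' w w', v ∈ lowest h f d → w ∈ lowest h f d → v' ∈ lowest h f c →
      w' ∈ lowest h f c → s + K = d + c → B v ((e ^ s) (y w')) ≠ 0 → P (strMap B e K v' w)) :
    y ∈ Submodule.span F {x | P x} := by
  have key : ∀ a ∈ Submodule.span F {x : End F V |
      ∃ d, ∃ v ∈ lowest h f d, ∃ w ∈ lowest h f d, x = strMap B e d v w},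
      ∀ b ∈ Submodule.span F {x : End F V |
      ∃ d, ∃ v ∈ lowest h f d, ∃ w ∈ lowest h f d, x = strMap B e d v w},
      a * y * b ∈ Submodule.span F {x | P x} := by
    intro a ha b hb
    induction ha using Submodule.span_induction with
    | zero => simp
    | add a a' _ _ h1 h2 => rw [add_mul, add_mul]; exact add_mem h1 h2
    | smul c a _ h1 => rw [smul_mul_assoc, smul_mul_assoc]; exact Submodule.smul_mem _ _ h1
    | mem a ha =>
      obtain ⟨d, v, hv, w, hw, rfl⟩ := ha
      induction hb using Submodule.span_induction with
      | zero => simp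
      | add a a' _ _ h1 h2 => rw [mul_add]; exact add_mem h1 h2
      | smul c a _ h1 => rw [mul_smul_comm]; exact Submodule.smul_mem _ _ h1
      | mem b hb =>
        obtain ⟨c, v', hv', w', hw', rfl⟩ := hb
        rw [T.strMap_mul_mul (T.pow_lowest hw) (T.pow_lowest hv') y hy]
        refine Submodule.sum_mem _ fun p hp => ?_
        by_cases h0 : B v ((e ^ p.1) (y w')) = 0
        · rw [h0, zero_smul]; exact zero_mem _
        · exact Submodule.smul_mem _ _ (Submodule.subset_span
            (hP d c p.1 p.2 v v' w w' hv hw hv' hw' (HasAntidiagonal.mem_antidiagonal.1 hp) h0))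
  simpa using key 1 T.one_mem_span 1 T.one_mem_span

/-- A string map attached to two lowest weight vectors of weights `-d` and `-c`. The bounds
`d ≤ K` and `c ≤ K` make it commute with `e`. -/
def IsStr (B : LinearMap.BilinForm F V) (e h f : End F V) (x : End F V) : Prop :=
  ∃ d c K, ∃ v ∈ lowest h f d, ∃ w ∈ lowest h f c, d ≤ K ∧ c ≤ K ∧ x = strMap B e K v w

/-- A string map in the centraliser of `e` of degree `2` for the grading by `ad h`. -/
def IsStrTwo (B : LinearMap.BilinForm F V) (e h f : End F V) (x : End F V) : Prop :=
  ∃ d c K, ∃ v ∈ lowest h f d, ∃ w ∈ lowest h f c, d ≤ K ∧ c ≤ K ∧ 2 * K = d + c + 2 ∧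
    x = strMap B e K v w

/-- The string maps which contribute to the expansion of an element of the centraliser of `e`
themselves commute with `e`. -/
lemma expand_le [CharZero F] (T : FormTriple B ε e h f) {y : End F V}
    (hy : ∀ z, y (e z) = e (y z)) {d c s K : ℕ} {v w' : V} (hv : v ∈ lowest h f d)
    (hw' : w' ∈ lowest h f c) (hs : s + K = d + c) (h0 : B v ((e ^ s) (y w')) ≠ 0) :
    c ≤ K ∧ d ≤ K := by
  have hyk : ∀ k z, y ((e ^ k) z) = (e ^ k) (y z) := by
    intro k
    induction k with
    | zero => simp
    | succ k ih => intro z; rw [pow_succ, Module.End.mul_apply, ih, hy]; rfl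
  have h1 : s ≤ d := by
    by_contra hd
    exact h0 (T.apply_eq_zero_of_pow (T.pow_lowest' hv (not_le.1 hd)) _)
  have h2 : s ≤ c := by
    by_contra hd
    rw [← hyk, T.pow_lowest' hw' (not_le.1 hd)] at h0
    simp at h0
  omega

lemma centralizer_mem_span [CharZero F] [FiniteDimensional F V] (T : FormTriple B ε e h f)
    {y : End F V} (hy : ∀ z, y (e z) = e (y z)) : y ∈ Submodule.span F {x | IsStr B e h f x} := by
  refine T.mem_span_of_expand y hy _ ?_
  intro d c s K v v' w w' hv hw hv' hw' hs h0
  obtain ⟨h1, h2⟩ := T.expand_le hy hv hw' hs h0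
  exact ⟨c, d, K, v', hv', w, hw, h1, h2, rfl⟩

lemma centralizer_two_mem_span [CharZero F] [FiniteDimensional F V] (T : FormTriple B ε e h f)
    {y : End F V} (hy : ∀ z, y (e z) = e (y z)) (hy2 : ∀ z, h (y z) = y (h z) + (2 : F) • y z) :
    y ∈ Submodule.span F {x | IsStrTwo B e h f x} := by
  refine T.mem_span_of_expand y hy _ ?_
  intro d c s K v v' w w' hv hw hv' hw' hs h0
  obtain ⟨h1, h2⟩ := T.expand_le hy hv hw' hs h0
  refine ⟨c, d, K, v', hv', w, hw, h1, h2, ?_, rfl⟩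
  by_contra h3
  refine h0 (T.weight_pair hv.2 (β := (2 * s + 2 - c : F)) ?_ ?_)
  · rw [T.h_pow, hy2, hw'.2]
    simp only [map_add, map_smul]
    module
  · intro h4
    have h5 : ((2 * s + 2 : ℕ) : F) = ((c + d : ℕ) : F) := by push_cast; linear_combination h4
    have h6 := Nat.cast_injective h5
    omega

/-! ### Reachability forces the string lengths to have no gaps -/

/-- The trace-like functional `∑_{d > a} ∑_i B(us_i, e ^ (d - 1) x u_i)` over dual bases of the
lowest weight spaces picks out of `x` the multiple of `e` on the strings of length `> a + 1`. If
there are no strings of length `a + 1`, it vanishes on commutators of the centraliser of `e`,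
while its value on `e` is the number of strings of length `> a + 1`. -/
lemma no_gap [CharZero F] [FiniteDimensional F V] (T : FormTriple B ε e h f)
    (hre : e ∈ Submodule.span F {z : End F V | ∃ x y : End F V,
      (∀ z, x (e z) = e (x z)) ∧ (∀ z, y (e z) = e (y z)) ∧ z = x * y - y * x})
    {a b : ℕ} (ha : lowest h f a = ⊥) (hab : a < b) : lowest h f b = ⊥ := by
  choose n u us hu hus hone hsum using T.exists_dual
  obtain ⟨m, hm⟩ := T.exists_lowest_bound
  let τ : End F V →ₗ[F] F :=
    { toFun := fun x => ∑ d ∈ range m with a < d, ∑ i, B (us d i) ((e ^ (d - 1)) (x (u d i)))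
      map_add' := by intro x y; simp [Finset.sum_add_distrib]
      map_smul' := by intro c x; simp [Finset.mul_sum] }
  have hτ : ∀ x, τ x = ∑ d ∈ range m with a < d, ∑ i,
    B (us d i) ((e ^ (d - 1)) (x (u d i))) := fun x => rfl
  have hτstr : ∀ d c N v w, v ∈ lowest h f d → w ∈ lowest h f c → d ≤ N → c ≤ N →
      τ (strMap B e N v w) = if a < d ∧ c = d ∧ N = d + 1 then B v ((e ^ d) w) else 0 := by
    intro d c N v w hv hw hdN hcN
    by_cases hv0 : v = 0
    · have : strMap B e N v w = 0 := by ext z; simp [strMap_apply, hv0]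
      rw [this, map_zero]
      simp [hv0]
    have hdm := hm d v hv hv0
    simp only [hτ, T.strMap_eval w hdN hv (hu _ _)]
    by_cases had : a < d
    · rw [Finset.sum_eq_single d]
      · simp only [if_true, map_smul, smul_eq_mul, ← Module.End.mul_apply, ← pow_add, had, true_and]
        split_ifs with hc
        · obtain ⟨rfl, rfl⟩ := hc
          conv_rhs => rw [← hsum c w hw]
          rw [show c - 1 + (c + 1 - c) = c by omega]
          simp only [map_sum, map_smul, smul_eq_mul]
          exact Finset.sum_congr rfl fun i _ => mul_comm _ _
        · refine Finset.sum_eq_zero fun i _ => ?_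
          rw [T.pair_eq_zero (hus d i) hw (fun h' => hc ⟨h'.2, by omega⟩), mul_zero]
      · intro d' _ hd'
        simp [hd']
      · intro h0
        simp [hdm, had] at h0
    · rw [if_neg (fun h' => had h'.1)]
      refine Finset.sum_eq_zero fun d' hd' => Finset.sum_eq_zero fun i _ => ?_
      rw [if_neg, map_zero, map_zero]
      rintro rfl
      exact had (mem_filter.1 hd').2
  have hcomm : ∀ x y, IsStr B e h f x → IsStr B e h f y → τ (x * y) = τ (y * x) := by
    rintro _ _ ⟨d, c, N, v, hv, w, hw, hdN, hcN, rfl⟩ ⟨d', c', M, v', hv', w', hw', hdM, hcM, rfl⟩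
    rw [T.strMap_mul (T.pow_lowest' hw (by omega)) (T.pow_lowest' hv' (by omega)) hv hw' hdN,
      T.strMap_mul (T.pow_lowest' hw' (by omega)) (T.pow_lowest' hv (by omega)) hv' hw hdM]
    by_cases h1 : c' = d
    · by_cases h2 : c = d'
      · subst h1 h2
        rw [if_pos rfl, if_pos rfl, map_smul, map_smul,
          hτstr c c _ v' w hv' hw (by omega) (by omega),
          hτstr c' c' _ v w' hv hw' (by omega) (by omega)]
        have hz : ∀ z : V, z ∈ lowest h f a → z = 0 := fun z hz => by
          rw [ha] at hz; simpa using hz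
        by_cases h3 : N + M = c + c' + 1
        · by_cases h4 : a < c <;> by_cases h5 : a < c'
          · rw [if_pos ⟨h4, rfl, by omega⟩, if_pos ⟨h5, rfl, by omega⟩]
            exact mul_comm _ _
          · obtain rfl : c' = a := by omega
            simp [hz v hv]
          · obtain rfl : c = a := by omega
            simp [hz w hw]
          · simp [h4, h5]
        · rw [if_neg (by omega), if_neg (by omega), smul_zero, smul_zero]
      · rw [if_pos h1, if_neg h2, map_smul, hτstr d' c _ v' w hv' hw (by omega) (by omega),
          if_neg (fun h' => h2 h'.2.1)]
        simp
    · by_cases h2 : c = d'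
      · rw [if_neg h1, if_pos h2, map_smul, hτstr d c' _ v w' hv hw' (by omega) (by omega),
          if_neg (fun h' => h1 h'.2.1)]
        simp
      · rw [if_neg h1, if_neg h2]
  have hcomm' : ∀ x ∈ Submodule.span F {x | IsStr B e h f x},
      ∀ y ∈ Submodule.span F {x | IsStr B e h f x}, τ (x * y) = τ (y * x) := by
    intro x hx y hy
    induction hx using Submodule.span_induction with
    | zero => simp
    | add x x' _ _ h1 h2 => rw [add_mul, mul_add, map_add, map_add, h1, h2]
    | smul c x _ h1 => rw [smul_mul_assoc, mul_smul_comm, map_smul, map_smul, h1]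
    | mem x hx =>
      induction hy using Submodule.span_induction with
      | zero => simp
      | add x x' _ _ h1 h2 => rw [add_mul, mul_add, map_add, map_add, h1, h2]
      | smul c x _ h1 => rw [smul_mul_assoc, mul_smul_comm, map_smul, map_smul, h1]
      | mem y hy => exact hcomm x y hx hy
  have h0 : τ e = 0 := by
    have : Submodule.span F {z : End F V | ∃ x y : End F V,
      (∀ z, x (e z) = e (x z)) ∧ (∀ z, y (e z) = e (y z)) ∧ z = x * y - y * x} ≤
        LinearMap.ker τ := by
      refine Submodule.span_le.2 ?_
      rintro _ ⟨x, y, hx, hy, rfl⟩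
      rw [SetLike.mem_coe, LinearMap.mem_ker, map_sub, sub_eq_zero]
      exact hcomm' x (T.centralizer_mem_span hx) y (T.centralizer_mem_span hy)
    exact this hre
  have h1 : τ e = ((∑ d ∈ range m with a < d, n d : ℕ) : F) := by
    rw [hτ, Nat.cast_sum]
    refine Finset.sum_congr rfl fun d hd => ?_
    have hd1 : d - 1 + 1 = d := by have := (mem_filter.1 hd).2; omega
    simp only [← Module.End.mul_apply, ← pow_succ, hd1, hone]
    simp
  rw [h0, eq_comm, Nat.cast_eq_zero, Finset.sum_eq_zero_iff] at h1
  rw [eq_bot_iff]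
  intro z hz
  rw [Submodule.mem_bot]
  by_contra hz0
  have hb := h1 b (mem_filter.2 ⟨mem_range.2 (hm b z hz hz0), hab⟩)
  have : IsEmpty (Fin (n b)) := by rw [hb]; infer_instance
  exact hz0 (by rw [← hsum b z hz, Finset.univ_eq_empty, Finset.sum_empty])

/-! ### Generating degree two by brackets of degree one -/

lemma strMap_weight (T : FormTriple B ε e h f) {N d c : ℕ} {v w : V} (hv : v ∈ lowest h f d)
    (hw : w ∈ lowest h f c) (z : V) :
    h (strMap B e N v w z) =
      strMap B e N v w (h z) + (2 * N - d - c : F) • strMap B e N v w z := by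
  rw [strMap_apply, strMap_apply, map_sum, Finset.smul_sum, ← Finset.sum_add_distrib]
  refine Finset.sum_congr rfl fun p hp => ?_
  rw [← HasAntidiagonal.mem_antidiagonal.1 hp, map_smul, T.h_pow, hw.2]
  have h1 : B v ((e ^ p.1) (h z)) = (d - 2 * p.1 : F) * B v ((e ^ p.1) z) := by
    have h2 := T.skew_h v ((e ^ p.1) z)
    rw [hv.2, T.h_pow] at h2
    simp only [map_smul, map_add, LinearMap.smul_apply, smul_eq_mul] at h2
    linear_combination h2
  rw [h1]
  simp only [map_smul]
  push_cast
  module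

/-- The skew-adjoint part (up to a factor `2`) of `strMap B e N v w`. -/
def skewStr (B : LinearMap.BilinForm F V) (ε : F) (e : End F V) (N : ℕ) (v w : V) : End F V :=
  strMap B e N v w - (ε * (-1) ^ N) • strMap B e N w v

lemma sign_sq (T : FormTriple B ε e h f) (N : ℕ) : (ε * (-1) ^ N) * (ε * (-1) ^ N) = 1 := by
  have : ((-1 : F) ^ N) * (-1) ^ N = 1 := by rw [← mul_pow]; simp
  linear_combination T.eps + ε * ε * this - T.eps + T.eps

lemma skewStr_skew (T : FormTriple B ε e h f) (N : ℕ) (v w z z' : V) :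
    B (skewStr B ε e N v w z) z' = - B z (skewStr B ε e N v w z') := by
  simp only [skewStr, LinearMap.sub_apply, LinearMap.smul_apply, map_sub, map_smul,
    T.strMap_adjoint, smul_eq_mul]
  linear_combination -(B z (strMap B e N v w z')) * T.sign_sq N

lemma skewStr_swap (T : FormTriple B ε e h f) (N : ℕ) (v w : V) :
    skewStr B ε e N v w = -(ε * (-1) ^ N) • skewStr B ε e N w v := by
  rw [skewStr, skewStr, smul_sub, smul_smul, neg_mul, T.sign_sq]
  module

/-- The space `g(1)_e`, with the defining conditions stated pointwise. -/
def IsDegOne (B : LinearMap.BilinForm F V) (e h : End F V) (x : End F V) : Prop :=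
  (∀ v w, B (x v) w = - B v (x w)) ∧ (∀ z, h (x z) = x (h z) + x z) ∧ ∀ z, x (e z) = e (x z)

lemma skewStr_degOne [CharZero F] (T : FormTriple B ε e h f) {d : ℕ} {v w : V}
    (hv : v ∈ lowest h f d) (hw : w ∈ lowest h f (d + 1)) :
    IsDegOne B e h (skewStr B ε e (d + 1) v w) := by
  refine ⟨T.skewStr_skew _ _ _, fun z => ?_, fun z => ?_⟩
  · simp only [skewStr, LinearMap.sub_apply, LinearMap.smul_apply, map_sub, map_smul]
    rw [T.strMap_weight hv hw, T.strMap_weight hw hv]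
    push_cast
    module
  · simp only [skewStr, LinearMap.sub_apply, LinearMap.smul_apply, map_sub, map_smul]
    rw [T.strMap_commute (T.pow_lowest' hv (by omega)) (T.pow_lowest' hw (by omega)),
      T.strMap_commute (T.pow_lowest' hw (by omega)) (T.pow_lowest' hv (by omega))]

lemma neg_degOne {x : End F V} (hx : IsDegOne B e h x) : IsDegOne B e h (-x) := by
  obtain ⟨h1, h2, h3⟩ := hx
  refine ⟨fun v w => by simp [h1], fun z => ?_, fun z => by simp [h3]⟩
  simp only [LinearMap.neg_apply, map_neg, h2]
  abel

/-- A degree two element joining the weights `-d` and `-(d + 2)` is a bracket of degree one elements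
through the weight `-(d + 1)`. -/
lemma bracket_jump [CharZero F] (T : FormTriple B ε e h f) {d : ℕ} {v w p q : V}
    (hv : v ∈ lowest h f d) (hw : w ∈ lowest h f (d + 2)) (hp : p ∈ lowest h f (d + 1))
    (hq : q ∈ lowest h f (d + 1)) (hpq : B p ((e ^ (d + 1)) q) = 1) :
    skewStr B ε e (d + 2) p w * skewStr B ε e (d + 1) v q -
      skewStr B ε e (d + 1) v q * skewStr B ε e (d + 2) p w = skewStr B ε e (d + 2) v w := by
  have kv : (e ^ (d + 1 + 1)) v = 0 := T.pow_lowest' hv (by omega)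
  have kq : (e ^ (d + 1 + 1)) q = 0 := T.pow_lowest' hq (by omega)
  have kp : (e ^ (d + 2 + 1)) p = 0 := T.pow_lowest' hp (by omega)
  have kw : (e ^ (d + 2 + 1)) w = 0 := T.pow_lowest' hw (by omega)
  have hqp := T.pair_symm (d + 1) q p
  rw [hpq] at hqp
  have a1 := T.strMap_mul kw kv hp hq (by omega)
  have a2 := T.strMap_mul kw kq hp hv (by omega)
  have a3 := T.strMap_mul kp kv hw hq (by omega)
  have a4 := T.strMap_mul kp kq hw hv (by omega)
  have b1 := T.strMap_mul kq kp hv hw (by omega)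
  have b2 := T.strMap_mul kq kw hv hp (by omega)
  have b3 := T.strMap_mul kv kp hq hw (by omega)
  have b4 := T.strMap_mul kv kw hq hp (by omega)
  rw [if_neg (by omega)] at a2 a3 a4 b1 b2 b3
  rw [if_pos rfl, hpq, one_smul, show d + 2 + (d + 1) - (d + 1) = d + 2 by omega] at a1
  rw [if_pos rfl, hqp, show d + 1 + (d + 2) - (d + 1) = d + 2 by omega] at b4
  simp only [skewStr, sub_mul, mul_sub, smul_mul_assoc, mul_smul_comm, a1, a2, a3, a4, b1, b2, b3,
    b4, smul_zero, smul_smul]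
  have hs := T.sign_sq (d + 1)
  have hs2 : ε * (-1 : F) ^ (d + 2) = -(ε * (-1) ^ (d + 1)) := by ring
  rw [hs2]
  generalize ε * (-1 : F) ^ (d + 1) = s at *
  match_scalars
  · ring
  · linear_combination s * hs

/-- The bracket of two degree one elements joining the weights `-d` and `-(d + 1)` is a combination
of degree two elements on the strings of either weight. -/
lemma bracket_adjacent [CharZero F] (T : FormTriple B ε e h f) {d : ℕ} {m₁ m₂ n₁ n₂ : V}
    (hm₁ : m₁ ∈ lowest h f d) (hm₂ : m₂ ∈ lowest h f d) (hn₁ : n₁ ∈ lowest h f (d + 1))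
    (hn₂ : n₂ ∈ lowest h f (d + 1)) :
    skewStr B ε e (d + 1) m₁ n₁ * skewStr B ε e (d + 1) m₂ n₂ -
      skewStr B ε e (d + 1) m₂ n₂ * skewStr B ε e (d + 1) m₁ n₁ =
    -(ε * (-1) ^ (d + 1)) • (B m₁ ((e ^ d) m₂) • skewStr B ε e (d + 2) n₂ n₁ +
      B n₁ ((e ^ (d + 1)) n₂) • skewStr B ε e (d + 1) m₂ m₁) := by
  have km₁ : (e ^ (d + 1 + 1)) m₁ = 0 := T.pow_lowest' hm₁ (by omega)
  have km₂ : (e ^ (d + 1 + 1)) m₂ = 0 := T.pow_lowest' hm₂ (by omega)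
  have kn₁ : (e ^ (d + 1 + 1)) n₁ = 0 := T.pow_lowest' hn₁ (by omega)
  have kn₂ : (e ^ (d + 1 + 1)) n₂ = 0 := T.pow_lowest' hn₂ (by omega)
  have sm := T.pair_symm d m₂ m₁
  have sn := T.pair_symm (d + 1) n₂ n₁
  have a1 := T.strMap_mul kn₁ km₂ hm₁ hn₂ (by omega)
  have a2 := T.strMap_mul kn₁ kn₂ hm₁ hm₂ (by omega)
  have a3 := T.strMap_mul km₁ km₂ hn₁ hn₂ (by omega)
  have a4 := T.strMap_mul km₁ kn₂ hn₁ hm₂ (by omega)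
  have b1 := T.strMap_mul kn₂ km₁ hm₂ hn₁ (by omega)
  have b2 := T.strMap_mul kn₂ kn₁ hm₂ hm₁ (by omega)
  have b3 := T.strMap_mul km₂ km₁ hn₂ hn₁ (by omega)
  have b4 := T.strMap_mul km₂ kn₁ hn₂ hm₁ (by omega)
  rw [if_neg (by omega)] at a1 a4 b1 b4
  rw [if_pos rfl, show d + 1 + (d + 1) - d = d + 2 by omega] at a2 b2
  rw [if_pos rfl, show d + 1 + (d + 1) - (d + 1) = d + 1 by omega] at a3 b3
  rw [sm] at b2
  rw [sn] at b3
  simp only [skewStr, sub_mul, mul_sub, smul_mul_assoc, mul_smul_comm, a1, a2, a3, a4, b1, b2, b3,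
    b4, smul_zero, smul_smul]
  have hs := T.sign_sq (d + 1)
  have hs2 : ε * (-1 : F) ^ (d + 2) = -(ε * (-1) ^ (d + 1)) := by ring
  have hs3 : ε * (-1 : F) ^ d = -(ε * (-1) ^ (d + 1)) := by ring
  rw [hs2, hs3]
  generalize ε * (-1 : F) ^ (d + 1) = s at *
  module

/-- The derived space `[g(1)_e, g(1)_e]`. -/
def derived (B : LinearMap.BilinForm F V) (e h : End F V) : Submodule F (End F V) :=
  Submodule.span F {z | ∃ a b, IsDegOne B e h a ∧ IsDegOne B e h b ∧ z = a * b - b * a}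

/-- By induction on `d`: the bracket of elements joining weights `-d` and `-(d + 1)` trades a
degree-two element on strings of length `d + 2` for one on strings of length `d + 1`, and
the latter vanishes for `d = 0`. -/
lemma diag_mem_derived [CharZero F] [FiniteDimensional F V] (T : FormTriple B ε e h f)
    (hgap : ∀ a b, lowest h f a = ⊥ → a < b → lowest h f b = ⊥) (d : ℕ) :
    ∀ v ∈ lowest h f d, ∀ w ∈ lowest h f d, skewStr B ε e (d + 1) v w ∈ derived B e h := by
  induction d with
  | zero =>
    intro v hv w hw
    have : ∀ v ∈ lowest h f 0, ∀ w ∈ lowest h f 0, strMap B e 1 v w = 0 := by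
      intro v hv w hw
      ext z
      have h1 : e w = 0 := by simpa using T.pow_lowest hw
      have h2 : B v (e z) = 0 := by
        simpa using T.apply_eq_zero_of_pow (k := 1) (T.pow_lowest hv) z
      simp [strMap_apply, Finset.Nat.antidiagonal_succ, h1, h2]
    rw [skewStr, this v hv w hw, this w hw v hv]
    simp
  | succ d ih =>
    intro v hv w hw
    by_cases hd : lowest h f d = ⊥
    · have h1 := hgap d (d + 1) hd (by omega)
      rw [h1, Submodule.mem_bot] at hv hw
      have : strMap B e (d + 1 + 1) (0 : V) (0 : V) = 0 := by ext z; simp [strMap_apply]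
      simp [skewStr, hv, hw, this]
    · obtain ⟨m₁, hm₁, m₂, hm₂, hone⟩ := T.exists_pair_eq_one hd
      have h1 := T.bracket_adjacent hm₁ hm₂ hw hv
      rw [hone, one_smul] at h1
      have h2 : skewStr B ε e (d + 1) m₁ w * skewStr B ε e (d + 1) m₂ v -
          skewStr B ε e (d + 1) m₂ v * skewStr B ε e (d + 1) m₁ w ∈ derived B e h :=
        Submodule.subset_span ⟨_, _, T.skewStr_degOne hm₁ hw, T.skewStr_degOne hm₂ hv, rfl⟩
      have h3 := Submodule.smul_mem _ (-(ε * (-1) ^ (d + 1))) h2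
      rw [h1, smul_smul, neg_mul_neg, T.sign_sq, one_smul] at h3
      exact (Submodule.add_mem_iff_left _ (Submodule.smul_mem _ _ (ih m₂ hm₂ m₁ hm₁))).1 h3

lemma jump_mem_derived [CharZero F] [FiniteDimensional F V] (T : FormTriple B ε e h f)
    (hgap : ∀ a b, lowest h f a = ⊥ → a < b → lowest h f b = ⊥) {d : ℕ} {v w : V}
    (hv : v ∈ lowest h f d) (hw : w ∈ lowest h f (d + 2)) :
    skewStr B ε e (d + 2) v w ∈ derived B e h := by
  by_cases hd : lowest h f (d + 1) = ⊥
  · have h1 := hgap (d + 1) (d + 2) hd (by omega)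
    rw [h1, Submodule.mem_bot] at hw
    have h2 : ∀ v, strMap B e (d + 2) (0 : V) v = 0 := by intro v; ext z; simp [strMap_apply]
    have h3 : ∀ v, strMap B e (d + 2) v (0 : V) = 0 := by intro v; ext z; simp [strMap_apply]
    simp [skewStr, hw, h2, h3]
  · obtain ⟨p, hp, q, hq, hpq⟩ := T.exists_pair_eq_one hd
    rw [← T.bracket_jump hv hw hp hq hpq]
    refine Submodule.subset_span ⟨_, _, ?_, T.skewStr_degOne hv hq, rfl⟩
    exact T.skewStr_degOne (d := d + 1) hp hw

/-- A skew-adjoint `y` is half of `y - y^*`, so the expansion of `y` in string maps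
gives an expansion in the elements `skewStr`. -/
lemma mem_derived [CharZero F] [FiniteDimensional F V] (T : FormTriple B ε e h f)
    (hgap : ∀ a b, lowest h f a = ⊥ → a < b → lowest h f b = ⊥) {y : End F V}
    (hskew : ∀ v w, B (y v) w = - B v (y w))
    (hy : ∀ z, y (e z) = e (y z)) (hy2 : ∀ z, h (y z) = y (h z) + (2 : F) • y z) :
    y ∈ derived B e h := by
  have key : ∀ x ∈ Submodule.span F {x | IsStrTwo B e h f x},
      ∃ x' : End F V, (∀ z z', B (x z) z' = B z (x' z')) ∧ x - x' ∈ derived B e h := by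
    intro x hx
    induction hx using Submodule.span_induction with
    | zero => exact ⟨0, by simp, by simp⟩
    | add x y _ _ h1 h2 =>
      obtain ⟨x', hx1, hx2⟩ := h1
      obtain ⟨y', hy1, hy2⟩ := h2
      exact ⟨x' + y', by simp [hx1, hy1], by rw [add_sub_add_comm]; exact add_mem hx2 hy2⟩
    | smul c x _ h1 =>
      obtain ⟨x', hx1, hx2⟩ := h1
      exact ⟨c • x', by simp [hx1], by rw [← smul_sub]; exact Submodule.smul_mem _ _ hx2⟩
    | mem x hx =>
      obtain ⟨d, c, K, v, hv, w, hw, hd, hc, hK, rfl⟩ := hx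
      refine ⟨(ε * (-1) ^ K) • strMap B e K w v, T.strMap_adjoint K v w, ?_⟩
      change skewStr B ε e K v w ∈ derived B e h
      obtain h1 | h1 | h1 : (c = d ∧ K = d + 1) ∨ (c = d + 2 ∧ K = d + 2) ∨
          (d = c + 2 ∧ K = c + 2) := by omega
      · obtain ⟨rfl, rfl⟩ := h1
        exact T.diag_mem_derived hgap c v hv w hw
      · obtain ⟨rfl, rfl⟩ := h1
        exact T.jump_mem_derived hgap hv hw
      · obtain ⟨rfl, rfl⟩ := h1
        rw [T.skewStr_swap]
        exact Submodule.smul_mem _ _ (T.jump_mem_derived hgap hw hv)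
  obtain ⟨y', h1, h2⟩ := key y (T.centralizer_two_mem_span hy hy2)
  have h3 : y' = -y := by
    ext z
    rw [← sub_eq_zero]
    refine T.nondeg.2 _ fun v => ?_
    rw [map_sub, ← h1, hskew]
    simp
  rw [h3, sub_neg_eq_add, ← two_smul F] at h2
  exact (Submodule.smul_mem_iff _ (two_ne_zero)).1 h2

end FormTriple

end ReachableNilpotent


/-- For a reachable nilpotent `e` in `so(V)` or `sp(V)`,
`[g(1)_e, g(1)_e] = g(2)_e`. -/
theorem bracket_g1e_g1e_eq_g2e_of_reachable
    (F : Type*) [Field F] [IsAlgClosed F] [CharZero F]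
    (V : Type*) [AddCommGroup V] [Module F V] [FiniteDimensional F V]
    (B : LinearMap.BilinForm F V) (hB : B.Nondegenerate)
    (ε : F) (hε : ε = 1 ∨ ε = -1)
    (hsym : ∀ v w : V, B v w = ε * B w v)
    (g : Set (Module.End F V))
    (hg : g = {x : Module.End F V | ∀ v w : V, B (x v) w = - B v (x w)})
    (e h f : Module.End F V) (he : e ∈ g) (hh : h ∈ g) (hf : f ∈ g)
    (hnil : IsNilpotent e)
    (t1 : ⁅h, e⁆ = (2 : F) • e) (t2 : ⁅h, f⁆ = (-2 : F) • f) (t3 : ⁅e, f⁆ = h)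
    (ge : Set (Module.End F V)) (hge : ge = {y ∈ g | ⁅e, y⁆ = 0})
    (hreach : e ∈ Submodule.span F
      {z : Module.End F V | ∃ a ∈ ge, ∃ b ∈ ge, z = ⁅a, b⁆})
    (g1e : Set (Module.End F V))
    (hg1e : g1e = {x ∈ g | ⁅h, x⁆ = (1 : F) • x ∧ ⁅e, x⁆ = 0})
    (g2e : Set (Module.End F V))
    (hg2e : g2e = {x ∈ g | ⁅h, x⁆ = (2 : F) • x ∧ ⁅e, x⁆ = 0}) :
    (Submodule.span F {z : Module.End F V | ∃ a ∈ g1e, ∃ b ∈ g1e, z = ⁅a, b⁆} :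
      Set (Module.End F V)) = g2e := by
  have T : ReachableNilpotent.FormTriple B ε e h f := by
    subst hg
    refine ⟨hB, ?_, hsym, he, hh, hf, hnil, fun v => ?_, fun v => ?_, fun v => ?_⟩
    · rcases hε with rfl | rfl <;> ring
    · have := LinearMap.congr_fun t1 v
      simp only [Ring.lie_def, LinearMap.sub_apply, Module.End.mul_apply,
        LinearMap.smul_apply] at this
      rw [← this]; abel
    · have := LinearMap.congr_fun t2 v
      simp only [Ring.lie_def, LinearMap.sub_apply, Module.End.mul_apply,
        LinearMap.smul_apply] at this
      rw [sub_eq_add_neg, ← neg_smul, ← this]; abel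
    · have := LinearMap.congr_fun t3 v
      simp only [Ring.lie_def, LinearMap.sub_apply, Module.End.mul_apply] at this
      rw [← this]; abel
  have hcomm : ∀ y : Module.End F V, ⁅e, y⁆ = 0 ↔ ∀ z, y (e z) = e (y z) := by
    intro y
    rw [Ring.lie_def, sub_eq_zero, LinearMap.ext_iff]
    exact ⟨fun h' z => (h' z).symm, fun h' z => (h' z).symm⟩
  have hdeg : ∀ (c : F) (y : Module.End F V),
      ⁅h, y⁆ = c • y ↔ ∀ z, h (y z) = y (h z) + c • y z := by
    intro c y
    rw [Ring.lie_def, sub_eq_iff_eq_add', LinearMap.ext_iff]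
    rfl
  have hgap : ∀ a b, ReachableNilpotent.lowest h f a = ⊥ → a < b →
      ReachableNilpotent.lowest h f b = ⊥ := by
    intro a b ha hab
    refine T.no_gap (Submodule.span_mono ?_ hreach) ha hab
    rintro _ ⟨x, hx, y, hy, rfl⟩
    subst hge
    exact ⟨x, y, (hcomm x).1 hx.2, (hcomm y).1 hy.2, Ring.lie_def x y⟩
  have hone : ∀ x, x ∈ g1e ↔ ReachableNilpotent.FormTriple.IsDegOne B e h x := by
    intro x
    subst hg1e hg
    rw [Set.mem_ofPred_eq, hcomm, hdeg]
    simp only [one_smul]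
    rfl
  have htwo : ∀ x, x ∈ g2e ↔ (∀ v w : V, B (x v) w = - B v (x w)) ∧
      (∀ z, h (x z) = x (h z) + (2 : F) • x z) ∧ ∀ z, x (e z) = e (x z) := by
    intro x
    subst hg2e hg
    rw [Set.mem_ofPred_eq, hcomm, hdeg]
    rfl
  apply Set.Subset.antisymm
  · intro y hy
    rw [htwo]
    induction hy using Submodule.span_induction with
    | zero => simp
    | add x y _ _ hx hy =>
      refine ⟨fun v w => ?_, fun z => ?_, fun z => ?_⟩
      · simp only [LinearMap.add_apply, map_add, hx.1, hy.1]
        ring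
      · simp only [LinearMap.add_apply, map_add, hx.2.1, hy.2.1]
        module
      · simp only [LinearMap.add_apply, map_add, hx.2.2, hy.2.2]
    | smul c x _ hx =>
      refine ⟨fun v w => ?_, fun z => ?_, fun z => ?_⟩
      · simp only [LinearMap.smul_apply, map_smul, hx.1, smul_neg]
      · simp only [LinearMap.smul_apply, map_smul, hx.2.1]
        module
      · simp only [LinearMap.smul_apply, map_smul, hx.2.2]
    | mem x hx =>
      obtain ⟨a, ha, b, hb, rfl⟩ := hx
      obtain ⟨a1, a2, a3⟩ := (hone a).1 ha
      obtain ⟨b1, b2, b3⟩ := (hone b).1 hb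
      rw [Ring.lie_def]
      refine ⟨fun v w => ?_, fun z => ?_, fun z => ?_⟩
      · simp only [LinearMap.sub_apply, Module.End.mul_apply, map_sub, a1, b1]
        ring
      · simp only [LinearMap.sub_apply, Module.End.mul_apply, map_sub, a2, b2, map_add]
        module
      · simp only [LinearMap.sub_apply, Module.End.mul_apply, map_sub, a3, b3]
  · intro y hy
    obtain ⟨hy1, hy2, hy3⟩ := (htwo y).1 hy
    refine Submodule.span_mono ?_ (T.mem_derived hgap hy1 hy3 hy2)
    rintro _ ⟨a, b, ha, hb, rfl⟩
    exact ⟨a, (hone a).2 ha, b, (hone b).2 hb, (Ring.lie_def a b).symm⟩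
end
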